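/- arXiv:cs/0610003 — 2 statements merged into one kernel-verified Lean document; each statement's English description precedes it below -/
import Mathlib

section
/- There is a universal constant C such that every finite connected simple graph G on n ≥ 2 vertices with positive edge weights contains a spanning tree T whose average distortion satisfies (1/N)·Σ_{unordered pairs {u,v}} d_T(u,v)/d_G(u,v) ≤ C, where N = n(n−1)/2. -/
/-!
A tree is built by recursive star decomposition. A part `X` with root `x₀` and radius `R` is split
into a ball of radius between `R / 4` and `3 R / 4` around `x₀` and cones hanging from the ball by
one edge each, where reaching a vertex of a cone from `x₀` through its apex costs an extra `ε R` at
most (`exists_star`); the trees found recursively in the parts are joined along these edges.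

*Root stretch.* Put `q = (|X| / n) ^ (1 / 4)` and `ε = q / 100`. The tree distance from the root
exceeds the distance inside `X` by at most `q R`. In the inductive step, the ball and a cone are
disjoint, so one of them has `q`-value at most `(17 / 20) q`, which leaves room for the slack `ε R`.
Hence the tree of `X` has diameter at most `4 R`.

*Cut cost.* A pair is intact in `X` if the induced subgraph on `X` realizes its distance in `G`. The
intact pairs that stay intact in a part are left to the recursion (`total_le`); the others, the cut
pairs, contribute at most `4 R` times the sum of `1 / d_G`. With `D` the sum of all distances
inside `X`, this sum is `O(D / (ε R) ^ 2)`. Indeed, only `O(D / (ε R |X|))` vertices are far from a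
median of `X` (`exists_median`). All other vertices sit in a small cluster, which one chooses not to
cut; it lies in the ball or in the first cone. A random radius cuts a pair at distance `δ`
with probability `O(δ / R)`, or `O(δ / (ε R))` for a cone, so each pair that starts at a far vertex
costs on average `O(1 / R)` or `O(1 / (ε R))`. The set `Y` of far vertices that remain is covered by
cones at cost `O(|X| |Y| / (ε R))` (`Layered.exists_cover`). Here the cones run through a sequence
of distance scales `σ`. At each scale a vertex with many neighbours within distance `σ` is chosen
and a cone around it, of radius at most `18 σ`, is placed where its volume grows slowly
(`Layered.exists_cone`); when no dense vertex is left, pairs at distance below `σ` are few, and the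
scale is reduced.

*Accounting.* The cut pairs of `X` thus contribute `O(E X)`, where `E X = D / (q ^ 2 R)`. All parts
have radius at most `(4 / 5) R`, and distances inside parts are at least those in `X`. Hence `E X`
is at most `4 / 5` of the sum of `E` over the parts, up to a term for the pairs of vertices in
different parts (`distSum_le`), and the latter is controlled by the drop of `n ^ 2 q ^ 6`. A budget
of `O(n ^ 2 q ^ 6)` for `X` therefore suffices (`budget_step`), and at the top level, where `q = 1`,
it is `O(n ^ 2)`.
-/

/-- The shortest-path (pseudo)distance of a weighted graph: the infimum of the
total `ω`-weight over all walks from `u` to `v`. -/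
noncomputable def spDist {V : Type*} (G : SimpleGraph V) (ω : Sym2 V → ℝ)
    (u v : V) : ℝ :=
  sInf {x : ℝ | ∃ p : G.Walk u v, x = (p.edges.map ω).sum}

namespace StarTree

open Finset
open scoped Classical

/-! ### Shortest-path distances -/

section Dist

variable {V : Type} {H K : SimpleGraph V} {ω : Sym2 V → ℝ}

/-- All edges of the graph `H` have positive weight. -/
def PosW (H : SimpleGraph V) (ω : Sym2 V → ℝ) : Prop := ∀ e ∈ H.edgeSet, 0 < ω e

/-- The total weight of a walk. -/
noncomputable def wt (ω : Sym2 V → ℝ) {u v : V} (p : H.Walk u v) : ℝ := (p.edges.map ω).sum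

lemma PosW.mono (h : PosW K ω) (hle : H ≤ K) : PosW H ω :=
  fun e he => h e (SimpleGraph.edgeSet_mono hle he)

lemma wt_nonneg (h : PosW H ω) {u v : V} (p : H.Walk u v) : 0 ≤ wt ω p := by
  apply List.sum_nonneg
  intro x hx
  obtain ⟨e, he, rfl⟩ := List.mem_map.1 hx
  exact (h e (p.edges_subset_edgeSet he)).le

lemma wt_append {u v w : V} (p : H.Walk u v) (q : H.Walk v w) :
    wt ω (p.append q) = wt ω p + wt ω q := by
  simp [wt, SimpleGraph.Walk.edges_append]

lemma wt_reverse {u v : V} (p : H.Walk u v) : wt ω p.reverse = wt ω p := by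
  simp [wt, SimpleGraph.Walk.edges_reverse]

lemma wt_transfer {u v : V} (p : H.Walk u v) (hp : ∀ e ∈ p.edges, e ∈ K.edgeSet) :
    wt ω (p.transfer K hp) = wt ω p := by
  simp [wt, SimpleGraph.Walk.edges_transfer]

lemma bddBelow_wt (h : PosW H ω) (u v : V) :
    BddBelow {x : ℝ | ∃ p : H.Walk u v, x = (p.edges.map ω).sum} :=
  ⟨0, by rintro x ⟨p, rfl⟩; exact wt_nonneg h p⟩

lemma spDist_le_wt (h : PosW H ω) {u v : V} (p : H.Walk u v) : spDist H ω u v ≤ wt ω p :=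
  csInf_le (bddBelow_wt h u v) ⟨p, rfl⟩

lemma spDist_nonneg (h : PosW H ω) (u v : V) : 0 ≤ spDist H ω u v := by
  apply Real.sInf_nonneg
  rintro x ⟨p, rfl⟩
  exact wt_nonneg h p

lemma wt_bypass_le (h : PosW H ω) {u v : V} (p : H.Walk u v) : wt ω p.bypass ≤ wt ω p := by
  apply List.Sublist.sum_le_sum (p.edges_bypass_sublist_edges.map ω)
  intro x hx
  obtain ⟨e, he, rfl⟩ := List.mem_map.1 hx
  exact (h e (p.edges_subset_edgeSet he)).le

lemma spDist_self (h : PosW H ω) (u : V) : spDist H ω u u = 0 :=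
  le_antisymm (by simpa [wt] using spDist_le_wt h (SimpleGraph.Walk.nil : H.Walk u u))
    (spDist_nonneg h u u)

lemma spDist_comm (u v : V) : spDist H ω u v = spDist H ω v u := by
  unfold spDist
  congr 1
  ext x
  constructor
  · rintro ⟨p, rfl⟩; exact ⟨p.reverse, (wt_reverse p).symm⟩
  · rintro ⟨p, rfl⟩; exact ⟨p.reverse, (wt_reverse p).symm⟩

lemma spDist_adj (h : PosW H ω) {u v : V} (ha : H.Adj u v) : spDist H ω u v ≤ ω s(u, v) := by
  simpa [wt] using spDist_le_wt h (ha.toWalk)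

variable [Fintype V]

/-- Distances are attained by a walk, because bypassing reduces to the finitely many paths. -/
lemma exists_geodesic (h : PosW H ω) {u v : V} (hr : H.Reachable u v) :
    ∃ p : H.Walk u v, wt ω p = spDist H ω u v := by
  obtain ⟨p0⟩ := hr
  have : Nonempty (H.Path u v) := ⟨p0.toPath⟩
  obtain ⟨q, hq⟩ := Finite.exists_min (fun q : H.Path u v => wt ω q.1)
  refine ⟨q.1, le_antisymm ?_ (spDist_le_wt h _)⟩
  refine le_csInf ⟨wt ω p0, p0, rfl⟩ ?_
  rintro x ⟨p, rfl⟩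
  exact (hq p.toPath).trans (wt_bypass_le h p)

lemma spDist_triangle (h : PosW H ω) {u v w : V} (huv : H.Reachable u v)
    (hvw : H.Reachable v w) : spDist H ω u w ≤ spDist H ω u v + spDist H ω v w := by
  obtain ⟨p, hp⟩ := exists_geodesic h huv
  obtain ⟨q, hq⟩ := exists_geodesic h hvw
  rw [← hp, ← hq, ← wt_append]
  exact spDist_le_wt h _

lemma spDist_pos (h : PosW H ω) {u v : V} (huv : H.Reachable u v) (hne : u ≠ v) :
    0 < spDist H ω u v := by
  obtain ⟨p, hp⟩ := exists_geodesic h huv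
  rw [← hp]
  cases p with
  | nil => exact absurd rfl hne
  | cons hadj q =>
    have h1 : 0 < ω s(_, _) := h _ ((SimpleGraph.mem_edgeSet H).2 hadj)
    have h2 := wt_nonneg h q
    simp only [wt, SimpleGraph.Walk.edges_cons, List.map_cons, List.sum_cons] at h2 ⊢
    linarith

lemma spDist_mono (h : PosW K ω) (hle : H ≤ K) {u v : V} (huv : H.Reachable u v) :
    spDist K ω u v ≤ spDist H ω u v := by
  obtain ⟨p, hp⟩ := exists_geodesic (h.mono hle) huv
  have := spDist_le_wt h (p.mapLe hle)
  simpa [wt, ← hp, SimpleGraph.Walk.mapLe] using this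

/-- A vertex on a geodesic splits the distance. -/
lemma spDist_split (h : PosW H ω) {u v z : V} (p : H.Walk u v) (hp : wt ω p = spDist H ω u v)
    (hz : z ∈ p.support) : H.Reachable u z ∧ H.Reachable z v ∧
      spDist H ω u z + spDist H ω z v = spDist H ω u v := by
  have h1 : H.Reachable u z := ⟨p.takeUntil z hz⟩
  have h2 : H.Reachable z v := ⟨p.dropUntil z hz⟩
  refine ⟨h1, h2, le_antisymm ?_ (spDist_triangle h h1 h2)⟩
  rw [← hp, ← p.take_spec hz, wt_append]
  exact add_le_add (spDist_le_wt h _) (spDist_le_wt h _)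

end Dist

/-! ### Induced subgraphs and intact pairs -/

section Intact

variable {V : Type} {G : SimpleGraph V} {ω : Sym2 V → ℝ}

/-- The subgraph induced on `X`, kept on the full vertex type: vertices outside `X` are isolated. -/
def ind (G : SimpleGraph V) (X : Finset V) : SimpleGraph V where
  Adj u v := G.Adj u v ∧ u ∈ X ∧ v ∈ X
  symm := ⟨fun _ _ h => ⟨h.1.symm, h.2.2, h.2.1⟩⟩
  loopless := ⟨fun _ h => h.1.ne rfl⟩

lemma ind_le (X : Finset V) : ind G X ≤ G := fun _ _ h => h.1

lemma ind_mono {X Y : Finset V} (h : X ⊆ Y) : ind G X ≤ ind G Y :=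
  fun _ _ h' => ⟨h'.1, h h'.2.1, h h'.2.2⟩

lemma support_sub {X : Finset V} {u v : V} (p : (ind G X).Walk u v) (hu : u ∈ X) :
    ∀ z ∈ p.support, z ∈ X := by
  induction p with
  | nil => simpa using hu
  | cons ha q ih =>
    intro z hz
    rcases List.mem_cons.1 (by simpa using hz) with rfl | hz
    · exact hu
    · exact ih ha.2.2 z hz

lemma mem_of_reach {X : Finset V} {u v : V} (h : (ind G X).Reachable u v) (hu : u ∈ X) : v ∈ X := by
  obtain ⟨p⟩ := h
  exact support_sub p hu v p.end_mem_support

/-- A walk whose vertices all lie in `A` is a walk of the subgraph induced on `A`. -/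
lemma exists_transfer {H : SimpleGraph V} (hH : H ≤ G) {A : Finset V} {u v : V} (p : H.Walk u v)
    (hp : ∀ z ∈ p.support, z ∈ A) : ∃ q : (ind G A).Walk u v, wt ω q = wt ω p := by
  refine ⟨p.transfer (ind G A) ?_, wt_transfer _ _⟩
  intro e he
  induction e with
  | h a b =>
    exact ⟨hH (p.adj_of_mem_edges he), hp _ (p.fst_mem_support_of_mem_edges he),
      hp _ (p.snd_mem_support_of_mem_edges he)⟩

/-- The pair `(x, y)` of vertices of `X` is intact in `X`: the subgraph induced on `X` realizes its
distance in `G`. -/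
def Intact (G : SimpleGraph V) (ω : Sym2 V → ℝ) (X : Finset V) (x y : V) : Prop :=
  x ∈ X ∧ y ∈ X ∧ (ind G X).Reachable x y ∧ spDist (ind G X) ω x y ≤ spDist G ω x y

variable [Fintype V]

lemma ind_univ : ind G univ = G := by
  ext u v; simp [ind]

lemma Intact.eq (hω : PosW G ω) {X : Finset V} {x y : V} (h : Intact G ω X x y) :
    spDist (ind G X) ω x y = spDist G ω x y :=
  le_antisymm h.2.2.2 (spDist_mono hω (ind_le X) h.2.2.1)

/-- If the vertices of `Y` within distance `d_G(x,y)` of `x` all lie in `A`, the intact pair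
`(x, y)` stays intact in `A`. -/
lemma Intact.band (hω : PosW G ω) {Y A : Finset V} {x y : V} (h : Intact G ω Y x y)
    (hA : ∀ u ∈ Y, (ind G Y).Reachable x u → spDist (ind G Y) ω x u ≤ spDist G ω x y → u ∈ A) :
    Intact G ω A x y := by
  have hY := hω.mono (ind_le Y)
  obtain ⟨p, hp⟩ := exists_geodesic hY h.2.2.1
  have hs : ∀ z ∈ p.support, z ∈ A := by
    intro z hz
    obtain ⟨h1, h2, h3⟩ := spDist_split hY p hp hz
    refine hA z (support_sub p h.1 z hz) h1 ?_
    have := spDist_nonneg hY z y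
    have := h.2.2.2
    linarith
  obtain ⟨q, hq⟩ := exists_transfer (ω := ω) (ind_le Y) p hs
  refine ⟨hs _ p.start_mem_support, hs _ p.end_mem_support, ⟨q⟩, ?_⟩
  have := spDist_le_wt (hω.mono (ind_le A)) q
  have := h.2.2.2
  linarith

lemma Intact.mono (hω : PosW G ω) {A Y : Finset V} (hAY : A ⊆ Y) {x y : V} (h : Intact G ω A x y) :
    Intact G ω Y x y :=
  ⟨hAY h.1, hAY h.2.1, h.2.2.1.mono (ind_mono hAY),
    (spDist_mono (hω.mono (ind_le Y)) (ind_mono hAY) h.2.2.1).trans h.2.2.2⟩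

end Intact

/-! ### Averaging over the radius -/

open MeasureTheory in
/-- Some radius in `[a, b]` hits the windows `[c i - h i, c i + h i]`, weighted by `1 / h i`, no more
than average. -/
lemma exists_radius {ι : Type*} (s : Finset ι) (c h : ι → ℝ) (hh : ∀ i ∈ s, 0 ≤ h i) {a b : ℝ}
    (hab : a < b) : ∃ r, a ≤ r ∧ r ≤ b ∧
      ∑ i ∈ s, (if |c i - r| ≤ h i then 1 / h i else 0) ≤ 2 * s.card / (b - a) := by
  have hvol : volume (Set.Icc a b) = ENNReal.ofReal (b - a) := Real.volume_Icc
  have hba : 0 < b - a := sub_pos.2 hab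
  have hform : ∀ i r, (if |c i - r| ≤ h i then 1 / h i else 0) =
      (Set.Icc (c i - h i) (c i + h i)).indicator (fun _ => 1 / h i) r := by
    intro i r
    rw [Set.indicator_apply]
    congr 1
    rw [Set.mem_Icc, abs_le]
    apply propext
    constructor <;> rintro ⟨h1, h2⟩ <;> constructor <;> linarith
  have hint : ∀ i ∈ s, IntegrableOn (fun r => if |c i - r| ≤ h i then 1 / h i else 0)
      (Set.Icc a b) := by
    intro i _
    simp only [hform]
    apply IntegrableOn.indicator _ measurableSet_Icc
    simp [integrableOn_const_iff]
  obtain ⟨r, hr, hle⟩ := exists_le_setAverage (μ := volume) (s := Set.Icc a b)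
    (f := fun r => ∑ i ∈ s, (if |c i - r| ≤ h i then 1 / h i else 0))
    (by rw [hvol]; simpa using hab) (by rw [hvol]; simp) (integrable_finsetSum _ hint)
  refine ⟨r, hr.1, hr.2, hle.trans ?_⟩
  rw [setAverage_eq, integral_finsetSum _ hint, Measure.real, hvol,
    ENNReal.toReal_ofReal hba.le, smul_eq_mul, mul_comm, ← div_eq_mul_inv]
  apply div_le_div_of_nonneg_right _ hba.le
  rw [mul_comm, ← nsmul_eq_mul]
  apply Finset.sum_le_card_nsmul
  intro i hi
  simp only [hform]
  rw [setIntegral_indicator measurableSet_Icc, setIntegral_const, smul_eq_mul]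
  have h1 : volume.real (Set.Icc a b ∩ Set.Icc (c i - h i) (c i + h i)) ≤ 2 * h i := by
    calc _ ≤ volume.real (Set.Icc (c i - h i) (c i + h i)) :=
          measureReal_mono Set.inter_subset_right (by simp)
      _ = 2 * h i := by
          rw [Real.volume_real_Icc_of_le (by linarith [hh i hi])]; ring
  rcases (hh i hi).eq_or_lt with h0 | h0
  · simp [← h0]
  · calc _ ≤ 2 * h i * (1 / h i) := by gcongr
      _ = 2 := by field_simp

/-! ### Cut pairs and cones -/

section Cones

variable {V : Type} {G : SimpleGraph V} {ω : Sym2 V → ℝ}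

/-- `P` is a partition of `Y` (the parts are nonempty in every use). -/
def IsPart (Y : Finset V) (P : Finset (Finset V)) : Prop :=
  (P : Set (Finset V)).PairwiseDisjoint id ∧ P.biUnion id = Y

lemma IsPart.sub {Y : Finset V} {P : Finset (Finset V)} (h : IsPart Y P) {A : Finset V}
    (hA : A ∈ P) : A ⊆ Y := by
  rw [← h.2]; exact Finset.subset_biUnion_of_mem id hA

lemma IsPart.insert {Y A : Finset V} {P : Finset (Finset V)} (hA : A ⊆ Y)
    (h : IsPart (Y \ A) P) : IsPart Y (insert A P) := by
  constructor
  · rw [Finset.coe_insert, Set.pairwiseDisjoint_insert]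
    refine ⟨h.1, fun B hB _ => ?_⟩
    exact Finset.disjoint_of_subset_right (h.sub hB) Finset.disjoint_sdiff
  · rw [Finset.biUnion_insert, h.2]
    simp [hA]

variable [Fintype V]

/-- The total of `1 / d_G(x, y)` over the ordered pairs that are intact in `Y` but in none of the
parts in `P`. -/
noncomputable def cutCost (G : SimpleGraph V) (ω : Sym2 V → ℝ) (Y : Finset V)
    (P : Finset (Finset V)) : ℝ :=
  ∑ p : V × V, if Intact G ω Y p.1 p.2 ∧ ∀ A ∈ P, ¬ Intact G ω A p.1 p.2 then
    1 / spDist G ω p.1 p.2 else 0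

lemma cutCost_insert_le (hω : PosW G ω) (Y A : Finset V) (P : Finset (Finset V)) :
    cutCost G ω Y (insert A P) ≤ cutCost G ω Y {A, Y \ A} + cutCost G ω (Y \ A) P := by
  unfold cutCost
  rw [← Finset.sum_add_distrib]
  apply Finset.sum_le_sum
  intro p _
  have h0 : 0 ≤ 1 / spDist G ω p.1 p.2 := one_div_nonneg.2 (spDist_nonneg hω _ _)
  simp only [Finset.mem_insert, forall_eq_or_imp, Finset.mem_singleton, forall_eq]
  split_ifs <;> first | linarith | (exfalso; tauto)

/-- `l` is a height function on `Y`, `1`-Lipschitz for the distance of `Y`; every vertex of `Y` has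
a parent lower along an edge that realizes the height difference, in `Y` or in `B`. -/
structure Layered (G : SimpleGraph V) (ω : Sym2 V → ℝ) (l : V → ℝ) (par : V → V)
    (B Y : Finset V) : Prop where
  adj : ∀ z ∈ Y, G.Adj (par z) z
  height : ∀ z ∈ Y, l z = l (par z) + ω s(par z, z)
  mem : ∀ z ∈ Y, par z ∈ Y ∨ par z ∈ B
  lip : ∀ u v, u ∈ Y → (ind G Y).Reachable u v → l u ≤ l v + spDist (ind G Y) ω u v

/-- `A` is a cone with slack `s`: it has an apex `y` hanging from `par y ∈ B`, and going to any
`z ∈ A` through the apex inside `A` exceeds the height of `z` by at most `s`. -/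
def IsCone (G : SimpleGraph V) (ω : Sym2 V → ℝ) (l : V → ℝ) (par : V → V) (B : Finset V) (s : ℝ)
    (A : Finset V) : Prop :=
  ∃ y ∈ A, par y ∈ B ∧ G.Adj (par y) y ∧ l y = l (par y) + ω s(par y, y) ∧
    ∀ z ∈ A, (ind G A).Reachable y z ∧ l y + spDist (ind G A) ω y z ≤ l z + s

variable {l : V → ℝ} {par : V → V} {B Y : Finset V}

/-- Every vertex of `Y` has an ancestor with parent in `B`, straight below it. -/
lemma Layered.exists_apex (hω : PosW G ω) (h : Layered G ω l par B Y) {v : V} (hv : v ∈ Y) :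
    ∃ y ∈ Y, par y ∈ B ∧ (ind G Y).Reachable y v ∧ l y + spDist (ind G Y) ω y v ≤ l v := by
  have hY := hω.mono (ind_le Y)
  obtain ⟨y, hy, hmin⟩ := Finset.exists_min_image
    (Y.filter fun y => (ind G Y).Reachable y v ∧ l y + spDist (ind G Y) ω y v ≤ l v) l
    ⟨v, by simp [hv, spDist_self hY]⟩
  rw [Finset.mem_filter] at hy
  obtain ⟨hyY, hr, hle⟩ := hy
  refine ⟨y, hyY, ?_, hr, hle⟩
  by_contra hB
  have hpY := (h.mem y hyY).resolve_right hB
  have hadj : (ind G Y).Adj (par y) y := ⟨h.adj y hyY, hpY, hyY⟩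
  have h1 := spDist_adj hY hadj
  have h2 := spDist_triangle hY hadj.reachable hr
  have h3 := h.height y hyY
  have h4 : 0 < ω s(par y, y) := hω _ ((SimpleGraph.mem_edgeSet G).2 hadj.1)
  have := hmin (par y) (Finset.mem_filter.2 ⟨hpY, hadj.reachable.trans hr, by linarith⟩)
  linarith

/-- The detour to `z` through the apex `y` inside `Y`. -/
noncomputable def detour (G : SimpleGraph V) (ω : Sym2 V → ℝ) (l : V → ℝ) (Y : Finset V)
    (y z : V) : ℝ := l y + spDist (ind G Y) ω y z - l z

/-- The cone of radius `r` with apex `y`: the vertices of `Y` with detour at most `r`. -/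
noncomputable def cone (G : SimpleGraph V) (ω : Sym2 V → ℝ) (l : V → ℝ) (Y : Finset V)
    (y : V) (r : ℝ) : Finset V :=
  Y.filter fun z => (ind G Y).Reachable y z ∧ detour G ω l Y y z ≤ r

lemma cone_sub {y : V} {r : ℝ} : cone G ω l Y y r ⊆ Y := Finset.filter_subset _ _

lemma Layered.detour_lip (hω : PosW G ω) (h : Layered G ω l par B Y) {y u z : V}
    (hy : y ∈ Y) (hyu : (ind G Y).Reachable y u) (huz : (ind G Y).Reachable u z) :
    detour G ω l Y y z ≤ detour G ω l Y y u + 2 * spDist (ind G Y) ω u z := by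
  have h1 := spDist_triangle (hω.mono (ind_le Y)) hyu huz
  have h2 := h.lip u z (mem_of_reach hyu hy) huz
  unfold detour
  linarith

lemma apex_mem_cone (hω : PosW G ω) {y : V} (hy : y ∈ Y) {r : ℝ} (hr : 0 ≤ r) :
    y ∈ cone G ω l Y y r := by
  simp [cone, hy, detour, spDist_self (hω.mono (ind_le Y)), hr]

lemma Layered.isCone (hω : PosW G ω) (h : Layered G ω l par B Y) {y : V} (hy : y ∈ Y)
    (hyB : par y ∈ B) {r s : ℝ} (hr : 0 ≤ r) (hrs : r ≤ s) :
    IsCone G ω l par B s (cone G ω l Y y r) := by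
  have hY := hω.mono (ind_le Y)
  refine ⟨y, apex_mem_cone hω hy hr, hyB, h.adj y hy, h.height y hy, fun z hz => ?_⟩
  obtain ⟨hzY, hyz, hdet⟩ := Finset.mem_filter.1 hz
  obtain ⟨p, hp⟩ := exists_geodesic hY hyz
  -- detours increase along geodesics from the apex, so the cone contains them
  have hs : ∀ u ∈ p.support, u ∈ cone G ω l Y y r := by
    intro u hu
    obtain ⟨h1, h2, h3⟩ := spDist_split hY p hp hu
    refine Finset.mem_filter.2 ⟨mem_of_reach h1 hy, h1, le_trans ?_ hdet⟩
    have h4 := h.lip z u hzY h2.symm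
    rw [spDist_comm z u] at h4
    unfold detour
    linarith
  obtain ⟨q, hq⟩ := exists_transfer (ω := ω) (ind_le Y) p hs
  refine ⟨⟨q⟩, ?_⟩
  have := spDist_le_wt (hω.mono (ind_le (cone G ω l Y y r))) q
  unfold detour at hdet
  linarith

lemma Layered.sdiff_cone (hω : PosW G ω) (h : Layered G ω l par B Y) (y : V) (r : ℝ) :
    Layered G ω l par B (Y \ cone G ω l Y y r) where
  adj z hz := h.adj z (Finset.mem_sdiff.1 hz).1
  height z hz := h.height z (Finset.mem_sdiff.1 hz).1
  mem z hz := by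
    obtain ⟨hzY, hzA⟩ := Finset.mem_sdiff.1 hz
    refine (h.mem z hzY).imp_left fun hp => Finset.mem_sdiff.2 ⟨hp, fun hpA => hzA ?_⟩
    obtain ⟨-, h1, h2⟩ := Finset.mem_filter.1 hpA
    have hY := hω.mono (ind_le Y)
    have hadj : (ind G Y).Adj (par z) z := ⟨h.adj z hzY, hp, hzY⟩
    have h3 := spDist_adj hY hadj
    have h4 := spDist_triangle hY h1 hadj.reachable
    have h5 := h.height z hzY
    refine Finset.mem_filter.2 ⟨hzY, h1.trans hadj.reachable, ?_⟩
    unfold detour at h2 ⊢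
    linarith
  lip u v hu huv := by
    have h1 := h.lip u v (Finset.mem_sdiff.1 hu).1 (huv.mono (ind_mono Finset.sdiff_subset))
    have h2 := spDist_mono (hω.mono (ind_le Y)) (ind_mono (Finset.sdiff_subset)) huv
    linarith

/-- A pair separated by a cone has its detour within twice its distance of the radius. -/
lemma Layered.cut_cone (hω : PosW G ω) (h : Layered G ω l par B Y) {y : V} (hy : y ∈ Y) {r : ℝ}
    {a b : V} (hi : Intact G ω Y a b) (h1 : ¬ Intact G ω (cone G ω l Y y r) a b)
    (h2 : ¬ Intact G ω (Y \ cone G ω l Y y r) a b) :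
    (ind G Y).Reachable y a ∧ |detour G ω l Y y a - r| ≤ 2 * spDist G ω a b := by
  have h3 := mt (hi.band hω) h1
  have h4 := mt (hi.band hω) h2
  push Not at h3 h4
  obtain ⟨u, huY, hu1, hu2, hu3⟩ := h3
  obtain ⟨w, hwY, hw1, hw2, hw3⟩ := h4
  have hw3 : w ∈ cone G ω l Y y r := by
    by_contra hc; exact hw3 (Finset.mem_sdiff.2 ⟨hwY, hc⟩)
  obtain ⟨-, hw4, hw5⟩ := Finset.mem_filter.1 hw3
  have hya := hw4.trans hw1.symm
  have hu5 : r < detour G ω l Y y u := by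
    by_contra hc
    exact hu3 (Finset.mem_filter.2 ⟨huY, hya.trans hu1, not_lt.1 hc⟩)
  have h5 := h.detour_lip hω hy hya hu1
  have h6 := h.detour_lip hω hy hw4 hw1.symm
  rw [spDist_comm w a] at h6
  refine ⟨hya, abs_le.2 ⟨?_, ?_⟩⟩ <;> linarith

end Cones

/-! ### Covering few vertices by cones -/

section Light

variable {V : Type} [Fintype V] {G : SimpleGraph V} {ω : Sym2 V → ℝ}

/-- The vertices within distance `σ` of `x` along pairs intact in `Y`. -/
noncomputable def near (G : SimpleGraph V) (ω : Sym2 V → ℝ) (Y : Finset V) (σ : ℝ) (x : V) :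
    Finset V := univ.filter fun y => Intact G ω Y x y ∧ spDist G ω x y ≤ σ

lemma near_sub {Y : Finset V} {σ : ℝ} {x : V} : near G ω Y σ x ⊆ Y := by
  intro y hy
  exact (Finset.mem_filter.1 hy).2.1.2.1

lemma near_mono (hω : PosW G ω) {A Y : Finset V} (hA : A ⊆ Y) {σ τ : ℝ} (hσ : σ ≤ τ) (x : V) :
    near G ω A σ x ⊆ near G ω Y τ x := by
  intro y hy
  obtain ⟨-, h1, h2⟩ := Finset.mem_filter.1 hy
  exact Finset.mem_filter.2 ⟨Finset.mem_univ _, h1.mono hω hA, h2.trans hσ⟩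

lemma sum_near (Y A : Finset V) (σ c : ℝ) :
    (∑ p : V × V, if p.1 ∈ A ∧ Intact G ω Y p.1 p.2 ∧ spDist G ω p.1 p.2 ≤ σ then c else 0) =
      c * ∑ x ∈ A, ((near G ω Y σ x).card : ℝ) := by
  have hx : ∀ x, (∑ y, if x ∈ A ∧ Intact G ω Y x y ∧ spDist G ω x y ≤ σ then c else 0) =
      if x ∈ A then c * ((near G ω Y σ x).card : ℝ) else 0 := by
    intro x
    by_cases hxA : x ∈ A
    · simp only [hxA, true_and, if_true, near]
      rw [← Finset.sum_filter, Finset.sum_const, nsmul_eq_mul, mul_comm]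
    · simp [hxA]
  rw [Fintype.sum_prod_type, Finset.mul_sum]
  simp only [hx]
  rw [Finset.sum_ite_mem, Finset.univ_inter]

variable {l : V → ℝ} {par : V → V} {B Y : Finset V}

/-- One cone at distance scale `σ`. Around a vertex with at least `θ M` near vertices the volume of
the cones of radius `2σ, 6σ, 10σ, 14σ, 18σ` cannot always grow by the factor `β`. A random radius in
an interval of slow growth cuts few pairs of length at most `σ`, in terms of the volume of the
cone removed; the longer pairs cut are kept as they are. -/
lemma Layered.exists_cone (hω : PosW G ω) (h : Layered G ω l par B Y) {σ θ β M : ℝ} (hσ : 0 < σ)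
    (hθ : 0 < θ) (hβ : 0 < β) (hM : 0 < M) (hβθ : 17 ≤ β ^ 4 * θ) (hYM : (Y.card : ℝ) ≤ M)
    (hN : ∀ x ∈ Y, ((near G ω Y σ x).card : ℝ) ≤ 16 * θ * M) {v : V} (hv : v ∈ Y)
    (hdense : θ * M ≤ (near G ω Y σ v).card) :
    ∃ y ∈ Y, par y ∈ B ∧ ∃ r, 0 ≤ r ∧ r ≤ 18 * σ ∧
      cutCost G ω Y {cone G ω l Y y r, Y \ cone G ω l Y y r} ≤
        2 * β / σ * ∑ x ∈ cone G ω l Y y r, (((near G ω Y σ x).card : ℝ) + θ * M) +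
        ∑ p : V × V, if (Intact G ω Y p.1 p.2 ∧ ¬ Intact G ω (Y \ cone G ω l Y y r) p.1 p.2) ∧
          σ < spDist G ω p.1 p.2 then 1 / spDist G ω p.1 p.2 else 0 := by
  obtain ⟨y, hyY, hyB, hyv, hle⟩ := h.exists_apex hω hv
  have hfv : detour G ω l Y y v ≤ 0 := by unfold detour; linarith
  refine ⟨y, hyY, hyB, ?_⟩
  set C : ℝ → Finset V := cone G ω l Y y with hC
  set vol : ℝ → ℝ := fun r => ∑ x ∈ C r, (((near G ω Y σ x).card : ℝ) + θ * M) with hvol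
  have hθM : 0 < θ * M := by positivity
  have hCmono : ∀ {r r' : ℝ}, r ≤ r' → C r ⊆ C r' := by
    intro r r' hrr x hx
    obtain ⟨h1, h2, h3⟩ := Finset.mem_filter.1 hx
    exact Finset.mem_filter.2 ⟨h1, h2, h3.trans hrr⟩
  have hvmono : ∀ {r r' : ℝ}, r ≤ r' → vol r ≤ vol r' := fun hrr =>
    Finset.sum_le_sum_of_subset_of_nonneg (hCmono hrr) fun _ _ _ => by positivity
  have hv0 : (θ * M) * (θ * M) ≤ vol (2 * σ) := by
    have hsub : near G ω Y σ v ⊆ C (2 * σ) := by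
      intro x hx
      obtain ⟨-, h1, h2⟩ := Finset.mem_filter.1 hx
      refine Finset.mem_filter.2 ⟨h1.2.1, hyv.trans h1.2.2.1, ?_⟩
      have h3 := h.detour_lip hω hyY hyv h1.2.2.1
      have h4 := h1.2.2.2
      linarith
    calc (θ * M) * (θ * M) ≤ (near G ω Y σ v).card * (θ * M) := by gcongr
      _ = ∑ x ∈ near G ω Y σ v, θ * M := by simp
      _ ≤ ∑ x ∈ C (2 * σ), θ * M :=
          Finset.sum_le_sum_of_subset_of_nonneg hsub fun _ _ _ => hθM.le
      _ ≤ vol (2 * σ) := Finset.sum_le_sum fun x _ => by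
          have : (0 : ℝ) ≤ (near G ω Y σ x).card := by positivity
          linarith
  have hv4 : vol (18 * σ) ≤ 17 * (θ * M) * M := by
    calc vol (18 * σ) ≤ ∑ x ∈ C (18 * σ), 17 * (θ * M) := Finset.sum_le_sum fun x hx => by
          have := hN x (cone_sub hx)
          linarith
      _ = (C (18 * σ)).card * (17 * (θ * M)) := by simp
      _ ≤ M * (17 * (θ * M)) := by
          gcongr
          have hc : (C (18 * σ)).card ≤ Y.card := Finset.card_le_card cone_sub
          exact le_trans (by exact_mod_cast hc) hYM
      _ = _ := by ring
  -- an interval of slow growth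
  obtain ⟨r₀, hr₀, hr₀', hslow⟩ : ∃ r₀, 2 * σ ≤ r₀ ∧ r₀ ≤ 14 * σ ∧
      vol (r₀ + 4 * σ) ≤ β * vol r₀ := by
    by_contra! hcon
    have e0 := hcon (2 * σ) (by linarith) (by linarith)
    have e1 := hcon (6 * σ) (by linarith) (by linarith)
    have e2 := hcon (10 * σ) (by linarith) (by linarith)
    have e3 := hcon (14 * σ) (by linarith) (by linarith)
    rw [show 2 * σ + 4 * σ = 6 * σ by ring] at e0
    rw [show 6 * σ + 4 * σ = 10 * σ by ring] at e1
    rw [show 10 * σ + 4 * σ = 14 * σ by ring] at e2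
    rw [show 14 * σ + 4 * σ = 18 * σ by ring] at e3
    have : β ^ 4 * vol (2 * σ) < vol (18 * σ) := by
      calc β ^ 4 * vol (2 * σ) = β * (β * (β * (β * vol (2 * σ)))) := by ring
        _ < β * (β * (β * vol (6 * σ))) := by gcongr
        _ < β * (β * vol (10 * σ)) := by gcongr
        _ < β * vol (14 * σ) := by gcongr
        _ < vol (18 * σ) := e3
    have h2 : 17 * (θ * M) * M ≤ β ^ 4 * ((θ * M) * (θ * M)) := by
      calc 17 * (θ * M) * M = 17 * (θ * M * M) := by ring
        _ ≤ (β ^ 4 * θ) * (θ * M * M) := by gcongr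
        _ = _ := by ring
    have h3 : β ^ 4 * ((θ * M) * (θ * M)) ≤ β ^ 4 * vol (2 * σ) := by gcongr
    linarith
  set I : Finset (V × V) := univ.filter fun p => p.1 ∈ C (r₀ + 4 * σ) ∧ Intact G ω Y p.1 p.2 ∧
    spDist G ω p.1 p.2 ≤ σ with hI
  have hIcard : (I.card : ℝ) ≤ vol (r₀ + 4 * σ) := by
    have := sum_near (G := G) (ω := ω) Y (C (r₀ + 4 * σ)) σ 1
    rw [← Finset.sum_filter, one_mul] at this
    rw [Finset.card_eq_sum_ones, hI]
    push_cast
    rw [this]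
    exact Finset.sum_le_sum fun x _ => by linarith
  obtain ⟨r, hr1, hr2, hsum⟩ := exists_radius I (fun p => detour G ω l Y y p.1)
    (fun p => 2 * spDist G ω p.1 p.2)
    (fun p _ => mul_nonneg zero_le_two (spDist_nonneg hω _ _))
    (show r₀ < r₀ + 2 * σ by linarith)
  refine ⟨r, by linarith, by linarith, ?_⟩
  have hshort : ∑ p ∈ I, (if |detour G ω l Y y p.1 - r| ≤ 2 * spDist G ω p.1 p.2 then
      1 / spDist G ω p.1 p.2 else 0) ≤ 2 * β / σ * vol r := by
    calc _ = 2 * ∑ p ∈ I, (if |detour G ω l Y y p.1 - r| ≤ 2 * spDist G ω p.1 p.2 then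
          1 / (2 * spDist G ω p.1 p.2) else 0) := by
          rw [Finset.mul_sum]
          refine Finset.sum_congr rfl fun p _ => ?_
          split_ifs
          · rw [one_div, one_div, mul_inv]; ring
          · simp
      _ ≤ 2 * (2 * I.card / (r₀ + 2 * σ - r₀)) := by gcongr
      _ = 2 / σ * I.card := by field_simp; ring
      _ ≤ 2 / σ * (β * vol r₀) := by gcongr; exact hIcard.trans hslow
      _ ≤ 2 / σ * (β * vol r) := by gcongr; exact hvmono hr1
      _ = _ := by ring
  refine le_trans ?_ (add_le_add_left hshort _)
  rw [hI, Finset.sum_filter, ← Finset.sum_add_distrib]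
  unfold cutCost
  refine Finset.sum_le_sum fun p _ => ?_
  have hp0 : 0 ≤ 1 / spDist G ω p.1 p.2 := one_div_nonneg.2 (spDist_nonneg hω _ _)
  by_cases hcut : Intact G ω Y p.1 p.2 ∧ ∀ A ∈ ({C r, Y \ C r} : Finset (Finset V)),
      ¬ Intact G ω A p.1 p.2
  · rw [if_pos hcut]
    obtain ⟨hi, hA⟩ := hcut
    have hA1 := hA (C r) (by simp)
    have hA2 := hA (Y \ C r) (by simp)
    rcases le_or_gt (spDist G ω p.1 p.2) σ with hs | hs
    · obtain ⟨hya, hab⟩ := h.cut_cone hω hyY hi hA1 hA2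
      have hmem : p.1 ∈ C (r₀ + 4 * σ) := by
        refine Finset.mem_filter.2 ⟨hi.1, hya, ?_⟩
        have := (abs_le.1 hab).2
        linarith
      rw [if_pos ⟨hmem, hi, hs⟩, if_pos hab]
      split_ifs <;> linarith
    · rw [if_pos (c := (Intact G ω Y p.1 p.2 ∧ _) ∧ _) ⟨⟨hi, hA2⟩, hs⟩]
      split_ifs <;> linarith
  · rw [if_neg hcut]
    split_ifs <;> linarith

end Light

section Cover

variable {V : Type} {G : SimpleGraph V} {ω : Sym2 V → ℝ}
  {l : V → ℝ} {par : V → V} {B Y : Finset V}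

/-- The distance scale of stage `j`, for cones of slack `s`. -/
noncomputable def scale (s : ℝ) (j : ℕ) : ℝ := s / (18 * 4 ^ j)

/-- The price at stage `j` of cutting a pair at distance `δ`: the pairs above the current scale
cost `1 / δ`, those below it have a reduced price. -/
noncomputable def price (s : ℝ) (j : ℕ) (δ : ℝ) : ℝ :=
  if δ ≤ scale s j then 2 * (3 * 2 ^ j) / scale s j else 1 / δ

lemma scale_pos {s : ℝ} (hs : 0 < s) (j : ℕ) : 0 < scale s j := by unfold scale; positivity

lemma price_nonneg (hω : PosW G ω) {s : ℝ} (hs : 0 < s) (j : ℕ) (x y : V) :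
    0 ≤ price s j (spDist G ω x y) := by
  have := scale_pos hs j
  have := spDist_nonneg hω x y
  unfold price
  split_ifs <;> positivity

lemma price_succ_le (hω : PosW G ω) {s : ℝ} (hs : 0 < s) (j : ℕ) (x y : V) :
    price s (j + 1) (spDist G ω x y) ≤ price s j (spDist G ω x y) +
      if spDist G ω x y ≤ scale s j then 864 * 8 ^ j / s else 0 := by
  have h0 := scale_pos hs j
  have h1 := scale_pos hs (j + 1)
  have h01 : scale s j = 4 * scale s (j + 1) := by unfold scale; rw [pow_succ]; field_simp
  have hp := price_nonneg hω hs j x y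
  have e8 : (8 : ℝ) ^ j = 2 ^ j * 4 ^ j := by rw [← mul_pow]; norm_num
  have hc : 2 * (3 * 2 ^ (j + 1)) / scale s (j + 1) = 864 * 8 ^ j / s := by
    unfold scale; rw [e8, pow_succ, pow_succ]; field_simp; norm_num
  by_cases ha : spDist G ω x y ≤ scale s (j + 1)
  · have hb : spDist G ω x y ≤ scale s j := by linarith
    rw [if_pos hb, price, if_pos ha, hc]
    linarith
  · rw [price, if_neg ha]
    by_cases hb : spDist G ω x y ≤ scale s j
    · rw [if_pos hb, price, if_pos hb]
      have h2 : 1 / spDist G ω x y ≤ 1 / scale s (j + 1) := by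
        apply one_div_le_one_div_of_le h1; linarith
      have h3 : 1 / scale s (j + 1) ≤ 2 * (3 * 2 ^ j) / scale s j := by
        rw [h01, div_le_div_iff₀ h1 (by positivity)]
        have : (1 : ℝ) ≤ 2 ^ j := one_le_pow₀ (by norm_num)
        nlinarith
      have : 0 ≤ 864 * 8 ^ j / s := by positivity
      linarith
    · rw [if_neg hb, price, if_neg hb]; linarith

variable [Fintype V]

/-- The potential bounding the cost of the stages from `j` on: the total price of the intact pairs
and a term per vertex that pays for the cones of slow growth and for the change of scale. -/
noncomputable def potential (G : SimpleGraph V) (ω : Sym2 V → ℝ) (s M : ℝ) (j : ℕ)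
    (Y : Finset V) : ℝ :=
  (∑ p : V × V, if Intact G ω Y p.1 p.2 then price s j (spDist G ω p.1 p.2) else 0) +
    1728 / (2 ^ j * s) * M * Y.card

lemma potential_succ_le (hω : PosW G ω) {s M : ℝ} (hs : 0 < s) (j : ℕ)
    (hN : ∀ x ∈ Y, ((near G ω Y (scale s j) x).card : ℝ) ≤ M / 16 ^ j) :
    potential G ω s M (j + 1) Y ≤ potential G ω s M j Y := by
  have h1 : (∑ p : V × V, if Intact G ω Y p.1 p.2 then price s (j + 1) (spDist G ω p.1 p.2) else 0)
      ≤ (∑ p : V × V, if Intact G ω Y p.1 p.2 then price s j (spDist G ω p.1 p.2) else 0) +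
        ∑ p : V × V, if p.1 ∈ Y ∧ Intact G ω Y p.1 p.2 ∧ spDist G ω p.1 p.2 ≤ scale s j then
          864 * 8 ^ j / s else 0 := by
    rw [← Finset.sum_add_distrib]
    refine Finset.sum_le_sum fun p _ => ?_
    by_cases hi : Intact G ω Y p.1 p.2
    · have := price_succ_le hω hs j p.1 p.2
      simpa [hi, hi.1] using this
    · simp [hi]
  rw [sum_near] at h1
  have h2 : ∑ x ∈ Y, ((near G ω Y (scale s j) x).card : ℝ) ≤ Y.card * (M / 16 ^ j) := by
    rw [← nsmul_eq_mul]; exact Finset.sum_le_card_nsmul _ _ _ hN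
  have h3 : 864 * 8 ^ j / s * ∑ x ∈ Y, ((near G ω Y (scale s j) x).card : ℝ) ≤
      864 * 8 ^ j / s * (Y.card * (M / 16 ^ j)) := by gcongr
  have h4 : 864 * 8 ^ j / s * (Y.card * (M / 16 ^ j)) + 1728 / (2 ^ (j + 1) * s) * M * Y.card =
      1728 / (2 ^ j * s) * M * Y.card := by
    have e : (16 : ℝ) ^ j = 2 ^ j * 8 ^ j := by rw [← mul_pow]; norm_num
    rw [e, pow_succ]; field_simp; ring
  unfold potential
  linarith

/-- Removing a cone of stage `j` is paid for by the drop of the potential. -/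
lemma Layered.exists_cone_potential (hω : PosW G ω) (h : Layered G ω l par B Y) {s M : ℝ}
    (hs : 0 < s) (hM : 0 < M) (j : ℕ) (hYM : (Y.card : ℝ) ≤ M)
    (hN : ∀ x ∈ Y, ((near G ω Y (scale s j) x).card : ℝ) ≤ 16 * (M / 16 ^ j)) {v : V} (hv : v ∈ Y)
    (hdense : M / 16 ^ j ≤ (near G ω Y (scale s j) v).card) :
    ∃ A ⊆ Y, A.Nonempty ∧ IsCone G ω l par B s A ∧ Layered G ω l par B (Y \ A) ∧
      cutCost G ω Y {A, Y \ A} + potential G ω s M j (Y \ A) ≤ potential G ω s M j Y := by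
  have hσ := scale_pos hs j
  have h16 : (0 : ℝ) < 16 ^ j := by positivity
  have e1 : (16 : ℝ) ^ j = (2 ^ j) ^ 4 := by rw [← pow_mul, mul_comm, pow_mul]; norm_num
  obtain ⟨y, hyY, hyB, r, hr0, hr1, hcost⟩ := h.exists_cone hω hσ (θ := 1 / 16 ^ j)
    (β := 3 * 2 ^ j) (by positivity) (by positivity) hM
    (by rw [mul_pow, ← e1]; field_simp; norm_num) hYM
    (fun x hx => (hN x hx).trans_eq (by ring)) hv (le_trans (by rw [one_div, inv_mul_eq_div]) hdense)
  have hrs : r ≤ s := by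
    refine hr1.trans ?_
    have : (1 : ℝ) ≤ 4 ^ j := one_le_pow₀ (by norm_num)
    unfold scale
    rw [mul_div_assoc', div_le_iff₀ (by positivity)]
    nlinarith
  refine ⟨cone G ω l Y y r, cone_sub, ⟨y, apex_mem_cone hω hyY hr0⟩, h.isCone hω hyY hyB hr0 hrs,
    h.sdiff_cone hω y r, ?_⟩
  set A := cone G ω l Y y r with hA
  have hAY : A ⊆ Y := cone_sub
  set c := 2 * (3 * 2 ^ j) / scale s j with hc
  have hc0 : 0 ≤ c := by positivity
  have hcard : ((Y \ A).card : ℝ) = Y.card - A.card := by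
    rw [Finset.cast_card_sdiff hAY]
  have hpt : (∑ p : V × V, if (Intact G ω Y p.1 p.2 ∧ ¬ Intact G ω (Y \ A) p.1 p.2) ∧
        scale s j < spDist G ω p.1 p.2 then 1 / spDist G ω p.1 p.2 else 0) +
      (∑ p : V × V, if p.1 ∈ A ∧ Intact G ω Y p.1 p.2 ∧ spDist G ω p.1 p.2 ≤ scale s j
        then c else 0) +
      (∑ p : V × V, if Intact G ω (Y \ A) p.1 p.2 then price s j (spDist G ω p.1 p.2) else 0) ≤
      ∑ p : V × V, if Intact G ω Y p.1 p.2 then price s j (spDist G ω p.1 p.2) else 0 := by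
    rw [← Finset.sum_add_distrib, ← Finset.sum_add_distrib]
    refine Finset.sum_le_sum fun p _ => ?_
    have hp0 := price_nonneg hω hs j p.1 p.2
    by_cases hi : Intact G ω (Y \ A) p.1 p.2
    · have hi' := hi.mono hω Finset.sdiff_subset
      have hnA : p.1 ∉ A := (Finset.mem_sdiff.1 hi.1).2
      simp [hi, hi', hnA]
    · by_cases hY : Intact G ω Y p.1 p.2
      · rcases le_or_gt (spDist G ω p.1 p.2) (scale s j) with hd | hd
        · have hpr : price s j (spDist G ω p.1 p.2) = c := by rw [price, if_pos hd]
          simp only [hi, hY, hd, hd.not_gt, hpr, not_false_eq_true, and_true, and_false, if_false,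
            if_true, zero_add, add_zero]
          split_ifs <;> linarith
        · have hpr : price s j (spDist G ω p.1 p.2) = 1 / spDist G ω p.1 p.2 := by
            rw [price, if_neg hd.not_ge]
          simp [hi, hY, hd, hd.not_ge, hpr]
      · simp [hi, hY]
  rw [sum_near] at hpt
  have hΓ : c * (A.card * (1 / 16 ^ j * M)) ≤ 1728 / (2 ^ j * s) * M * A.card := by
    have e2 : c * (A.card * (1 / 16 ^ j * M)) = 108 / (2 ^ j * s) * M * A.card := by
      have e : (16 : ℝ) ^ j = 2 ^ j * 2 ^ j * 4 ^ j := by rw [← mul_pow, ← mul_pow]; norm_num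
      rw [hc, scale, e]; field_simp; ring
    rw [e2]
    gcongr
    norm_num
  rw [Finset.sum_add_distrib, Finset.sum_const, nsmul_eq_mul, mul_add] at hcost
  unfold potential
  rw [hcard, mul_sub]
  linarith

lemma Layered.exists_cover_aux (hω : PosW G ω) {s : ℝ} (hs : 0 < s) (m k : ℕ) (hm : 0 < m) :
    ∀ (j : ℕ) (Y : Finset V), Layered G ω l par B Y → Y.card + (m - j) ≤ k → Y.card ≤ m →
      (∀ x ∈ Y, ((near G ω Y (scale s j) x).card : ℝ) ≤ 16 * (m / 16 ^ j)) →
      ∃ P, IsPart Y P ∧ (∀ A ∈ P, IsCone G ω l par B s A) ∧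
        cutCost G ω Y P ≤ potential G ω s m j Y := by
  induction k with
  | zero =>
    intro j Y h hk _ _
    obtain rfl : Y = ∅ := Finset.card_eq_zero.1 (by omega)
    refine ⟨∅, ⟨by simp, by simp⟩, by simp, ?_⟩
    simp [cutCost, potential, Intact]
  | succ k ih =>
    intro j Y h hk hYm hN
    rcases Y.eq_empty_or_nonempty with rfl | ⟨v₀, hv₀⟩
    · refine ⟨∅, ⟨by simp, by simp⟩, by simp, ?_⟩
      simp [cutCost, potential, Intact]
    by_cases hdense : ∃ v ∈ Y, (m : ℝ) / 16 ^ j ≤ (near G ω Y (scale s j) v).card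
    · obtain ⟨v, hv, hd⟩ := hdense
      obtain ⟨A, hAY, hAne, hcone, hlay, hpot⟩ := h.exists_cone_potential hω hs
        (by exact_mod_cast hm) j (by exact_mod_cast hYm) hN hv hd
      have hlt : (Y \ A).card < Y.card := by
        apply Finset.card_lt_card
        refine ⟨Finset.sdiff_subset, fun hsub => ?_⟩
        obtain ⟨a, ha⟩ := hAne
        exact (Finset.mem_sdiff.1 (hsub (hAY ha))).2 ha
      obtain ⟨P, hP, hPc, hcost⟩ := ih j (Y \ A) hlay (by omega) (by omega) fun x hx => by
        refine le_trans ?_ (hN x (Finset.mem_sdiff.1 hx).1)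
        exact_mod_cast Finset.card_le_card (near_mono hω Finset.sdiff_subset le_rfl x)
      refine ⟨insert A P, hP.insert hAY, ?_, ?_⟩
      · simpa using ⟨hcone, hPc⟩
      · have := cutCost_insert_le hω Y A P
        linarith
    · push Not at hdense
      -- a vertex is near itself, so at stages `j ≥ m` every vertex is dense
      have hj : j < m := by
        by_contra hj
        have h1 : (1 : ℝ) ≤ (near G ω Y (scale s j) v₀).card := by
          have : v₀ ∈ near G ω Y (scale s j) v₀ := by
            refine Finset.mem_filter.2 ⟨Finset.mem_univ _, ⟨hv₀, hv₀, .rfl, ?_⟩, ?_⟩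
            · rw [spDist_self hω, spDist_self (hω.mono (ind_le Y))]
            · rw [spDist_self hω]; exact (scale_pos hs j).le
          exact_mod_cast Finset.card_pos.2 ⟨_, this⟩
        have h2 : (m : ℝ) ≤ 16 ^ j := by
          have : m < 16 ^ m := Nat.lt_pow_self (by norm_num)
          have h3 : 16 ^ m ≤ 16 ^ j := Nat.pow_le_pow_right (by norm_num) (not_lt.1 hj)
          exact_mod_cast this.le.trans h3
        have h3 := hdense v₀ hv₀
        have h4 : (m : ℝ) / 16 ^ j ≤ 1 := (div_le_one (by positivity)).2 h2
        linarith
      obtain ⟨P, hP, hPc, hcost⟩ := ih (j + 1) Y h (by omega) hYm fun x hx => by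
        have hle : scale s (j + 1) ≤ scale s j := by
          unfold scale
          gcongr
          · norm_num
          · omega
        have h1 : ((near G ω Y (scale s (j + 1)) x).card : ℝ) ≤ (near G ω Y (scale s j) x).card := by
          exact_mod_cast Finset.card_le_card (near_mono hω subset_rfl hle x)
        have h2 := hdense x hx
        have h3 : (16 : ℝ) * (m / 16 ^ (j + 1)) = m / 16 ^ j := by rw [pow_succ]; field_simp
        linarith
      exact ⟨P, hP, hPc, hcost.trans (potential_succ_le hω hs j fun x hx => (hdense x hx).le)⟩

/-- A layered set of vertices is partitioned into cones of slack `s` at a cost proportional to the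
number of its vertices. -/
lemma Layered.exists_cover (hω : PosW G ω) (h : Layered G ω l par B Y) {s : ℝ} (hs : 0 < s)
    {m : ℕ} (hm : 0 < m) (hYm : Y.card ≤ m) :
    ∃ P, IsPart Y P ∧ (∀ A ∈ P, IsCone G ω l par B s A) ∧
      cutCost G ω Y P ≤ 1836 / s * m * Y.card := by
  obtain ⟨P, hP, hPc, hcost⟩ := exists_cover_aux (l := l) (par := par) (B := B) hω hs m _ hm 0 Y h
    le_rfl hYm fun x hx => by
      have : (near G ω Y (scale s 0) x).card ≤ m := (Finset.card_le_card near_sub).trans hYm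
      have h2 : ((near G ω Y (scale s 0) x).card : ℝ) ≤ m := by exact_mod_cast this
      rw [pow_zero]
      linarith
  refine ⟨P, hP, hPc, hcost.trans ?_⟩
  have hle : (∑ p : V × V, if Intact G ω Y p.1 p.2 then price s 0 (spDist G ω p.1 p.2) else 0) ≤
      108 / s * (Y.card * Y.card) := by
    have hpr : ∀ p : V × V, price s 0 (spDist G ω p.1 p.2) ≤ 108 / s := by
      intro p
      unfold price scale
      split_ifs with hd
      · apply le_of_eq; field_simp; norm_num
      · rw [not_le] at hd
        rw [pow_zero, mul_one] at hd
        calc 1 / spDist G ω p.1 p.2 ≤ 1 / (s / 18) := one_div_le_one_div_of_le (by positivity) hd.le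
          _ = 18 / s := by field_simp
          _ ≤ 108 / s := by gcongr; norm_num
    calc _ ≤ ∑ p : V × V, if p ∈ Y ×ˢ Y then 108 / s else 0 := by
          refine Finset.sum_le_sum fun p _ => ?_
          by_cases hi : Intact G ω Y p.1 p.2
          · rw [if_pos hi, if_pos (Finset.mem_product.2 ⟨hi.1, hi.2.1⟩)]; exact hpr p
          · rw [if_neg hi]; split_ifs <;> positivity
      _ = 108 / s * (Y.card * Y.card) := by
          rw [Finset.sum_ite_mem, Finset.univ_inter, Finset.sum_const, nsmul_eq_mul,
            Finset.card_product]
          push_cast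
          ring
  have h2 : 108 / s * ((Y.card : ℝ) * Y.card) ≤ 108 / s * (m * Y.card) := by
    have : (Y.card : ℝ) ≤ m := by exact_mod_cast hYm
    gcongr
  unfold potential
  have h3 : 1836 / s * m * Y.card = 108 / s * (m * Y.card) + 1728 / (2 ^ 0 * s) * m * Y.card := by
    rw [pow_zero]; field_simp; ring
  linarith

end Cover

/-! ### Star decompositions -/

section Star

variable {V : Type} {G : SimpleGraph V} {ω : Sym2 V → ℝ}

/-- The sum of the distances of the subgraph induced on `X` over all ordered pairs in `X`. -/
noncomputable def distSum (G : SimpleGraph V) (ω : Sym2 V → ℝ) (X : Finset V) : ℝ :=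
  ∑ x ∈ X, ∑ y ∈ X, spDist (ind G X) ω x y

lemma exists_radius_far (hω : PosW G ω) (F X : Finset V) (g : V → ℝ) {c a b : ℝ} (hc : 0 < c)
    (hab : a < b) : ∃ r, a ≤ r ∧ r ≤ b ∧
      ∑ p ∈ F ×ˢ X, (if |g p.1 - r| ≤ c * spDist G ω p.1 p.2 then 1 / spDist G ω p.1 p.2 else 0) ≤
        2 * c * (F.card * X.card) / (b - a) := by
  obtain ⟨r, h1, h2, h3⟩ := exists_radius (F ×ˢ X) (fun p => g p.1)
    (fun p => c * spDist G ω p.1 p.2) (fun p _ => mul_nonneg hc.le (spDist_nonneg hω _ _)) hab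
  refine ⟨r, h1, h2, ?_⟩
  calc _ = c * ∑ p ∈ F ×ˢ X, (if |g p.1 - r| ≤ c * spDist G ω p.1 p.2 then
        1 / (c * spDist G ω p.1 p.2) else 0) := by
        rw [Finset.mul_sum]
        refine Finset.sum_congr rfl fun p _ => ?_
        split_ifs
        · rw [one_div, one_div, mul_inv, mul_inv_cancel_left₀ hc.ne']
        · simp
    _ ≤ c * (2 * (F ×ˢ X).card / (b - a)) := by gcongr
    _ = _ := by rw [Finset.card_product]; push_cast; ring

/-- The vertices far from a median of `X` are few. -/
lemma exists_median (hω : PosW G ω) {X : Finset V} (hne : X.Nonempty) : ∃ z ∈ X, ∀ t : ℝ, 0 < t →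
    ((X.filter fun x => t ≤ spDist (ind G X) ω z x).card : ℝ) * X.card ≤ distSum G ω X / t := by
  obtain ⟨z, hz, hmin⟩ := Finset.exists_min_image X (fun z => ∑ x ∈ X, spDist (ind G X) ω z x) hne
  refine ⟨z, hz, fun t ht => ?_⟩
  rw [le_div_iff₀ ht]
  have h1 : (X.card : ℝ) * ∑ x ∈ X, spDist (ind G X) ω z x ≤ distSum G ω X := by
    rw [← nsmul_eq_mul]
    exact Finset.card_nsmul_le_sum _ _ _ hmin
  have h2 : ((X.filter fun x => t ≤ spDist (ind G X) ω z x).card : ℝ) * t ≤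
      ∑ x ∈ X, spDist (ind G X) ω z x := by
    rw [← nsmul_eq_mul]
    refine (Finset.card_nsmul_le_sum _ _ _ fun x hx => (Finset.mem_filter.1 hx).2).trans ?_
    exact Finset.sum_le_sum_of_subset_of_nonneg (Finset.filter_subset _ _) fun x _ _ =>
      spDist_nonneg (hω.mono (ind_le X)) _ _
  calc _ = (X.card : ℝ) * (((X.filter fun x => t ≤ spDist (ind G X) ω z x).card : ℝ) * t) := by ring
    _ ≤ (X.card : ℝ) * ∑ x ∈ X, spDist (ind G X) ω z x := by gcongr
    _ ≤ _ := h1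

variable [Fintype V]

/-- Cut pairs starting in `F` are controlled by the choice of the radius; the others are longer than
`τ`, and a pair at distance `δ ≥ τ` costs `1 / δ ≤ δ / τ ^ 2`. -/
lemma cutCost_le_far (hω : PosW G ω) {X Y : Finset V}
    (hX : ∀ x ∈ X, ∀ y ∈ X, (ind G X).Reachable x y) (hYX : Y ⊆ X) (F : Finset V)
    (Q : Finset (Finset V)) (g : V → ℝ) {c r τ : ℝ} (hτ : 0 < τ)
    (h : ∀ a b, Intact G ω Y a b → (∀ A ∈ Q, ¬ Intact G ω A a b) →
      (a ∈ F → |g a - r| ≤ c * spDist G ω a b) ∧ (a ∉ F → τ ≤ spDist G ω a b)) :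
    cutCost G ω Y Q ≤ (∑ p ∈ F ×ˢ X,
      (if |g p.1 - r| ≤ c * spDist G ω p.1 p.2 then 1 / spDist G ω p.1 p.2 else 0)) +
        distSum G ω X / τ ^ 2 := by
  have e1 : distSum G ω X / τ ^ 2 = ∑ p : V × V,
      if p ∈ X ×ˢ X then spDist (ind G X) ω p.1 p.2 / τ ^ 2 else 0 := by
    rw [Finset.sum_ite_mem, Finset.univ_inter, Finset.sum_product, distSum, Finset.sum_div]
    simp only [Finset.sum_div]
  rw [e1, ← Finset.univ_inter (F ×ˢ X), ← Finset.sum_ite_mem, ← Finset.sum_add_distrib]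
  refine Finset.sum_le_sum fun p _ => ?_
  have h0 : 0 ≤ 1 / spDist G ω p.1 p.2 := one_div_nonneg.2 (spDist_nonneg hω _ _)
  have h1 := spDist_nonneg (hω.mono (ind_le X)) p.1 p.2
  have h2 : 0 ≤ spDist (ind G X) ω p.1 p.2 / τ ^ 2 := by positivity
  by_cases hcut : Intact G ω Y p.1 p.2 ∧ ∀ A ∈ Q, ¬ Intact G ω A p.1 p.2
  · rw [if_pos hcut]
    have ha := hYX hcut.1.1
    have hb := hYX hcut.1.2.1
    obtain ⟨h3, h4⟩ := h p.1 p.2 hcut.1 hcut.2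
    rw [if_pos (Finset.mem_product.2 ⟨ha, hb⟩)]
    by_cases hF : p.1 ∈ F
    · rw [if_pos (Finset.mem_product.2 ⟨hF, hb⟩), if_pos (h3 hF)]
      linarith
    · have h5 := h4 hF
      have h6 := spDist_mono hω (ind_le X) (hX _ ha _ hb)
      have h7 : 1 / spDist G ω p.1 p.2 ≤ spDist (ind G X) ω p.1 p.2 / τ ^ 2 := by
        rw [div_le_div_iff₀ (by linarith) (by positivity)]
        nlinarith
      split_ifs <;> linarith
  · rw [if_neg hcut]
    split_ifs <;> linarith

/-- A connected `X` splits into a ball around the root `x₀` and cones hanging from the ball, of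
slack proportional to the radius `R`, at a cost bounded by the sum of distances in `X`. -/
lemma exists_star (hω : PosW G ω) {X : Finset V} {x₀ : V} (hx₀ : x₀ ∈ X)
    (hX : ∀ z ∈ X, (ind G X).Reachable x₀ z) {R ε : ℝ} (hR : 0 < R)
    (hε : 0 < ε) (hε1 : ε ≤ 1 / 100) :
    ∃ (r₀ : ℝ) (X₀ : Finset V) (P : Finset (Finset V)) (par : V → V),
      R / 4 ≤ r₀ ∧ r₀ ≤ 3 * R / 4 ∧ x₀ ∈ X₀ ∧ X₀ ⊆ X ∧
      (∀ z ∈ X₀, (ind G X₀).Reachable x₀ z ∧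
        spDist (ind G X₀) ω x₀ z ≤ spDist (ind G X) ω x₀ z ∧ spDist (ind G X) ω x₀ z ≤ r₀) ∧
      (∀ z ∈ X \ X₀, r₀ < spDist (ind G X) ω x₀ z) ∧
      IsPart (X \ X₀) P ∧
      (∀ A ∈ P, IsCone G ω (spDist (ind G X) ω x₀) par X₀ (ε * R) A) ∧
      cutCost G ω X (insert X₀ P) ≤ 30000 / ε ^ 2 * distSum G ω X / R ^ 2 := by
  have hωX := hω.mono (ind_le X)
  set l := spDist (ind G X) ω x₀ with hl
  set D := distSum G ω X with hD
  have hD0 : 0 ≤ D := Finset.sum_nonneg fun x _ => Finset.sum_nonneg fun y _ => spDist_nonneg hωX _ _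
  have hXr : ∀ x ∈ X, ∀ y ∈ X, (ind G X).Reachable x y := fun x hx y hy =>
    (hX x hx).symm.trans (hX y hy)
  have hlip : ∀ u v, u ∈ X → (ind G X).Reachable u v → l u ≤ l v + spDist (ind G X) ω u v := by
    intro u v hu huv
    rw [spDist_comm u v]
    exact spDist_triangle hωX ((hX u hu).trans huv) huv.symm
  have hm : 0 < X.card := Finset.card_pos.2 ⟨_, hx₀⟩
  -- the parent is the previous vertex on a geodesic from the root
  obtain ⟨par, hpar⟩ : ∃ par : V → V, ∀ z ∈ X, z ≠ x₀ → par z ∈ X ∧ G.Adj (par z) z ∧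
      l z = l (par z) + ω s(par z, z) := by
    have : ∀ z, ∃ w, z ∈ X → z ≠ x₀ → w ∈ X ∧ G.Adj w z ∧ l z = l w + ω s(w, z) := by
      intro z
      by_cases hz : z ∈ X ∧ z ≠ x₀
      · obtain ⟨p, hp⟩ := exists_geodesic hωX (hX z hz.1).symm
        cases p with
        | nil => exact absurd rfl hz.2
        | @cons _ w _ ha q =>
          refine ⟨w, fun _ _ => ⟨ha.2.2, ha.1.symm, ?_⟩⟩
          have h1 := spDist_le_wt hωX q
          have h2 := spDist_triangle hωX (hX w ha.2.2) ha.symm.reachable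
          have h3 := spDist_adj hωX ha.symm
          have e : s(w, z) = s(z, w) := Sym2.eq_swap
          simp only [wt, SimpleGraph.Walk.edges_cons, List.map_cons, List.sum_cons] at hp h1
          rw [spDist_comm z x₀] at hp
          rw [spDist_comm w x₀] at h1
          rw [e] at h3 ⊢
          simp only [hl]
          linarith
      · exact ⟨z, fun h1 h2 => absurd ⟨h1, h2⟩ hz⟩
    choose par hpar using this
    exact ⟨par, hpar⟩
  obtain ⟨z, hz, hmed⟩ := exists_median hω ⟨x₀, hx₀⟩
  have hεR : 0 < ε * R := by positivity
  have hεR' : ε * R ≤ R / 100 := by nlinarith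
  set F := X.filter fun x => ε * R / 16 ≤ spDist (ind G X) ω z x with hF
  have hFm : (F.card : ℝ) * X.card ≤ 16 * D / (ε * R) := by
    have := hmed (ε * R / 16) (by positivity)
    refine this.trans_eq ?_
    rw [← hD]
    field_simp
  have hnF : ∀ x ∈ X, x ∉ F → spDist (ind G X) ω z x < ε * R / 16 := by
    intro x hx hxF
    by_contra hc
    exact hxF (Finset.mem_filter.2 ⟨hx, not_lt.1 hc⟩)
  have hnFl : ∀ x ∈ X, x ∉ F → |l x - l z| ≤ ε * R / 16 := by
    intro x hx hxF
    have h1 := hnF x hx hxF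
    have h2 := hlip x z hx (hXr x hx z hz)
    have h3 := hlip z x hz (hXr z hz x hx)
    rw [spDist_comm x z] at h2
    rw [abs_le]
    constructor <;> linarith
  -- the ball
  obtain ⟨a, hab1, hab2, hgap⟩ : ∃ a, R / 4 ≤ a ∧ a + R / 8 ≤ 3 * R / 4 ∧
      ((R / 2 ≤ l z ∧ a + R / 8 ≤ 3 * R / 8) ∨ (l z < R / 2 ∧ 5 * R / 8 ≤ a)) := by
    rcases le_or_gt (R / 2) (l z) with hc | hc
    · exact ⟨R / 4, le_rfl, by linarith, .inl ⟨hc, by linarith⟩⟩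
    · exact ⟨5 * R / 8, by linarith, by linarith, .inr ⟨hc, le_rfl⟩⟩
  obtain ⟨r₀, hr1, hr2, hballsum⟩ := exists_radius_far hω F X l (c := 1) one_pos
    (show a < a + R / 8 by linarith)
  set X₀ := X.filter fun x => l x ≤ r₀ with hX₀
  have hX₀X : X₀ ⊆ X := Finset.filter_subset _ _
  have hl0 : l x₀ = 0 := spDist_self hωX x₀
  have hx₀X₀ : x₀ ∈ X₀ := Finset.mem_filter.2 ⟨hx₀, by linarith⟩
  have hout : ∀ z ∈ X \ X₀, r₀ < l z := by
    intro z hz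
    obtain ⟨h1, h2⟩ := Finset.mem_sdiff.1 hz
    by_contra hc
    exact h2 (Finset.mem_filter.2 ⟨h1, not_lt.1 hc⟩)
  have hball : ∀ z ∈ X₀, (ind G X₀).Reachable x₀ z ∧ spDist (ind G X₀) ω x₀ z ≤ l z ∧ l z ≤ r₀ := by
    intro z hz
    obtain ⟨hzX, hzr⟩ := Finset.mem_filter.1 hz
    obtain ⟨p, hp⟩ := exists_geodesic hωX (hX z hzX)
    have hs : ∀ u ∈ p.support, u ∈ X₀ := by
      intro u hu
      obtain ⟨h1, h2, h3⟩ := spDist_split hωX p hp hu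
      refine Finset.mem_filter.2 ⟨support_sub p hx₀ u hu, ?_⟩
      have := spDist_nonneg hωX u z
      simp only [hl] at hzr ⊢
      linarith
    obtain ⟨q, hq⟩ := exists_transfer (ω := ω) (ind_le X) p hs
    exact ⟨⟨q⟩, (spDist_le_wt (hω.mono (ind_le X₀)) q).trans_eq (hq.trans hp), hzr⟩
  have hballcost : cutCost G ω X {X₀, X \ X₀} ≤ 16 / R * (F.card * X.card) + 100 * D / R ^ 2 := by
    have h1 := cutCost_le_far hω hXr subset_rfl F {X₀, X \ X₀} l (c := 1) (r := r₀)
      (τ := R / 10) (by positivity) (by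
        intro u v hi hA
        have h3 := mt (hi.band hω) (hA X₀ (by simp))
        have h4 := mt (hi.band hω) (hA (X \ X₀) (by simp))
        push Not at h3 h4
        obtain ⟨p, hpX, hp1, hp2, hp3⟩ := h3
        obtain ⟨q, hqX, hq1, hq2, hq3⟩ := h4
        have hp4 := hout p (Finset.mem_sdiff.2 ⟨hpX, hp3⟩)
        have hq4 : l q ≤ r₀ := by
          by_contra hc
          exact hq3 (Finset.mem_sdiff.2 ⟨hqX, fun hq => hc (Finset.mem_filter.1 hq).2⟩)
        have h5 := hlip p u hpX hp1.symm
        have h6 := hlip u q hi.1 hq1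
        rw [spDist_comm p u] at h5
        have h7 : |l u - r₀| ≤ spDist G ω u v := by
          rw [abs_le]; constructor <;> linarith
        refine ⟨fun _ => by simpa using h7, fun huF => ?_⟩
        have h8 := abs_le.1 (hnFl u hi.1 huF)
        have h9 := abs_le.1 h7
        rcases hgap with ⟨hg1, hg2⟩ | ⟨hg1, hg2⟩ <;> linarith)
    refine h1.trans (add_le_add (hballsum.trans_eq ?_) (le_of_eq ?_))
    · rw [add_sub_cancel_left]; field_simp; ring
    · rw [← hD]; field_simp; norm_num
  -- the outside of the ball
  have hlay : Layered G ω l par X₀ (X \ X₀) := by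
    have hne : ∀ z ∈ X \ X₀, z ∈ X ∧ z ≠ x₀ := fun z hz =>
      ⟨(Finset.mem_sdiff.1 hz).1, fun h => (Finset.mem_sdiff.1 hz).2 (h ▸ hx₀X₀)⟩
    refine ⟨fun z hz => ?_, fun z hz => ?_, fun z hz => ?_, fun u v hu huv => ?_⟩
    · exact (hpar z (hne z hz).1 (hne z hz).2).2.1
    · exact (hpar z (hne z hz).1 (hne z hz).2).2.2
    · by_cases hp : par z ∈ X₀
      · exact .inr hp
      · exact .inl (Finset.mem_sdiff.2 ⟨(hpar z (hne z hz).1 (hne z hz).2).1, hp⟩)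
    · have h1 := hlip u v (Finset.mem_sdiff.1 hu).1 (huv.mono (ind_mono Finset.sdiff_subset))
      have h2 := spDist_mono hωX (ind_mono Finset.sdiff_subset) huv
      linarith
  have hcover : ∀ Y ⊆ F, Layered G ω l par X₀ Y → ∃ P, IsPart Y P ∧
      (∀ A ∈ P, IsCone G ω l par X₀ (ε * R) A) ∧
      cutCost G ω Y P ≤ 29376 * D / (ε * R) ^ 2 := by
    intro Y hYF hY
    obtain ⟨P, h1, h2, h3⟩ := hY.exists_cover hω hεR hm
      (Finset.card_le_card (hYF.trans (Finset.filter_subset _ _)))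
    refine ⟨P, h1, h2, h3.trans ?_⟩
    have h4 : (Y.card : ℝ) ≤ F.card := by exact_mod_cast Finset.card_le_card hYF
    calc 1836 / (ε * R) * X.card * Y.card ≤ 1836 / (ε * R) * X.card * F.card := by gcongr
      _ = 1836 / (ε * R) * (F.card * X.card) := by ring
      _ ≤ 1836 / (ε * R) * (16 * D / (ε * R)) := by gcongr
      _ = _ := by field_simp; ring
  obtain ⟨P, hP, hPc, hcost⟩ : ∃ P, IsPart (X \ X₀) P ∧
      (∀ A ∈ P, IsCone G ω l par X₀ (ε * R) A) ∧
      cutCost G ω (X \ X₀) P ≤ (128 + 30 + 29376) * D / (ε * R) ^ 2 := by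
    rcases hgap with ⟨hg1, hg2⟩ | ⟨hg1, hg2⟩
    · -- the median lies outside the ball: its cone comes first and swallows all vertices near it
      have hzY : z ∈ X \ X₀ := Finset.mem_sdiff.2 ⟨hz, fun hc => by
        have := (Finset.mem_filter.1 hc).2
        linarith⟩
      obtain ⟨y, hyY, hyB, hyz, hle⟩ := hlay.exists_apex hω hzY
      have hfz : detour G ω l (X \ X₀) y z ≤ 0 := by unfold detour; linarith
      have hnear : ∀ x ∈ X, x ∉ F → x ∈ X \ X₀ ∧ (ind G (X \ X₀)).Reachable y x ∧
          detour G ω l (X \ X₀) y x ≤ ε * R / 8 := by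
        intro x hx hxF
        obtain ⟨p, hp⟩ := exists_geodesic hωX (hXr z hz x hx)
        have hlt := hnF x hx hxF
        have hs : ∀ u ∈ p.support, u ∈ X \ X₀ := by
          intro u hu
          obtain ⟨h1, h2, h3⟩ := spDist_split hωX p hp hu
          have h4 := spDist_nonneg hωX u x
          have h5 := hlip z u hz h1
          refine Finset.mem_sdiff.2 ⟨support_sub p hz u hu, fun hc => ?_⟩
          have := (Finset.mem_filter.1 hc).2
          linarith
        obtain ⟨q, hq⟩ := exists_transfer (ω := ω) (ind_le X) p hs
        have hd := spDist_le_wt (hω.mono (ind_le (X \ X₀))) q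
        have h6 := hlay.detour_lip hω hyY hyz ⟨q⟩
        exact ⟨hs _ p.end_mem_support, hyz.trans ⟨q⟩, by linarith⟩
      obtain ⟨r, hr3, hr4, hsum⟩ := exists_radius_far hω F X (detour G ω l (X \ X₀) y) (c := 2)
        two_pos (show ε * R / 2 < ε * R by linarith)
      set A := cone G ω l (X \ X₀) y r with hA
      have hrest : (X \ X₀) \ A ⊆ F := by
        intro x hx
        by_contra hxF
        obtain ⟨h1, h2⟩ := Finset.mem_sdiff.1 hx
        obtain ⟨h3, h4, h5⟩ := hnear x (Finset.mem_sdiff.1 h1).1 hxF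
        exact h2 (Finset.mem_filter.2 ⟨h3, h4, by linarith⟩)
      have hcutA : cutCost G ω (X \ X₀) {A, (X \ X₀) \ A} ≤ (128 + 30) * D / (ε * R) ^ 2 := by
        have h1 := cutCost_le_far hω hXr Finset.sdiff_subset F {A, (X \ X₀) \ A}
          (detour G ω l (X \ X₀) y) (c := 2) (r := r) (τ := 3 * (ε * R) / 16) (by positivity) (by
            intro u v hi hQ
            obtain ⟨-, h2⟩ := hlay.cut_cone hω hyY hi (hQ A (by simp))
              (hQ ((X \ X₀) \ A) (by simp))
            refine ⟨fun _ => h2, fun huF => ?_⟩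
            have h3 := (hnear u (Finset.mem_sdiff.1 hi.1).1 huF).2.2
            have h4 := (abs_le.1 h2).1
            linarith)
        calc _ ≤ _ := h1
          _ ≤ 2 * 2 * (F.card * X.card) / (ε * R - ε * R / 2) + D / (3 * (ε * R) / 16) ^ 2 := by
              gcongr
          _ = 8 / (ε * R) * (F.card * X.card) + 256 / 9 * D / (ε * R) ^ 2 := by
              field_simp; ring
          _ ≤ 8 / (ε * R) * (16 * D / (ε * R)) + 30 * D / (ε * R) ^ 2 := by
              gcongr; norm_num
          _ = _ := by field_simp; ring
      obtain ⟨P, hP, hPc, hcost⟩ := hcover _ hrest (hlay.sdiff_cone hω y r)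
      refine ⟨insert A P, hP.insert cone_sub, ?_, ?_⟩
      · have := hlay.isCone hω hyY hyB (r := r) (s := ε * R) (by linarith) hr4
        simpa using ⟨this, hPc⟩
      · calc _ ≤ _ := cutCost_insert_le hω _ A P
          _ ≤ (128 + 30) * D / (ε * R) ^ 2 + 29376 * D / (ε * R) ^ 2 := add_le_add hcutA hcost
          _ = _ := by ring
    · have hrest : X \ X₀ ⊆ F := by
        intro x hx
        by_contra hxF
        have h1 := hout x hx
        have h2 := abs_le.1 (hnFl x (Finset.mem_sdiff.1 hx).1 hxF)
        linarith
      obtain ⟨P, hP, hPc, hcost⟩ := hcover _ hrest hlay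
      refine ⟨P, hP, hPc, hcost.trans ?_⟩
      gcongr
      norm_num
  refine ⟨r₀, X₀, P, par, by linarith, by linarith, hx₀X₀, hX₀X, hball, hout, hP, hPc, ?_⟩
  have hb2 : 16 / R * (F.card * X.card) + 100 * D / R ^ 2 ≤ (356 / 100) * D / (ε * R) ^ 2 := by
    calc 16 / R * (F.card * X.card) + 100 * D / R ^ 2
        ≤ 16 / R * (16 * D / (ε * R)) + 100 * D / R ^ 2 := by gcongr
      _ = (256 * ε + 100 * ε ^ 2) * D / (ε * R) ^ 2 := by field_simp; ring
      _ ≤ _ := by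
          gcongr
          nlinarith
  calc _ ≤ _ := cutCost_insert_le hω X X₀ P
    _ ≤ (356 / 100) * D / (ε * R) ^ 2 + (128 + 30 + 29376) * D / (ε * R) ^ 2 :=
        add_le_add (hballcost.trans hb2) hcost
    _ = (356 / 100 + (128 + 30 + 29376)) * D / (ε * R) ^ 2 := by ring
    _ ≤ 30000 * D / (ε * R) ^ 2 := by gcongr; norm_num
    _ = _ := by field_simp

end Star

/-! ### The recursive construction -/

/-- The accounting of one recursive step. With `q ^ 4` the fraction of the vertices in the current
part and `r i ^ 4` those in its parts, the budget `20 C N q ^ 6` covers the cut pairs (`C E`),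
because `E` is at most `4 / 5` of the sum of the `e i` of the parts, up to a term that the drop of
the budget absorbs. -/
lemma budget_step {ι : Type*} (s : Finset ι) {C N q tot E : ℝ} {r t e : ι → ℝ} (hC : 0 ≤ C)
    (hN : 0 ≤ N) (hq : 0 < q) (hr0 : ∀ i ∈ s, 0 ≤ r i) (hr : ∀ i ∈ s, r i ≤ q)
    (hsum : ∑ i ∈ s, r i ^ 4 = q ^ 4)
    (hrec : ∀ i ∈ s, t i + 4 * C * e i ≤ 20 * C * N * r i ^ 6)
    (hE : E ≤ 4 / 5 * ∑ i ∈ s, e i + 2 * N * (q ^ 8 - ∑ i ∈ s, r i ^ 8) / q ^ 2)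
    (htot : tot ≤ ∑ i ∈ s, t i + C * E) : tot + 4 * C * E ≤ 20 * C * N * q ^ 6 := by
  have h1 : ∑ i ∈ s, t i + 4 * C * ∑ i ∈ s, e i ≤ 20 * C * N * ∑ i ∈ s, r i ^ 6 := by
    rw [Finset.mul_sum, Finset.mul_sum, ← Finset.sum_add_distrib]
    exact Finset.sum_le_sum hrec
  have h2 : (q ^ 8 - ∑ i ∈ s, r i ^ 8) / q ^ 2 ≤ 2 * (q ^ 6 - ∑ i ∈ s, r i ^ 6) := by
    rw [div_le_iff₀ (by positivity)]
    have e8 : q ^ 8 = ∑ i ∈ s, r i ^ 4 * q ^ 4 := by rw [← Finset.sum_mul, hsum]; ring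
    have e6 : q ^ 6 = ∑ i ∈ s, r i ^ 4 * q ^ 2 := by rw [← Finset.sum_mul, hsum]; ring
    rw [e8, e6, ← Finset.sum_sub_distrib, ← Finset.sum_sub_distrib, Finset.mul_sum, Finset.sum_mul]
    refine Finset.sum_le_sum fun i hi => ?_
    have h3 : r i ^ 2 ≤ q ^ 2 := pow_le_pow_left₀ (hr0 i hi) (hr i hi) 2
    have h4 : 0 ≤ r i ^ 4 * (q ^ 2 - r i ^ 2) * (q ^ 2 - r i ^ 2) :=
      mul_nonneg (mul_nonneg (by positivity) (by linarith)) (by linarith)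
    nlinarith
  have h5 : 10 * C * N * ((q ^ 8 - ∑ i ∈ s, r i ^ 8) / q ^ 2) ≤
      10 * C * N * (2 * (q ^ 6 - ∑ i ∈ s, r i ^ 6)) := by gcongr
  have h6 : 5 * C * E ≤ 5 * C * (4 / 5 * ∑ i ∈ s, e i +
      2 * N * (q ^ 8 - ∑ i ∈ s, r i ^ 8) / q ^ 2) := by gcongr
  have h7 : 5 * C * (4 / 5 * ∑ i ∈ s, e i + 2 * N * (q ^ 8 - ∑ i ∈ s, r i ^ 8) / q ^ 2) =
      4 * C * ∑ i ∈ s, e i + 10 * C * N * ((q ^ 8 - ∑ i ∈ s, r i ^ 8) / q ^ 2) := by ring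
  linarith

section Main

variable {V : Type} {G : SimpleGraph V} {ω : Sym2 V → ℝ}

lemma exists_maxDist (H : SimpleGraph V) {A : Finset V} (a : V) (hA : A.Nonempty) :
    ∃ R, (∀ z ∈ A, spDist H ω a z ≤ R) ∧ ∃ z ∈ A, spDist H ω a z = R := by
  obtain ⟨z, hz, h⟩ := Finset.exists_max_image A (fun z => spDist H ω a z) hA
  exact ⟨_, h, z, hz, rfl⟩

variable [Fintype V]

/-- The fourth root of the fraction of the vertices that lie in `X`. -/
noncomputable def frac (X : Finset V) : ℝ := √√((X.card : ℝ) / Fintype.card V)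

lemma frac_nonneg (X : Finset V) : 0 ≤ frac X := Real.sqrt_nonneg _

lemma frac_pow (X : Finset V) : frac X ^ 4 = (X.card : ℝ) / Fintype.card V := by
  have h : (0 : ℝ) ≤ (X.card : ℝ) / Fintype.card V := by positivity
  rw [frac, show (4 : ℕ) = 2 * 2 by norm_num, pow_mul, Real.sq_sqrt (Real.sqrt_nonneg _),
    Real.sq_sqrt h]

lemma frac_mono {A X : Finset V} (h : A ⊆ X) : frac A ≤ frac X := by
  unfold frac
  gcongr

lemma frac_le_one (X : Finset V) : frac X ≤ 1 := by
  rw [frac, Real.sqrt_le_one, Real.sqrt_le_one]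
  exact div_le_one_of_le₀ (by exact_mod_cast Finset.card_le_univ X) (by positivity)

lemma frac_pos {X : Finset V} (h : X.Nonempty) : 0 < frac X := by
  have h1 : 0 < X.card := Finset.card_pos.2 h
  have h2 : 0 < Fintype.card V := h1.trans_le (Finset.card_le_univ X)
  unfold frac
  positivity

/-- The total distortion under `T` of the pairs intact in `X`. -/
noncomputable def total (G : SimpleGraph V) (ω : Sym2 V → ℝ) (X : Finset V) (T : SimpleGraph V) :
    ℝ := ∑ p : V × V, if Intact G ω X p.1 p.2 then spDist T ω p.1 p.2 / spDist G ω p.1 p.2 else 0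

/-- What the recursion provides for a part `X` of radius `R` around its root: a connecting graph `T`
with few edges, an additive stretch from the root of at most `frac X * R`, and a total distortion
within the budget. -/
structure GoodTree (G : SimpleGraph V) (ω : Sym2 V → ℝ) (X : Finset V) (x₀ : V) (R : ℝ)
    (T : SimpleGraph V) : Prop where
  le : T ≤ G
  card : T.edgeSet.ncard + 1 ≤ X.card
  reach : ∀ z ∈ X, T.Reachable x₀ z
  dist : ∀ z ∈ X, spDist T ω x₀ z ≤ spDist (ind G X) ω x₀ z + frac X * R
  total : total G ω X T + 4 * 1200000000 * (distSum G ω X / (frac X ^ 2 * R)) ≤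
    20 * 1200000000 * (Fintype.card V : ℝ) ^ 2 * frac X ^ 6

lemma exists_goodTree_zero (hω : PosW G ω) {X : Finset V} {x₀ : V} (hx₀ : x₀ ∈ X)
    (hX : ∀ z ∈ X, (ind G X).Reachable x₀ z) (hR : ∀ z ∈ X, spDist (ind G X) ω x₀ z ≤ 0) :
    GoodTree G ω X x₀ 0 ⊥ := by
  have hXs : ∀ z ∈ X, z = x₀ := by
    intro z hz
    by_contra hne
    exact absurd (hR z hz) (spDist_pos (hω.mono (ind_le X)) (hX z hz) (Ne.symm hne)).not_ge
  have hbot : PosW (⊥ : SimpleGraph V) ω := hω.mono bot_le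
  refine ⟨bot_le, ?_, fun z hz => hXs z hz ▸ .rfl, fun z hz => ?_, ?_⟩
  · simpa using Finset.card_pos.2 ⟨_, hx₀⟩
  · rw [hXs z hz, spDist_self hbot, spDist_self (hω.mono (ind_le X))]; simp
  · have : StarTree.total G ω X ⊥ = 0 := by
      refine Finset.sum_eq_zero fun p _ => ?_
      split_ifs with h
      · rw [hXs _ h.1, hXs _ h.2.1, spDist_self hω, div_zero]
      · rfl
    rw [this]
    have := frac_nonneg X
    simp only [mul_zero, div_zero, add_zero]
    positivity

/-- Separated pairs are at distance at most `2 R`; for the others the distances inside the parts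
are larger. -/
lemma distSum_le (hω : PosW G ω) {X : Finset V} {P : Finset (Finset V)} (hP : IsPart X P) {R : ℝ}
    (hd : ∀ x ∈ X, ∀ y ∈ X, spDist (ind G X) ω x y ≤ 2 * R)
    (hA : ∀ A ∈ P, ∀ x ∈ A, ∀ y ∈ A, (ind G A).Reachable x y) :
    distSum G ω X ≤ ∑ A ∈ P, distSum G ω A +
      2 * R * ((X.card : ℝ) ^ 2 - ∑ A ∈ P, (A.card : ℝ) ^ 2) := by
  have hsub : P.biUnion (fun A => A ×ˢ A) ⊆ X ×ˢ X := by
    intro p hp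
    obtain ⟨A, hAP, hp⟩ := Finset.mem_biUnion.1 hp
    obtain ⟨h1, h2⟩ := Finset.mem_product.1 hp
    exact Finset.mem_product.2 ⟨hP.sub hAP h1, hP.sub hAP h2⟩
  have h1 := Finset.sum_le_sum_of_subset_of_nonneg (f := fun p : V × V =>
    2 * R - spDist (ind G X) ω p.1 p.2) hsub fun p hp _ => by
      obtain ⟨h1, h2⟩ := Finset.mem_product.1 hp
      have := hd _ h1 _ h2
      simpa using this
  rw [Finset.sum_biUnion] at h1
  · have h2 : ∑ p ∈ X ×ˢ X, (2 * R - spDist (ind G X) ω p.1 p.2) =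
        2 * R * (X.card : ℝ) ^ 2 - distSum G ω X := by
      rw [Finset.sum_sub_distrib, Finset.sum_const, nsmul_eq_mul, Finset.card_product,
        Finset.sum_product, distSum]
      push_cast
      ring
    have h3 : ∑ A ∈ P, (2 * R * (A.card : ℝ) ^ 2 - distSum G ω A) ≤
        ∑ A ∈ P, ∑ p ∈ A ×ˢ A, (2 * R - spDist (ind G X) ω p.1 p.2) := by
      refine Finset.sum_le_sum fun A hAP => ?_
      have h4 : ∑ p ∈ A ×ˢ A, spDist (ind G X) ω p.1 p.2 ≤ distSum G ω A := by
        rw [Finset.sum_product, distSum]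
        refine Finset.sum_le_sum fun x hx => Finset.sum_le_sum fun y hy => ?_
        exact spDist_mono (hω.mono (ind_le X)) (ind_mono (hP.sub hAP)) (hA A hAP x hx y hy)
      rw [Finset.sum_sub_distrib, Finset.sum_const, nsmul_eq_mul, Finset.card_product]
      push_cast
      linarith
    rw [h2] at h1
    rw [Finset.sum_sub_distrib, ← Finset.mul_sum] at h3
    linarith
  · intro A hA' B hB hne
    have := hP.1 hA' hB hne
    exact Finset.disjoint_product.2 (.inl this)

/-- Pairs intact in a part are stretched as in the graph of that part, cut pairs at most by the
diameter of `T`. -/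
lemma total_le (hω : PosW G ω) {X : Finset V} {P : Finset (Finset V)} {T : SimpleGraph V}
    {S : Finset V → SimpleGraph V} (hT : T ≤ G) (hST : ∀ A ∈ P, S A ≤ T)
    (hS : ∀ A ∈ P, ∀ x ∈ A, ∀ y ∈ A, (S A).Reachable x y) {Δ : ℝ}
    (hΔ : ∀ x ∈ X, ∀ y ∈ X, spDist T ω x y ≤ Δ) :
    total G ω X T ≤ ∑ A ∈ P, total G ω A (S A) + Δ * cutCost G ω X P := by
  unfold total cutCost
  rw [Finset.sum_comm, Finset.mul_sum, ← Finset.sum_add_distrib]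
  refine Finset.sum_le_sum fun p _ => ?_
  have hd := spDist_nonneg hω p.1 p.2
  have hnn : ∀ A ∈ P, 0 ≤ if Intact G ω A p.1 p.2 then
      spDist (S A) ω p.1 p.2 / spDist G ω p.1 p.2 else 0 := by
    intro A hA
    have := spDist_nonneg (hω.mono ((hST A hA).trans hT)) p.1 p.2
    split_ifs <;> positivity
  have hsum := Finset.sum_nonneg hnn
  by_cases hX : Intact G ω X p.1 p.2
  · rw [if_pos hX]
    by_cases hc : ∀ A ∈ P, ¬ Intact G ω A p.1 p.2
    · rw [if_pos ⟨hX, hc⟩, mul_one_div]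
      have := div_le_div_of_nonneg_right (hΔ _ hX.1 _ hX.2.1) hd
      linarith
    · rw [if_neg (fun h => hc h.2), mul_zero, add_zero]
      push Not at hc
      obtain ⟨A, hA, hi⟩ := hc
      refine le_trans ?_ (Finset.single_le_sum hnn hA)
      rw [if_pos hi]
      exact div_le_div_of_nonneg_right
        (spDist_mono (hω.mono hT) (hST A hA) (hS A hA _ hi.1 _ hi.2.1)) hd
  · rw [if_neg hX, if_neg (fun h => hX h.1), mul_zero, add_zero]
    exact hsum

/-- Two disjoint parts cannot both hold almost all of the vertices of `X`. -/
lemma frac_disjoint {A B X : Finset V} (hA : A ⊆ X) (hB : B ⊆ X) (hAB : Disjoint A B) :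
    frac A ≤ 17 / 20 * frac X ∨ frac B ≤ 17 / 20 * frac X := by
  by_contra! h
  have hX := frac_nonneg X
  have h1 := pow_lt_pow_left₀ h.1 (by positivity) (n := 4) (by norm_num)
  have h2 := pow_lt_pow_left₀ h.2 (by positivity) (n := 4) (by norm_num)
  have h3 : frac A ^ 4 + frac B ^ 4 ≤ frac X ^ 4 := by
    rw [frac_pow, frac_pow, frac_pow, ← add_div]
    apply div_le_div_of_nonneg_right _ (by positivity)
    rw [← Nat.cast_add, ← Finset.card_union_of_disjoint hAB]
    exact_mod_cast Finset.card_le_card (Finset.union_subset hA hB)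
  have h4 : 0 ≤ frac X ^ 4 := by positivity
  rw [mul_pow] at h1 h2
  norm_num at h1 h2
  linarith

/-- Glues the trees of the parts of a star decomposition along the portal edges of the cones. -/
lemma exists_glue (P : Finset (Finset V)) (X₀ : Finset V) (S : Finset V → SimpleGraph V)
    (b y : Finset V → V) (hS : ∀ A ∈ insert X₀ P, S A ≤ G) (hby : ∀ A ∈ P, G.Adj (b A) (y A)) :
    ∃ T : SimpleGraph V, T ≤ G ∧ (∀ A ∈ insert X₀ P, S A ≤ T) ∧ (∀ A ∈ P, T.Adj (b A) (y A)) ∧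
      T.edgeSet.ncard ≤ ∑ A ∈ insert X₀ P, (S A).edgeSet.ncard + P.card := by
  set E : Set (Sym2 V) := (⋃ A ∈ insert X₀ P, (S A).edgeSet) ∪
    (P.image fun A => s(b A, y A) : Finset (Sym2 V)) with hE
  have hsub : (SimpleGraph.fromEdgeSet E).edgeSet ⊆ E := by
    rw [SimpleGraph.edgeSet_fromEdgeSet]; exact Set.sdiff_subset
  refine ⟨SimpleGraph.fromEdgeSet E, ?_, fun A hA => ?_, fun A hA => ?_, ?_⟩
  · intro u v huv
    have hmem : s(u, v) ∈ E := ((SimpleGraph.fromEdgeSet_adj E).1 huv).1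
    rcases hmem with h | h
    · simp only [Set.mem_iUnion] at h
      obtain ⟨A, hA, h⟩ := h
      exact hS A hA h
    · obtain ⟨A, hA, h⟩ := Finset.mem_image.1 (Finset.mem_coe.1 h)
      have h2 : s(b A, y A) ∈ G.edgeSet := hby A hA
      rw [h] at h2
      exact h2
  · intro u v huv
    refine (SimpleGraph.fromEdgeSet_adj E).2 ⟨.inl ?_, huv.ne⟩
    simp only [Set.mem_iUnion]
    exact ⟨A, hA, huv⟩
  · exact (SimpleGraph.fromEdgeSet_adj E).2
      ⟨.inr (Finset.mem_coe.2 (Finset.mem_image.2 ⟨A, hA, rfl⟩)), (hby A hA).ne⟩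
  · refine (Set.ncard_le_ncard hsub (Set.toFinite _)).trans ((Set.ncard_union_le _ _).trans ?_)
    refine add_le_add (Finset.set_ncard_biUnion_le _ _) ?_
    rw [Set.ncard_coe_finset]
    exact Finset.card_image_le

set_option maxHeartbeats 2000000 in
/-- The recursion, by induction on the size of `X`: the trees of the parts of a star decomposition
are glued. -/
lemma exists_goodTree (hω : PosW G ω) (k : ℕ) : ∀ (X : Finset V) (x₀ : V) (R : ℝ), X.card ≤ k →
    x₀ ∈ X → (∀ z ∈ X, (ind G X).Reachable x₀ z) → (∀ z ∈ X, spDist (ind G X) ω x₀ z ≤ R) →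
    (∃ z ∈ X, spDist (ind G X) ω x₀ z = R) → ∃ T, GoodTree G ω X x₀ R T := by
  induction k with
  | zero =>
    intro X x₀ R hk hx₀
    have := Finset.card_pos.2 ⟨_, hx₀⟩
    omega
  | succ k ih =>
    intro X x₀ R hk hx₀ hX hle ⟨w, hw, hwR⟩
    have hωX := hω.mono (ind_le X)
    have hR0 : 0 ≤ R := hwR ▸ spDist_nonneg hωX _ _
    rcases hR0.eq_or_lt with rfl | hR
    · exact ⟨⊥, exists_goodTree_zero hω hx₀ hX hle⟩
    set l := spDist (ind G X) ω x₀ with hl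
    set q := frac X with hq
    have hq0 : 0 < q := frac_pos ⟨_, hx₀⟩
    have hq1 : q ≤ 1 := frac_le_one X
    set ε := q / 100 with hε
    obtain ⟨r₀, X₀, P, par, hr1, hr2, hx₀X₀, hX₀X, hball, hout, hP, hPc, hcut⟩ :=
      exists_star hω hx₀ hX hR (ε := ε) (by positivity) (by linarith)
    have hεR : ε * R ≤ R / 100 := by nlinarith
    have hpart : IsPart X (insert X₀ P) := hP.insert hX₀X
    have hlt : ∀ A ⊆ X, A ≠ X → A.card ≤ k := fun A hA hne => by
      have := Finset.card_lt_card (Finset.ssubset_iff_subset_ne.2 ⟨hA, hne⟩)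
      omega
    have hPsub : ∀ A ∈ P, A ⊆ X \ X₀ := fun A hA => hP.sub hA
    -- the recursive calls
    have hdata : ∀ A, ∃ (a : V) (r : ℝ) (S : SimpleGraph V), A ∈ insert X₀ P →
        a ∈ A ∧ (∀ z ∈ A, (ind G A).Reachable a z) ∧ (∀ z ∈ A, spDist (ind G A) ω a z ≤ r) ∧
        0 ≤ r ∧ r ≤ 4 / 5 * R ∧ GoodTree G ω A a r S ∧ (A = X₀ → a = x₀ ∧ r ≤ r₀) ∧
        (A ∈ P → par a ∈ X₀ ∧ G.Adj (par a) a ∧ l a = l (par a) + ω s(par a, a) ∧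
          r ≤ R - r₀ + ε * R ∧ ∀ z ∈ A, l a + spDist (ind G A) ω a z ≤ l z + ε * R) := by
      intro A
      by_cases hA : A ∈ insert X₀ P
      · rcases Finset.mem_insert.1 hA with rfl | hAP
        · obtain ⟨r, hr, z, hz, hzr⟩ := exists_maxDist (ω := ω) (ind G A) x₀ ⟨_, hx₀X₀⟩
          have hne : A ≠ X := by
            rintro rfl
            have := (hball w hw).2.2
            linarith
          obtain ⟨S, hS⟩ := ih A x₀ r (hlt A hX₀X hne) hx₀X₀ (fun z hz => (hball z hz).1) hr
            ⟨z, hz, hzr⟩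
          have hb := hball z hz
          refine ⟨x₀, r, S, fun _ => ⟨hx₀X₀, fun z hz => (hball z hz).1, hr,
            hzr ▸ spDist_nonneg (hω.mono (ind_le A)) _ _, by linarith, hS,
            fun _ => ⟨rfl, by linarith⟩, fun hAP => ?_⟩⟩
          exact absurd hx₀X₀ (Finset.mem_sdiff.1 (hPsub A hAP hx₀X₀)).2
        · obtain ⟨y, hy, hyB, hadj, hly, hcone⟩ := hPc A hAP
          obtain ⟨r, hr, z, hz, hzr⟩ := exists_maxDist (ω := ω) (ind G A) y ⟨_, hy⟩
          have hne : A ≠ X := by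
            rintro rfl
            exact (Finset.mem_sdiff.1 (hPsub A hAP hx₀)).2 hx₀X₀
          obtain ⟨S, hS⟩ := ih A y r (hlt A (hpart.sub hA) hne) hy (fun z hz => (hcone z hz).1) hr
            ⟨z, hz, hzr⟩
          have h1 := (hcone z hz).2
          have h2 := hout y (hPsub A hAP hy)
          have h3 := hle z (hpart.sub hA hz)
          refine ⟨y, r, S, fun _ => ⟨hy, fun z hz => (hcone z hz).1, hr,
            hzr ▸ spDist_nonneg (hω.mono (ind_le A)) _ _, by linarith, hS, fun hAX => ?_,
            fun _ => ⟨hyB, hadj, hly, by linarith, fun z hz => (hcone z hz).2⟩⟩⟩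
          exact absurd (hAX ▸ hy) (Finset.mem_sdiff.1 (hPsub A hAP hy)).2
      · exact ⟨x₀, 0, ⊥, fun h => absurd h hA⟩
    choose a r S hdata using hdata
    have hX₀mem : X₀ ∈ insert X₀ P := Finset.mem_insert_self _ _
    have hPmem : ∀ A ∈ P, A ∈ insert X₀ P := fun A hA => Finset.mem_insert_of_mem hA
    obtain ⟨ha, hreach, hrad, hr0, hrR, hgood, hX₀prop, -⟩ := hdata X₀ hX₀mem
    obtain ⟨haX₀, hrX₀⟩ := hX₀prop rfl
    rw [haX₀] at hgood
    obtain ⟨T, hTG, hST, hTP, hcard⟩ := exists_glue (G := G) P X₀ S (fun A => par (a A)) a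
      (fun A hA => (hdata A hA).2.2.2.2.2.1.le)
      (fun A hA => ((hdata A (hPmem A hA)).2.2.2.2.2.2.2 hA).2.1)
    have hωT := hω.mono hTG
    have hfr0 : frac X₀ ≤ q := frac_mono hX₀X
    have hfr0' := frac_nonneg X₀
    -- the root stretch
    have hroot₀ : ∀ z ∈ X₀, T.Reachable x₀ z ∧ spDist T ω x₀ z ≤ l z + frac X₀ * r X₀ := by
      intro z hz
      have h1 := spDist_mono hωT (hST X₀ hX₀mem) (hgood.reach z hz)
      have h2 := hgood.dist z hz
      have h3 := (hball z hz).2.1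
      exact ⟨(hgood.reach z hz).mono (hST X₀ hX₀mem), by linarith⟩
    have hroot : ∀ z ∈ X, T.Reachable x₀ z ∧ spDist T ω x₀ z ≤ l z + q * R := by
      intro z hz
      rw [← hpart.2] at hz
      obtain ⟨A, hA, hzA⟩ := Finset.mem_biUnion.1 hz
      rcases Finset.mem_insert.1 hA with rfl | hAP
      · obtain ⟨h1, h2⟩ := hroot₀ z hzA
        refine ⟨h1, h2.trans ?_⟩
        have : frac A * r A ≤ q * R := mul_le_mul hfr0 (by linarith) hr0 hq0.le
        linarith
      · obtain ⟨-, -, -, hrA0, -, hgA, -, hcA⟩ := hdata A hA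
        obtain ⟨hb, hadj, hla, hrA, hslack⟩ := hcA hAP
        obtain ⟨h1, h2⟩ := hroot₀ _ hb
        have hT := hTP A hAP
        have h3 := (hgA.reach z hzA).mono (hST A hA)
        have h4 := spDist_mono hωT (hST A hA) (hgA.reach z hzA)
        have h5 := hgA.dist z hzA
        have h6 := hslack z hzA
        have h7 := spDist_adj hωT hT
        have h8 := spDist_triangle hωT h1 hT.reachable
        have h9 := spDist_triangle hωT (h1.trans hT.reachable) h3
        refine ⟨(h1.trans hT.reachable).trans h3, ?_⟩
        have hfrA : frac A ≤ q := frac_mono (hpart.sub hA)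
        have hfrA' := frac_nonneg A
        have hqR : 0 < q * R := by positivity
        have hεq : ε * R = q * R / 100 := by rw [hε]; ring
        have hqq : q * (ε * R) ≤ q * R / 100 := by nlinarith
        have hr₀0 : 0 ≤ r₀ := by linarith
        -- one of the two parts is at most half of `X`, which makes room for the slack
        have hkey : frac X₀ * r X₀ + frac A * r A + ε * R ≤ q * R := by
          have e1 : frac X₀ * r X₀ ≤ frac X₀ * r₀ := by gcongr
          have e2 : frac A * r A ≤ frac A * (R - r₀ + ε * R) := by gcongr
          have hs : 0 ≤ R - r₀ + ε * R := hrA0.trans hrA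
          rcases frac_disjoint hX₀X (hpart.sub hA)
            (Finset.disjoint_of_subset_right (hPsub A hAP) Finset.disjoint_sdiff) with hf | hf
          · have e3 : frac X₀ * r₀ ≤ 17 / 20 * q * r₀ := by gcongr
            have e4 : frac A * (R - r₀ + ε * R) ≤ q * (R - r₀ + ε * R) := by gcongr
            have e5 : q * (R / 4) ≤ q * r₀ := by gcongr
            nlinarith
          · have e3 : frac X₀ * r₀ ≤ q * r₀ := by gcongr
            have e4 : frac A * (R - r₀ + ε * R) ≤ 17 / 20 * q * (R - r₀ + ε * R) := by gcongr
            have e5 : q * r₀ ≤ q * (3 * R / 4) := by gcongr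
            nlinarith
        linarith
    have hdiam : ∀ x ∈ X, ∀ y ∈ X, spDist T ω x y ≤ 4 * R := by
      intro x hx y hy
      obtain ⟨h1, h2⟩ := hroot x hx
      obtain ⟨h3, h4⟩ := hroot y hy
      have h5 := spDist_triangle hωT h1.symm h3
      rw [spDist_comm x x₀] at h5
      have h6 := hle x hx
      have h7 := hle y hy
      have h8 : q * R ≤ R := by nlinarith
      linarith
    have hdX : ∀ x ∈ X, ∀ y ∈ X, spDist (ind G X) ω x y ≤ 2 * R := by
      intro x hx y hy
      have h5 := spDist_triangle hωX (hX x hx).symm (hX y hy)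
      rw [spDist_comm x x₀] at h5
      have h6 := hle x hx
      have h7 := hle y hy
      linarith
    refine ⟨T, hTG, ?_, fun z hz => (hroot z hz).1, fun z hz => (hroot z hz).2, ?_⟩
    · have hnot : X₀ ∉ P := fun h => (Finset.mem_sdiff.1 (hPsub X₀ h hx₀X₀)).2 hx₀X₀
      have h1 : ∑ A ∈ insert X₀ P, ((S A).edgeSet.ncard + 1) ≤ ∑ A ∈ insert X₀ P, A.card :=
        Finset.sum_le_sum fun A hA => (hdata A hA).2.2.2.2.2.1.card
      have h2 : ∑ A ∈ insert X₀ P, A.card = X.card := by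
        conv_rhs => rw [← hpart.2, Finset.card_biUnion hpart.1]
        rfl
      rw [Finset.sum_add_distrib, Finset.sum_const, Finset.card_insert_of_notMem hnot,
        smul_eq_mul, mul_one, h2] at h1
      omega
    · have hn : 0 < Fintype.card V := Fintype.card_pos_iff.2 ⟨x₀⟩
      have hn' : (0 : ℝ) < Fintype.card V := by exact_mod_cast hn
      have hcard4 : ∀ A : Finset V, (A.card : ℝ) = Fintype.card V * frac A ^ 4 := fun A => by
        rw [frac_pow]; field_simp
      refine budget_step (insert X₀ P) (r := frac) (t := fun A => StarTree.total G ω A (S A))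
        (e := fun A => distSum G ω A / (frac A ^ 2 * r A)) (by norm_num) (by positivity) hq0
        (fun A _ => frac_nonneg A) (fun A hA => frac_mono (hpart.sub hA)) ?_
        (fun A hA => (hdata A hA).2.2.2.2.2.1.total) ?_ ?_
      · have h2 : ∑ A ∈ insert X₀ P, (A.card : ℝ) = X.card := by
          conv_rhs => rw [← hpart.2, Finset.card_biUnion hpart.1]
          push_cast
          rfl
        simp only [hcard4] at h2
        rw [← Finset.mul_sum] at h2
        exact mul_left_cancel₀ hn'.ne' h2
      · have h1 := distSum_le hω hpart hdX fun A hA x hx y hy =>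
          ((hdata A hA).2.1 x hx).symm.trans ((hdata A hA).2.1 y hy)
        have h2 : ∀ A ∈ insert X₀ P, distSum G ω A / (q ^ 2 * R) ≤
            4 / 5 * (distSum G ω A / (frac A ^ 2 * r A)) := by
          intro A hA
          obtain ⟨haA, hreA, hradA, hrA0, hrAR, -⟩ := hdata A hA
          have hωA := hω.mono (ind_le A)
          have hD0 : 0 ≤ distSum G ω A :=
            Finset.sum_nonneg fun x _ => Finset.sum_nonneg fun y _ => spDist_nonneg hωA _ _
          rcases hrA0.eq_or_lt with h0 | h0
          · have hD : distSum G ω A ≤ 0 := by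
              refine Finset.sum_nonpos fun x hx => Finset.sum_nonpos fun y hy => ?_
              have h5 := spDist_triangle hωA (hreA x hx).symm (hreA y hy)
              rw [spDist_comm x (a A)] at h5
              have := hradA x hx
              have := hradA y hy
              linarith
            rw [le_antisymm hD hD0]
            simp
          · have hfA : 0 < frac A := frac_pos ⟨_, haA⟩
            have hfq : frac A ≤ q := frac_mono (hpart.sub hA)
            rw [mul_div_assoc', div_le_div_iff₀ (by positivity) (by positivity)]
            have h6 : frac A ^ 2 * r A ≤ q ^ 2 * (4 / 5 * R) := by gcongr
            calc distSum G ω A * (frac A ^ 2 * r A) ≤ distSum G ω A * (q ^ 2 * (4 / 5 * R)) := by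
                  gcongr
              _ = _ := by ring
        calc distSum G ω X / (q ^ 2 * R)
            ≤ (∑ A ∈ insert X₀ P, distSum G ω A + 2 * R * ((X.card : ℝ) ^ 2 -
              ∑ A ∈ insert X₀ P, (A.card : ℝ) ^ 2)) / (q ^ 2 * R) := by gcongr
          _ = ∑ A ∈ insert X₀ P, distSum G ω A / (q ^ 2 * R) + 2 * (Fintype.card V : ℝ) ^ 2 *
              (q ^ 8 - ∑ A ∈ insert X₀ P, frac A ^ 8) / q ^ 2 := by
              simp only [hcard4, mul_pow, ← pow_mul]
              rw [← Finset.mul_sum, ← Finset.sum_div, add_div, ← hq]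
              congr 1
              field_simp
          _ ≤ _ := by
              rw [Finset.mul_sum]
              exact add_le_add_left (Finset.sum_le_sum h2) _
      · -- with `ε = q / 100`, the cut pairs cost `4 R * 30000 / ε ^ 2 = 1200000000 * R / q ^ 2`
        -- times `distSum G ω X / R ^ 2`
        have h1 := total_le hω hTG hST (X := X) (P := insert X₀ P) (fun A hA x hx y hy =>
          ((hdata A hA).2.2.2.2.2.1.reach x hx).symm.trans
            ((hdata A hA).2.2.2.2.2.1.reach y hy)) hdiam
        have h2 : 4 * R * cutCost G ω X (insert X₀ P) ≤
            1200000000 * (distSum G ω X / (q ^ 2 * R)) := by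
          calc _ ≤ 4 * R * (30000 / ε ^ 2 * distSum G ω X / R ^ 2) := by gcongr
            _ = _ := by rw [hε]; field_simp; ring
        linarith

end Main
end StarTree

/-- There is a universal constant `C` such that every finite
connected weighted graph on `n ≥ 2` vertices (positive edge weights) contains a
spanning tree `T` with average distortion at most `C`.  The sum runs over all
ordered pairs, normalized by `n(n−1)`; diagonal terms contribute `0/0 = 0`, so
this equals `(1/N)·Σ_{unordered pairs} d_T(u,v)/d_G(u,v)` with `N = n(n−1)/2`. -/
theorem spanning_tree_constant_average_distortion :
    ∃ C : ℝ, ∀ (V : Type) [Fintype V] (G : SimpleGraph V),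
      G.Connected → 2 ≤ Fintype.card V →
      ∀ ω : Sym2 V → ℝ, (∀ e ∈ G.edgeSet, 0 < ω e) →
      ∃ T : SimpleGraph V, T ≤ G ∧ T.IsTree ∧
        (∑ p : V × V, spDist T ω p.1 p.2 / spDist G ω p.1 p.2) /
            ((Fintype.card V : ℝ) * ((Fintype.card V : ℝ) - 1)) ≤ C := by
  -- the budget is `20 * 1200000000 * n ^ 2`, and `n ^ 2 ≤ 2 * n * (n - 1)`
  refine ⟨40 * 1200000000, fun V _ G hG hn ω hω => ?_⟩
  have hpos : StarTree.PosW G ω := hω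
  obtain ⟨x₀⟩ := hG.nonempty
  obtain ⟨R, hR, hR'⟩ := StarTree.exists_maxDist (ω := ω) (StarTree.ind G Finset.univ)
    (A := Finset.univ) x₀ ⟨x₀, Finset.mem_univ _⟩
  obtain ⟨T, hT⟩ := StarTree.exists_goodTree hpos _ Finset.univ x₀ R le_rfl (Finset.mem_univ _)
    (fun z _ => by rw [StarTree.ind_univ]; exact hG.preconnected x₀ z) hR hR'
  have hconn : T.Connected := by
    have : Nonempty V := ⟨x₀⟩
    exact ⟨fun u v => (hT.reach u (Finset.mem_univ _)).symm.trans (hT.reach v (Finset.mem_univ _))⟩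
  have hcard := hT.card
  have hcard' := hconn.card_vert_le_card_edgeSet_add_one
  rw [Finset.card_univ, ← Nat.card_eq_fintype_card] at hcard
  refine ⟨T, hT.le, SimpleGraph.isTree_iff_connected_and_card.2 ⟨hconn, le_antisymm hcard hcard'⟩, ?_⟩
  have htot := hT.total
  have hfrac : StarTree.frac (Finset.univ : Finset V) ≤ 1 := StarTree.frac_le_one _
  have hfrac0 := StarTree.frac_nonneg (Finset.univ : Finset V)
  have hn2 : (2 : ℝ) ≤ Fintype.card V := by exact_mod_cast hn
  have hR0 : 0 ≤ R := by
    obtain ⟨z, -, rfl⟩ := hR'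
    exact StarTree.spDist_nonneg (hpos.mono (StarTree.ind_le _)) _ _
  have hE : 0 ≤ StarTree.distSum G ω Finset.univ / (StarTree.frac (Finset.univ : Finset V) ^ 2 * R) :=
    div_nonneg (Finset.sum_nonneg fun x _ => Finset.sum_nonneg fun y _ =>
      StarTree.spDist_nonneg (hpos.mono (StarTree.ind_le _)) _ _) (by positivity)
  have hsum : StarTree.total G ω Finset.univ T =
      ∑ p : V × V, spDist T ω p.1 p.2 / spDist G ω p.1 p.2 := by
    refine Finset.sum_congr rfl fun p _ => if_pos ⟨Finset.mem_univ _, Finset.mem_univ _, ?_, ?_⟩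
    · rw [StarTree.ind_univ]; exact hG.preconnected _ _
    · rw [StarTree.ind_univ]
  have hf6 : 20 * 1200000000 * (Fintype.card V : ℝ) ^ 2 * StarTree.frac (Finset.univ : Finset V) ^ 6 ≤
      20 * 1200000000 * (Fintype.card V : ℝ) ^ 2 * 1 := by
    gcongr
    exact pow_le_one₀ hfrac0 hfrac
  rw [hsum] at htot
  rw [div_le_iff₀ (mul_pos (by linarith) (by linarith))]
  nlinarith
end

section
/- There is a universal constant C such that every finite connected simple graph G on n ≥ 2 vertices with positive edge weights contains a spanning tree T whose ℓ₂-distortion satisfies ((1/N)·Σ_{unordered pairs {u,v}} (d_T(u,v)/d_G(u,v))²)^{1/2} ≤ C·√(1 + log n), where N = n(n−1)/2. -/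
/-! ### Weighted distances -/

/-- The total `w`-weight of a walk. -/
def wlen {V : Type} {H : SimpleGraph V} (w : Sym2 V → ℝ) {u v : V} (p : H.Walk u v) : ℝ :=
  (p.edges.map w).sum

section Dist

variable {V : Type} {H : SimpleGraph V} {w : Sym2 V → ℝ}

lemma wlen_nil (u : V) : wlen w (SimpleGraph.Walk.nil : H.Walk u u) = 0 := by
  simp [wlen]

lemma wlen_cons {u v x : V} (h : H.Adj u v) (p : H.Walk v x) :
    wlen w (SimpleGraph.Walk.cons h p) = w s(u, v) + wlen w p := by
  simp [wlen]

lemma wlen_append {u v x : V} (p : H.Walk u v) (q : H.Walk v x) :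
    wlen w (p.append q) = wlen w p + wlen w q := by
  simp [wlen]

lemma wlen_reverse {u v : V} (p : H.Walk u v) : wlen w p.reverse = wlen w p := by
  simp [wlen, List.sum_reverse]

lemma wlen_nonneg (hw : ∀ e ∈ H.edgeSet, 0 < w e) {u v : V} (p : H.Walk u v) :
    0 ≤ wlen w p := by
  apply List.sum_nonneg
  intro x hx
  obtain ⟨e, he, rfl⟩ := List.mem_map.1 hx
  exact (hw e (p.edges_subset_edgeSet he)).le

lemma wlen_le_mul {w w' : Sym2 V → ℝ} {c : ℝ} {u v : V} (p : H.Walk u v)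
    (h : ∀ e ∈ p.edges, w e ≤ c * w' e) : wlen w p ≤ c * wlen w' p := by
  unfold wlen
  rw [← List.sum_map_mul_left]
  exact List.sum_le_sum h

lemma wlen_mono {w w' : Sym2 V → ℝ} {u v : V} (p : H.Walk u v)
    (h : ∀ e ∈ p.edges, w e ≤ w' e) : wlen w p ≤ wlen w' p :=
  List.sum_le_sum h

lemma wlen_transfer {u v : V} {H' : SimpleGraph V} (p : H.Walk u v) (h) :
    wlen w (p.transfer H' h) = wlen w p := by
  simp [wlen]

lemma spDist_le (hw : ∀ e ∈ H.edgeSet, 0 < w e) {u v : V} (p : H.Walk u v) :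
    spDist H w u v ≤ wlen w p := by
  refine csInf_le ⟨0, ?_⟩ ⟨p, rfl⟩
  rintro x ⟨q, rfl⟩
  exact wlen_nonneg hw q

/-- In a finite graph the infimum defining the distance is attained, since it may be taken over
the finitely many paths. -/
lemma exists_geod [Finite V] (hw : ∀ e ∈ H.edgeSet, 0 < w e) {u v : V} (h : H.Reachable u v) :
    ∃ p : H.Walk u v, wlen w p = spDist H w u v := by
  classical
  have := Fintype.ofFinite V
  obtain ⟨p0⟩ := h
  have : Nonempty (H.Path u v) := ⟨p0.toPath⟩
  obtain ⟨p, hp⟩ := Finite.exists_min (fun p : H.Path u v => wlen w p.1)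
  refine ⟨p.1, le_antisymm ?_ (spDist_le hw _)⟩
  refine le_csInf ⟨_, p0, rfl⟩ ?_
  rintro x ⟨q, rfl⟩
  refine (hp q.toPath).trans ?_
  refine List.Sublist.sum_le_sum (q.edges_bypass_sublist_edges.map w) ?_
  intro x hx
  obtain ⟨e, he, rfl⟩ := List.mem_map.1 hx
  exact (hw e (q.edges_subset_edgeSet he)).le

lemma le_spDist {u v : V} (h : H.Reachable u v) {c : ℝ}
    (hc : ∀ p : H.Walk u v, c ≤ wlen w p) : c ≤ spDist H w u v := by
  obtain ⟨p0⟩ := h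
  refine le_csInf ⟨_, p0, rfl⟩ ?_
  rintro x ⟨q, rfl⟩
  exact hc q

lemma spDist_nonneg (hw : ∀ e ∈ H.edgeSet, 0 < w e) (u v : V) : 0 ≤ spDist H w u v := by
  apply Real.sInf_nonneg
  rintro x ⟨q, rfl⟩
  exact wlen_nonneg hw q

lemma spDist_self (hw : ∀ e ∈ H.edgeSet, 0 < w e) (u : V) : spDist H w u u = 0 :=
  le_antisymm ((spDist_le hw SimpleGraph.Walk.nil).trans (wlen_nil u).le) (spDist_nonneg hw u u)

lemma spDist_comm (u v : V) : spDist H w u v = spDist H w v u := by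
  unfold spDist
  congr 1
  ext x
  constructor
  · rintro ⟨p, rfl⟩
    exact ⟨p.reverse, (wlen_reverse p).symm⟩
  · rintro ⟨p, rfl⟩
    exact ⟨p.reverse, (wlen_reverse p).symm⟩

lemma spDist_triangle [Finite V] (hw : ∀ e ∈ H.edgeSet, 0 < w e) {u v x : V}
    (h1 : H.Reachable u v) (h2 : H.Reachable v x) :
    spDist H w u x ≤ spDist H w u v + spDist H w v x := by
  obtain ⟨p, hp⟩ := exists_geod hw h1
  obtain ⟨q, hq⟩ := exists_geod hw h2
  rw [← hp, ← hq, ← wlen_append]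
  exact spDist_le hw _

lemma spDist_pos [Finite V] (hw : ∀ e ∈ H.edgeSet, 0 < w e) {u v : V} (h : H.Reachable u v)
    (huv : u ≠ v) : 0 < spDist H w u v := by
  obtain ⟨p, hp⟩ := exists_geod hw h
  rw [← hp]
  cases p with
  | nil => exact absurd rfl huv
  | cons h p =>
    rw [wlen_cons]
    have := hw _ (H.mem_edgeSet.2 h)
    have := wlen_nonneg hw p
    linarith

/-- Both pieces of a geodesic are geodesics. -/
lemma geod_split [Finite V] (hw : ∀ e ∈ H.edgeSet, 0 < w e) {u v x : V} (p : H.Walk u v)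
    (q : H.Walk v x) (h : wlen w (p.append q) = spDist H w u x) :
    wlen w p = spDist H w u v ∧ wlen w q = spDist H w v x := by
  have h1 := spDist_le hw p
  have h2 := spDist_le hw q
  have h3 := spDist_triangle hw p.reachable q.reachable
  rw [wlen_append] at h
  constructor <;> linarith

lemma geod_support [Finite V] (hw : ∀ e ∈ H.edgeSet, 0 < w e) {u v y : V} (p : H.Walk u v)
    (h : wlen w p = spDist H w u v) (hy : y ∈ p.support) :
    spDist H w u y + spDist H w y v = spDist H w u v := by
  obtain ⟨q, r, rfl⟩ := SimpleGraph.Walk.mem_support_iff_exists_append.1 hy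
  obtain ⟨h1, h2⟩ := geod_split hw q r h
  rw [← h1, ← h2, ← wlen_append, h]

/-- A walk that starts outside a set and ends inside it splits at the first edge that enters it. -/
lemma exists_entry {u v : V} (p : H.Walk u v) (A : Set V) (hu : u ∉ A) (hv : v ∈ A) :
    ∃ (y z : V) (q : H.Walk u y) (e : H.Adj y z) (r : H.Walk z v),
      p = q.append (SimpleGraph.Walk.cons e r) ∧ (∀ a ∈ q.support, a ∉ A) ∧ z ∈ A := by
  induction p with
  | nil => exact absurd hv hu
  | @cons a b c h p ih =>
    by_cases hb : b ∈ A
    · exact ⟨a, b, SimpleGraph.Walk.nil, h, p, rfl, by simpa using hu, hb⟩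
    · obtain ⟨y, z, q, e, r, rfl, h1, h2⟩ := ih hb hv
      refine ⟨y, z, SimpleGraph.Walk.cons h q, e, r, rfl, ?_, h2⟩
      intro x hx
      rw [SimpleGraph.Walk.support_cons, List.mem_cons] at hx
      rcases hx with rfl | hx
      · exact hu
      · exact h1 x hx

end Dist

/-! ### Clusters -/

/-- The edges of `G` with both ends in `X`, as a graph on all of `V` (vertices outside `X` are
isolated). -/
def within {V : Type} (G : SimpleGraph V) (X : Finset V) : SimpleGraph V where
  Adj u v := G.Adj u v ∧ u ∈ X ∧ v ∈ X
  symm := ⟨fun _ _ h => ⟨h.1.symm, h.2.2, h.2.1⟩⟩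
  loopless := ⟨fun _ h => h.1.ne rfl⟩

section Cluster

variable {V : Type} {G : SimpleGraph V} {X : Finset V} {w : Sym2 V → ℝ}

lemma within_mono {A : Finset V} (h : A ⊆ X) : within G A ≤ within G X :=
  fun _ _ e => ⟨e.1, h e.2.1, h e.2.2⟩

lemma within_support {u v y : V} (p : (within G X).Walk u v) (hu : u ∈ X)
    (hy : y ∈ p.support) : y ∈ X := by
  induction p with
  | nil => simpa using (by simpa using hy : y = _) ▸ hu
  | cons h p ih =>
    rw [SimpleGraph.Walk.support_cons, List.mem_cons] at hy
    rcases hy with rfl | hy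
    · exact hu
    · exact ih h.2.2 hy

/-- A walk all of whose vertices lie in `A` is a walk of the cluster `A`. -/
lemma exists_within {A : Finset V} {u v : V} (p : (within G X).Walk u v)
    (h : ∀ a ∈ p.support, a ∈ A) :
    ∃ q : (within G A).Walk u v, q.edges = p.edges ∧ q.support = p.support := by
  have h' : ∀ e ∈ p.edges, e ∈ (within G A).edgeSet := by
    intro e he
    induction e with
    | _ a b =>
      exact ⟨((p.edges_subset_edgeSet he) : (within G X).Adj a b).1,
        h _ (p.fst_mem_support_of_mem_edges he), h _ (p.snd_mem_support_of_mem_edges he)⟩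
  exact ⟨p.transfer _ h', p.edges_transfer h', p.support_transfer h'⟩

lemma wlen_congr {H H' : SimpleGraph V} {u v a b : V} {p : H.Walk u v} {q : H'.Walk a b}
    (h : p.edges = q.edges) : wlen w p = wlen w q := by
  simp [wlen, h]

lemma exists_mapLe {H H' : SimpleGraph V} (h : H ≤ H') {u v : V} (p : H.Walk u v) :
    ∃ q : H'.Walk u v, q.edges = p.edges ∧ q.support = p.support :=
  ⟨p.mapLe h, by simp, by simp⟩

lemma spDist_mono_graph [Finite V] {H H' : SimpleGraph V} (h : H ≤ H')
    (hw : ∀ e ∈ H'.edgeSet, 0 < w e) {u v : V} (hr : H.Reachable u v) :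
    spDist H' w u v ≤ spDist H w u v := by
  refine le_spDist hr fun p => ?_
  obtain ⟨q, hq, -⟩ := exists_mapLe h p
  exact (spDist_le hw q).trans (wlen_congr hq).le

end Cluster

/-! ### Choosing the radius of a cut -/

section Radius

open Finset

open Classical in
/-- One-sided discrete maximal inequality, in the manner of the rising sun lemma. -/
lemma rising_right (F : ℕ → ℝ) (hF : Monotone F) (c : ℝ) (M : ℕ) :
    ∀ m i : ℕ, i ≤ M → M - i = m →
      c * (((Ico i M).filter fun a : ℕ =>
          ∃ j : ℕ, a < j ∧ j ≤ M ∧ c * ((j : ℝ) - a) < F j - F a).card : ℝ)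
        ≤ F M - F i := by
  intro m
  induction m using Nat.strong_induction_on with
  | _ m ih =>
    intro i hi hm
    rcases hi.eq_or_lt with rfl | hlt
    · simp
    by_cases hb : ∃ j, i < j ∧ j ≤ M ∧ c * ((j : ℝ) - i) < F j - F i
    · obtain ⟨j, hij, hjM, hj⟩ := hb
      have h1 := ih (M - j) (by omega) j hjM rfl
      rcases le_or_gt c 0 with hc | hc
      · exact (mul_nonpos_of_nonpos_of_nonneg hc (Nat.cast_nonneg _)).trans
          (sub_nonneg.2 (hF hi))
      have h2 : ((Ico i M).filter fun a : ℕ =>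
          ∃ j : ℕ, a < j ∧ j ≤ M ∧ c * ((j : ℝ) - a) < F j - F a).card
          ≤ (Ico i j).card +
          ((Ico j M).filter fun a : ℕ =>
          ∃ j : ℕ, a < j ∧ j ≤ M ∧ c * ((j : ℝ) - a) < F j - F a).card := by
        refine (card_le_card ?_).trans (card_union_le _ _)
        intro a ha
        simp only [mem_filter, mem_union, mem_Ico] at ha ⊢
        by_cases haj : a < j
        · exact Or.inl ⟨ha.1.1, haj⟩
        · exact Or.inr ⟨⟨by omega, ha.1.2⟩, ha.2⟩
      rw [Nat.card_Ico] at h2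
      have h3 := mul_le_mul_of_nonneg_left (Nat.cast_le (α := ℝ).2 h2) hc.le
      rw [Nat.cast_add, Nat.cast_sub hij.le] at h3
      linarith
    · have h1 := ih (M - (i + 1)) (by omega) (i + 1) hlt rfl
      have h2 : ((Ico i M).filter fun a : ℕ => ∃ j : ℕ, a < j ∧ j ≤ M ∧ c * ((j : ℝ) - a) < F j - F a) =
          ((Ico (i + 1) M).filter fun a : ℕ => ∃ j : ℕ, a < j ∧ j ≤ M ∧ c * ((j : ℝ) - a) < F j - F a) := by
        ext a
        simp only [mem_filter, mem_Ico]
        constructor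
        · rintro ⟨⟨h3, h4⟩, h5⟩
          refine ⟨⟨?_, h4⟩, h5⟩
          rcases h3.eq_or_lt with rfl | h3
          · exact absurd h5 hb
          · exact h3
        · rintro ⟨⟨h3, h4⟩, h5⟩
          exact ⟨⟨by omega, h4⟩, h5⟩
      rw [h2]
      have := hF (Nat.le_succ i)
      simp only [Nat.succ_eq_add_one] at this
      linarith

open Classical in
/-- The mirror image of `rising_right`. -/
lemma rising_left (F : ℕ → ℝ) (hF : Monotone F) (c : ℝ) (hc : 0 < c) (i : ℕ) :
      c * (((Ioc 0 i).filter fun a : ℕ =>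
          ∃ j : ℕ, j < a ∧ c * ((a : ℝ) - j) < F a - F j).card : ℝ)
        ≤ F i - F 0 := by
  induction i using Nat.strong_induction_on with
  | _ i ih =>
    rcases Nat.eq_zero_or_pos i with rfl | hi
    · simp
    by_cases hb : ∃ j, j < i ∧ c * ((i : ℝ) - j) < F i - F j
    · obtain ⟨j, hij, hj⟩ := hb
      have h1 := ih j hij
      have h2 : ((Ioc 0 i).filter fun a : ℕ =>
          ∃ j : ℕ, j < a ∧ c * ((a : ℝ) - j) < F a - F j).card
          ≤ (Ioc j i).card +
          ((Ioc 0 j).filter fun a : ℕ =>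
          ∃ j : ℕ, j < a ∧ c * ((a : ℝ) - j) < F a - F j).card := by
        refine (card_le_card ?_).trans (card_union_le _ _)
        intro a ha
        simp only [mem_filter, mem_union, mem_Ioc] at ha ⊢
        by_cases haj : j < a
        · exact Or.inl ⟨haj, ha.1.2⟩
        · exact Or.inr ⟨⟨ha.1.1, by omega⟩, ha.2⟩
      rw [Nat.card_Ioc] at h2
      have h3 := mul_le_mul_of_nonneg_left (Nat.cast_le (α := ℝ).2 h2) hc.le
      rw [Nat.cast_add, Nat.cast_sub hij.le] at h3
      linarith
    · have h1 := ih (i - 1) (by omega)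
      have h2 : ((Ioc 0 i).filter fun a : ℕ => ∃ j : ℕ, j < a ∧ c * ((a : ℝ) - j) < F a - F j) =
          ((Ioc 0 (i - 1)).filter fun a : ℕ => ∃ j : ℕ, j < a ∧ c * ((a : ℝ) - j) < F a - F j) := by
        ext a
        simp only [mem_filter, mem_Ioc]
        constructor
        · rintro ⟨⟨h3, h4⟩, h5⟩
          refine ⟨⟨h3, ?_⟩, h5⟩
          rcases h4.eq_or_lt with rfl | h4
          · exact absurd h5 hb
          · omega
        · rintro ⟨⟨h3, h4⟩, h5⟩
          exact ⟨⟨h3, by omega⟩, h5⟩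
      rw [h2]
      have := hF (Nat.sub_le i 1)
      linarith

open Classical in
/-- A monotone sequence with values in `[0, 1]` has an index near which it grows at most
linearly at every scale. -/
lemma exists_good_index (F : ℕ → ℝ) (hF : Monotone F) (h0 : ∀ i, 0 ≤ F i) (h1 : ∀ i, F i ≤ 1)
    (N : ℕ) (hN : 1 ≤ N) :
    ∃ i, 1 ≤ i ∧ i ≤ N ∧ (∀ j, i ≤ j → F j - F i ≤ 3 / N * ((j : ℝ) - i)) ∧
      (∀ j, j ≤ i → F i - F j ≤ 3 / N * ((i : ℝ) - j)) := by
  have hN0 : (0 : ℝ) < N := by exact_mod_cast hN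
  set c : ℝ := 3 / N with hcdef
  have hc : 0 < c := by positivity
  by_contra hcon
  push Not at hcon
  have hR := rising_right F hF c (2 * N) _ 0 (by omega) rfl
  have hL := rising_left F hF c hc N
  set E1 := ((Ico 0 (2 * N)).filter fun a : ℕ => ∃ j : ℕ, a < j ∧ j ≤ 2 * N ∧ c * ((j : ℝ) - a) < F j - F a)
  set E2 := ((Ioc 0 N).filter fun a : ℕ => ∃ j : ℕ, j < a ∧ c * ((a : ℝ) - j) < F a - F j)
  have hsub : Ioc 0 N ⊆ E1 ∪ E2 := by
    intro i hi
    rw [mem_Ioc] at hi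
    rw [mem_union]
    by_cases hE : ∃ j, i ≤ j ∧ c * ((j : ℝ) - i) < F j - F i
    · left
      obtain ⟨j, hij, hj⟩ := hE
      have hne : i ≠ j := by
        rintro rfl
        simp at hj
      have hj2 : j ≤ 2 * N := by
        by_contra hj2
        push Not at hj2
        -- beyond `2 * N` the linear bound exceeds the total variation
        have h5 : (N : ℝ) ≤ (j : ℝ) - i := by
          have : N + i ≤ j := by omega
          have : (N : ℝ) + i ≤ j := by exact_mod_cast this
          linarith
        have h6 : c * N ≤ c * ((j : ℝ) - i) := mul_le_mul_of_nonneg_left h5 hc.le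
        have h7 : c * N = 3 := by
          rw [hcdef]; field_simp
        have := h1 j
        have := h0 i
        linarith
      exact mem_filter.2 ⟨mem_Ico.2 ⟨Nat.zero_le _, by omega⟩, j, by omega, hj2, hj⟩
    · right
      push Not at hE
      obtain ⟨j, hj, hj'⟩ := hcon i hi.1 hi.2 hE
      refine mem_filter.2 ⟨mem_Ioc.2 hi, j, ?_, hj'⟩
      rcases hj.eq_or_lt with rfl | h
      · simp at hj'
      · exact h
  have hcard := (card_le_card hsub).trans (card_union_le _ _)
  rw [Nat.card_Ioc, Nat.sub_zero] at hcard
  have hcard' : (N : ℝ) ≤ (E1.card : ℝ) + E2.card := by exact_mod_cast hcard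
  have h3 := mul_le_mul_of_nonneg_left hcard' hc.le
  have h7 : c * N = 3 := by
    rw [hcdef]; field_simp
  have := h1 (2 * N)
  have := h1 N
  have := h0 0
  linarith

open Classical in
/-- The points of `X` within distance `θ` of a point on the other side of the cut `A`. -/
noncomputable def nearCut {V : Type} (X A : Finset V) (d : V → V → ℝ) (θ : ℝ) : Finset V :=
  X.filter fun u => ∃ x ∈ X, d u x ≤ θ ∧ ¬ (u ∈ A ↔ x ∈ A)

open Classical in
/-- The cut `A` of `X` is cheap at the scale where distances `θ` are an `s`-fraction of the size
of `X`: either few pairs have both points close to the cut, compared with the number of separated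
pairs, or each point close to the cut has few points of `X` nearby. -/
def CheapCut {V : Type} (X A : Finset V) (d : V → V → ℝ) (θ s : ℝ) : Prop :=
  ((nearCut X A d θ).card : ℝ) ^ 2 ≤ 288 * s ^ 2 * (A.card * (X \ A).card) ∨
    ∀ u ∈ nearCut X A d θ, ((X.filter fun v => d u v ≤ θ).card : ℝ) ≤ 288 * s ^ 2 * X.card

open Classical in
/-- The square root of the relative size of the sets in the family is a bounded monotone sequence,
and at an index where it grows at most linearly the cut is cheap at all scales. -/
lemma exists_cheap {V : Type} (X : Finset V) (S : ℕ → Finset V) (d : V → V → ℝ) (τ : ℝ) (N : ℕ)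
    (hN : 1 ≤ N) (hS0 : S 0 = ∅) (hmono : Monotone S) (hSX : ∀ i, S i ⊆ X)
    (hhalf : 2 * (S N).card ≤ X.card) (hd : ∀ u v, d u v = d v u)
    (hlip : ∀ (i k : ℕ) (u v : V), u ∈ S i → v ∈ X → d u v ≤ (k : ℝ) * τ → v ∈ S (i + k)) :
    ∃ i, 1 ≤ i ∧ i ≤ N ∧ ∀ k : ℕ, 1 ≤ k → CheapCut X (S i) d (k * τ) (k / N) := by
  have hN0 : (0 : ℝ) < N := by exact_mod_cast hN
  rcases X.eq_empty_or_nonempty with rfl | hX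
  · refine ⟨1, le_rfl, hN, fun k hk => Or.inr ?_⟩
    intro u hu
    simp [nearCut] at hu
  have hm : (0 : ℝ) < X.card := by exact_mod_cast hX.card_pos
  obtain ⟨m, hmdef⟩ : ∃ m : ℝ, m = X.card := ⟨_, rfl⟩
  rw [← hmdef] at hm
  obtain ⟨F, hFdef⟩ : ∃ F : ℕ → ℝ, F = fun i => √((S i).card / m) := ⟨_, rfl⟩
  have hF2 : ∀ i, ((S i).card : ℝ) = m * F i ^ 2 := by
    intro i
    simp only [hFdef]
    rw [Real.sq_sqrt (by positivity)]
    field_simp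
  have hF0 : ∀ i, 0 ≤ F i := by
    intro i
    rw [hFdef]
    exact Real.sqrt_nonneg _
  have hFm : Monotone F := by
    intro i j hij
    rw [hFdef]
    apply Real.sqrt_le_sqrt
    have : ((S i).card : ℝ) ≤ (S j).card := by exact_mod_cast card_le_card (hmono hij)
    gcongr
  have hF1 : ∀ i, F i ≤ 1 := by
    intro i
    rw [hFdef]
    apply Real.sqrt_le_one.2
    rw [div_le_one hm, hmdef]
    exact_mod_cast card_le_card (hSX i)
  obtain ⟨i, hi1, hiN, hup, hdown⟩ := exists_good_index F hFm hF0 hF1 N hN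
  refine ⟨i, hi1, hiN, fun k hk => ?_⟩
  obtain ⟨x, hx⟩ : ∃ x : ℝ, x = 3 * (k / N) := ⟨_, rfl⟩
  have hk0 : (0 : ℝ) < k := by exact_mod_cast hk
  have hx0 : 0 < x := by rw [hx]; positivity
  have hFup : ∀ l : ℕ, F (i + l) ≤ F i + 3 * (l / N) := by
    intro l
    have := hup (i + l) (by omega)
    rw [Nat.cast_add, add_sub_cancel_left] at this
    have e : 3 / (N : ℝ) * l = 3 * (l / N) := by ring
    linarith
  have hcr : nearCut X (S i) d (k * τ) ⊆ S (i + k) := by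
    intro u hu
    obtain ⟨huX, v, hvX, hd', hne⟩ := mem_filter.1 hu
    by_cases hui : u ∈ S i
    · exact hmono (Nat.le_add_right i k) hui
    · have hvi : v ∈ S i := by tauto
      exact hlip i k v u hvi huX (hd u v ▸ hd')
  rcases le_or_gt x (F i) with hcase | hcase
  · left
    have hki : k ≤ i := by
      have h := hdown 0 (Nat.zero_le _)
      have h00 : F 0 = 0 := by simp [hFdef, hS0]
      rw [h00, Nat.cast_zero, sub_zero, sub_zero] at h
      have h2 : 3 * ((k : ℝ) / N) ≤ 3 * (i / N) := by
        have e : 3 / (N : ℝ) * i = 3 * (i / N) := by ring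
        linarith
      have h3 : (k : ℝ) / N ≤ i / N := by linarith
      rw [div_le_div_iff_of_pos_right hN0] at h3
      exact_mod_cast h3
    have hcr2 : nearCut X (S i) d (k * τ) ⊆ S (i + k) \ S (i - k) := by
      intro u hu
      refine mem_sdiff.2 ⟨hcr hu, fun hu2 => ?_⟩
      obtain ⟨huX, v, hvX, hd', hne⟩ := mem_filter.1 hu
      apply hne
      have h3 : v ∈ S i := by
        have := hlip (i - k) k u v hu2 hvX hd'
        rwa [Nat.sub_add_cancel hki] at this
      exact ⟨fun _ => h3, fun _ => hmono (Nat.sub_le i k) hu2⟩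
    have h4 : (S (i - k)).card + (nearCut X (S i) d (k * τ)).card ≤ (S (i + k)).card := by
      have h5 := card_le_card hcr2
      rw [card_sdiff_of_subset (hmono (by omega))] at h5
      have := card_le_card (hmono (show i - k ≤ i + k by omega))
      omega
    have h4' : ((S (i - k)).card : ℝ) + (nearCut X (S i) d (k * τ)).card ≤ (S (i + k)).card := by
      exact_mod_cast h4
    rw [hF2, hF2 (i + k)] at h4'
    have hdn : F i - x ≤ F (i - k) := by
      have := hdown (i - k) (Nat.sub_le i k)
      rw [Nat.cast_sub hki] at this
      have e : 3 / (N : ℝ) * (i - (i - k)) = x := by rw [hx]; ring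
      linarith
    have hup' := hFup k
    rw [← hx] at hup'
    have h6 : ((nearCut X (S i) d (k * τ)).card : ℝ) ≤ 4 * m * F i * x := by
      have h7 : F (i + k) ^ 2 ≤ (F i + x) ^ 2 := by
        have := hF0 (i + k)
        gcongr
      have h8 : (F i - x) ^ 2 ≤ F (i - k) ^ 2 := by
        have : 0 ≤ F i - x := by linarith
        gcongr
      have h9 : m * (F (i + k) ^ 2 - F (i - k) ^ 2) ≤ m * ((F i + x) ^ 2 - (F i - x) ^ 2) :=
        mul_le_mul_of_nonneg_left (by linarith) hm.le
      have e : m * ((F i + x) ^ 2 - (F i - x) ^ 2) = 4 * m * F i * x := by ring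
      linarith
    have h10 : m ≤ 2 * ((X \ S i).card : ℝ) := by
      have h11 := card_le_card (hmono hiN)
      have h12 := card_sdiff_add_card_eq_card (hSX i)
      have : X.card ≤ 2 * (X \ S i).card := by omega
      rw [hmdef]
      exact_mod_cast this
    calc ((nearCut X (S i) d (k * τ)).card : ℝ) ^ 2 ≤ (4 * m * F i * x) ^ 2 :=
          pow_le_pow_left₀ (Nat.cast_nonneg _) h6 2
      _ = 16 * x ^ 2 * ((m * F i ^ 2) * m) := by ring
      _ = 16 * x ^ 2 * ((S i).card * m) := by rw [← hF2]
      _ ≤ 16 * x ^ 2 * ((S i).card * (2 * ((X \ S i).card : ℝ))) :=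
          mul_le_mul_of_nonneg_left (mul_le_mul_of_nonneg_left h10 (Nat.cast_nonneg _))
            (mul_nonneg (by norm_num) (sq_nonneg x))
      _ = 288 * (k / N : ℝ) ^ 2 * ((S i).card * (X \ S i).card) := by rw [hx]; ring
  · right
    intro u hu
    have hsub : (X.filter fun v => d u v ≤ k * τ) ⊆ S (i + (k + k)) := by
      intro v hv
      rw [mem_filter] at hv
      rw [← add_assoc]
      exact hlip _ k u v (hcr hu) hv.1 hv.2
    have h1 : ((X.filter fun v => d u v ≤ k * τ).card : ℝ) ≤ (S (i + (k + k))).card := by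
      exact_mod_cast card_le_card hsub
    have h2 := hFup (k + k)
    have e : 3 * (((k + k : ℕ) : ℝ) / N) = 2 * x := by rw [hx]; push_cast; ring
    rw [e] at h2
    have h3 : F (i + (k + k)) ≤ 3 * x := by linarith
    calc ((X.filter fun v => d u v ≤ k * τ).card : ℝ) ≤ m * F (i + (k + k)) ^ 2 := by
          rw [← hF2]; exact h1
      _ ≤ m * (3 * x) ^ 2 := by
          have := hF0 (i + (k + k))
          gcongr
      _ = 81 * (k / N : ℝ) ^ 2 * m := by rw [hx]; ring
      _ ≤ 288 * (k / N : ℝ) ^ 2 * X.card := by rw [← hmdef]; gcongr; norm_num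

open Classical in
lemma cheapCut_compl {V : Type} {X A : Finset V} {d : V → V → ℝ} {θ s : ℝ} (hA : A ⊆ X)
    (h : CheapCut X A d θ s) : CheapCut X (X \ A) d θ s := by
  have e : nearCut X (X \ A) d θ = nearCut X A d θ := by
    unfold nearCut
    apply filter_congr
    intro u hu
    apply exists_congr
    intro v
    simp only [mem_sdiff, hu, true_and]
    constructor
    · rintro ⟨hv, h1, h2⟩
      exact ⟨hv, h1, by tauto⟩
    · rintro ⟨hv, h1, h2⟩
      exact ⟨hv, h1, by tauto⟩
  unfold CheapCut at *
  rw [e, _root_.sdiff_sdiff_eq_self hA, mul_comm ((X \ A).card : ℝ)]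
  exact h

open Classical in
/-- Among the sublevel sets of a Lipschitz function there is one that is a cheap cut at every
scale. The levels are searched from below or from above, whichever side carries at most half of
the points. -/
lemma exists_radius {V : Type} (X : Finset V) (d : V → V → ℝ) (h : V → ℝ) (R : ℝ) (hR : 0 < R)
    (N : ℕ) (hN : 1 ≤ N) (hd : ∀ u v, d u v = d v u)
    (hlip : ∀ u ∈ X, ∀ v ∈ X, h v ≤ h u + 4 * d u v) :
    ∃ r, 0 ≤ r ∧ r < R / 4 ∧
      ∀ k : ℕ, 1 ≤ k → CheapCut X (X.filter fun v => h v ≤ r) d (k * (R / (32 * N))) (k / N) := by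
  have hN0 : (0 : ℝ) < N := by exact_mod_cast hN
  set τ : ℝ := R / (32 * N) with hτ
  have hτ0 : 0 < τ := by positivity
  have hNτ : N * (4 * τ) = R / 8 := by rw [hτ]; field_simp; norm_num
  by_cases hcase : 2 * (X.filter fun v => h v ≤ R / 8).card ≤ X.card
  · obtain ⟨i, hi1, hiN, hi⟩ := exists_cheap X
      (fun i => X.filter fun v => 1 ≤ i ∧ h v ≤ i * (4 * τ)) d τ N hN
      (by simp) (by
        intro i j hij v hv
        simp only [mem_filter] at hv ⊢
        refine ⟨hv.1, by omega, hv.2.2.trans ?_⟩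
        have : (i : ℝ) ≤ j := by exact_mod_cast hij
        gcongr)
      (fun i => filter_subset _ _) (by
        simp only [hN, true_and, hNτ]
        exact hcase) hd (by
        intro i k u v hu hv hduv
        simp only [mem_filter] at hu ⊢
        refine ⟨hv, by omega, ?_⟩
        have := hlip u hu.1 v hv
        push_cast
        linarith [hu.2.2])
    refine ⟨i * (4 * τ), by positivity, ?_, ?_⟩
    · have : (i : ℝ) * (4 * τ) ≤ N * (4 * τ) := by
        have : (i : ℝ) ≤ N := by exact_mod_cast hiN
        gcongr
      linarith
    · simpa only [hi1, true_and] using hi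
  · obtain ⟨i, hi1, hiN, hi⟩ := exists_cheap X
      (fun i => X.filter fun v => 1 ≤ i ∧ R / 4 - i * (4 * τ) < h v) d τ N hN
      (by simp) (by
        intro i j hij v hv
        simp only [mem_filter] at hv ⊢
        refine ⟨hv.1, by omega, lt_of_le_of_lt ?_ hv.2.2⟩
        have : (i : ℝ) ≤ j := by exact_mod_cast hij
        gcongr)
      (fun i => filter_subset _ _) (by
        simp only [hN, true_and, hNτ]
        have h1 := card_filter_add_card_filter_not (s := X) (fun v => h v ≤ R / 8)
        have h2 : (X.filter fun v => R / 4 - R / 8 < h v) = X.filter fun v => ¬ h v ≤ R / 8 := by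
          apply filter_congr
          intro v _
          rw [not_le, show R / 4 - R / 8 = R / 8 by ring]
        rw [h2]
        omega) hd (by
        intro i k u v hu hv hduv
        simp only [mem_filter] at hu ⊢
        refine ⟨hv, by omega, ?_⟩
        have := hlip v hv u hu.1
        rw [hd v u] at this
        push_cast
        linarith [hu.2.2])
    refine ⟨R / 4 - i * (4 * τ), ?_, ?_, ?_⟩
    · have : (i : ℝ) * (4 * τ) ≤ N * (4 * τ) := by
        have : (i : ℝ) ≤ N := by exact_mod_cast hiN
        gcongr
      linarith
    · have : (0 : ℝ) < i := by exact_mod_cast hi1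
      have : 0 < (i : ℝ) * (4 * τ) := by positivity
      linarith
    · intro k hk
      have := cheapCut_compl (filter_subset _ _) (hi k hk)
      convert this using 1
      ext v
      simp only [mem_filter, mem_sdiff, hi1, true_and, not_and, not_lt]
      tauto

end Radius

/-! ### Petals -/

section Petal

variable {V : Type} [Finite V] {G : SimpleGraph V} {X : Finset V} {w ω : Sym2 V → ℝ}

open Classical in
/-- The petal cut. Along a geodesic `Q` from `x₀` to `s` let
`h v = min_{p ∈ Q} d(p, s) + 2 (d(x₀, p) + d(p, v) - d(x₀, v))`; the petal `A` is a sublevel set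
`h ≤ r` of this Lipschitz function. The suffix of `Q` from its first vertex `z` in the petal lies
in the petal, the complement contains its geodesics from `x₀`, and each point of the petal is
reached from that suffix inside the petal by a geodesic whose detour is controlled by `r`. -/
lemma exists_petal_cut {x0 s : V} (hx0 : x0 ∈ X)
    (hX : ∀ v ∈ X, (within G X).Reachable x0 v)
    (hw : ∀ e ∈ (within G X).edgeSet, 0 < w e) (hwω : ∀ e ∈ (within G X).edgeSet, w e ≤ ω e)
    (Q : (within G X).Walk x0 s) (hQ : wlen w Q = spDist (within G X) w x0 s)
    {R : ℝ} (hR : 0 < R) (hRs : R / 2 ≤ spDist (within G X) w x0 s) {N : ℕ} (hN : 1 ≤ N) :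
    ∃ (A : Finset V) (r : ℝ) (y z : V) (q : (within G X).Walk x0 y) (e : (within G X).Adj y z)
      (q' : (within G X).Walk z s),
      A ⊆ X ∧ 0 ≤ r ∧ r < R / 4 ∧ Q = q.append (SimpleGraph.Walk.cons e q') ∧
      (∀ a ∈ q.support, a ∈ X \ A) ∧ (∀ a ∈ q'.support, a ∈ A) ∧
      (∀ k : ℕ, 1 ≤ k →
        CheapCut X A (spDist (within G X) ω) (k * (R / (32 * N))) (k / N)) ∧
      r < spDist (within G X) w y s ∧
      (∀ v ∈ A, spDist (within G X) w x0 s - r ≤ spDist (within G X) w x0 v) ∧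
      (∀ v ∈ X \ A, ∃ g : (within G X).Walk x0 v, wlen w g = spDist (within G X) w x0 v ∧
        ∀ a ∈ g.support, a ∈ X \ A) ∧
      (∀ v ∈ A, ∃ p ∈ q'.support, ∃ g : (within G X).Walk p v,
        wlen w g = spDist (within G X) w p v ∧ (∀ a ∈ g.support, a ∈ A) ∧
        2 * (spDist (within G X) w x0 p + spDist (within G X) w p v - spDist (within G X) w x0 v)
          ≤ r - spDist (within G X) w p s) := by
  obtain ⟨d, hd⟩ : ∃ d, d = spDist (within G X) w := ⟨_, rfl⟩
  rw [← hd] at hQ hRs ⊢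
  have hrc : ∀ u ∈ X, ∀ v ∈ X, (within G X).Reachable u v :=
    fun u hu v hv => (hX u hu).symm.trans (hX v hv)
  have tri : ∀ u ∈ X, ∀ v ∈ X, ∀ a ∈ X, d u a ≤ d u v + d v a := by
    intro u hu v hv a ha
    rw [hd]
    exact spDist_triangle hw (hrc u hu v hv) (hrc v hv a ha)
  have sym : ∀ u v, d u v = d v u := fun u v => by rw [hd]; exact spDist_comm u v
  have d0 : ∀ u, d u u = 0 := fun u => by rw [hd]; exact spDist_self hw u
  have dn : ∀ u v, 0 ≤ d u v := fun u v => by rw [hd]; exact spDist_nonneg hw u v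
  have hQX : ∀ a ∈ Q.support, a ∈ X := fun a ha => within_support Q hx0 ha
  have hsX : s ∈ X := hQX s Q.end_mem_support
  have hQd : ∀ a ∈ Q.support, d x0 a + d a s = d x0 s := by
    intro a ha
    rw [hd] at hQ ⊢
    exact geod_support hw Q hQ ha
  have hmin : ∀ v, ∃ p ∈ Q.support, ∀ p' ∈ Q.support,
      d p s + 2 * (d x0 p + d p v - d x0 v) ≤ d p' s + 2 * (d x0 p' + d p' v - d x0 v) := by
    intro v
    obtain ⟨p, hp, h⟩ := Finset.exists_min_image Q.support.toFinset
      (fun p => d p s + 2 * (d x0 p + d p v - d x0 v)) ⟨s, by simp⟩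
    exact ⟨p, by simpa using hp, fun p' hp' => h p' (by simpa using hp')⟩
  choose π hπ hπmin using hmin
  obtain ⟨h, hh⟩ : ∃ h : V → ℝ, ∀ v, h v = d (π v) s + 2 * (d x0 (π v) + d (π v) v - d x0 v) :=
    ⟨_, fun _ => rfl⟩
  have hle : ∀ v, ∀ p ∈ Q.support, h v ≤ d p s + 2 * (d x0 p + d p v - d x0 v) := by
    intro v p hp
    rw [hh]
    exact hπmin v p hp
  have hπX : ∀ v, π v ∈ X := fun v => hQX _ (hπ v)
  have hdω : ∀ u ∈ X, ∀ v ∈ X, d u v ≤ spDist (within G X) ω u v := by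
    intro u hu v hv
    refine le_spDist (hrc u hu v hv) fun p => ?_
    rw [hd]
    exact (spDist_le hw p).trans (wlen_mono p fun e he => hwω e (p.edges_subset_edgeSet he))
  have hlip : ∀ u ∈ X, ∀ v ∈ X, h v ≤ h u + 4 * spDist (within G X) ω u v := by
    intro u hu v hv
    have h1 := hle v (π u) (hπ u)
    have h2 := tri (π u) (hπX u) u hu v hv
    have h3 := tri x0 hx0 v hv u hu
    have h4 := hdω u hu v hv
    have h5 := sym v u
    rw [hh u]
    linarith
  have hlow : ∀ v ∈ X, d x0 s - h v ≤ d x0 v := by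
    intro v hv
    have h1 := tri x0 hx0 (π v) (hπX v) v hv
    have h2 := hQd _ (hπ v)
    have h3 := dn (π v) v
    rw [hh v]
    linarith
  obtain ⟨r, hr0, hrR, hcheap⟩ := exists_radius X (spDist (within G X) ω) h R hR N hN
    (fun u v => spDist_comm u v) hlip
  have hsA : s ∈ X.filter fun v => h v ≤ r := by
    refine Finset.mem_filter.2 ⟨hsX, (hle s s Q.end_mem_support).trans ?_⟩
    rw [d0]
    linarith
  have hx0A : x0 ∉ X.filter fun v => h v ≤ r := by
    intro hx
    have h1 := (Finset.mem_filter.1 hx).2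
    have h2 := hlow x0 hx0
    rw [d0] at h2
    linarith
  obtain ⟨y, z, q, e, q', hQe, hqA, hzA⟩ := exists_entry Q
    (X.filter fun v => h v ≤ r : Finset V) (by simpa using hx0A) (by simpa using hsA)
  have hqs : ∀ a ∈ q.support, a ∈ Q.support := by
    intro a ha
    rw [hQe, SimpleGraph.Walk.mem_support_append_iff]
    exact Or.inl ha
  have hqs' : ∀ a ∈ q'.support, a ∈ Q.support := by
    intro a ha
    rw [hQe, SimpleGraph.Walk.mem_support_append_iff, SimpleGraph.Walk.support_cons]
    exact Or.inr (List.mem_cons_of_mem _ ha)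
  have hzQ := hqs' z q'.start_mem_support
  have hzs : d z s ≤ r := by
    have h1 := (Finset.mem_filter.1 (Finset.mem_coe.1 hzA)).2
    have h2 := hlow z (hQX z hzQ)
    have h3 := hQd z hzQ
    linarith
  have hq'geo : wlen w q' = d z s := by
    rw [hd] at hQ ⊢
    have h1 := geod_split hw q (SimpleGraph.Walk.cons e q') (hQe ▸ hQ)
    exact (geod_split hw (SimpleGraph.Walk.cons e SimpleGraph.Walk.nil) q' h1.2).2
  have hq'A : ∀ a ∈ q'.support, a ∈ X.filter fun v => h v ≤ r := by
    intro a ha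
    refine Finset.mem_filter.2 ⟨hQX a (hqs' a ha), ?_⟩
    have h1 := hle a a (hqs' a ha)
    have h2 : d z a + d a s = d z s := by
      rw [hd] at hq'geo ⊢
      exact geod_support hw q' hq'geo ha
    rw [d0] at h1
    have := dn z a
    linarith
  refine ⟨X.filter fun v => h v ≤ r, r, y, z, q, e, q', Finset.filter_subset _ _, hr0, hrR, hQe,
    ?_, hq'A, hcheap, ?_, ?_, ?_, ?_⟩
  · intro a ha
    exact Finset.mem_sdiff.2 ⟨hQX a (hqs a ha), fun h => hqA a ha (Finset.mem_coe.2 h)⟩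
  · have hyQ := hqs y q.end_mem_support
    have h1 : ¬ h y ≤ r := fun h2 => hqA y q.end_mem_support
      (Finset.mem_coe.2 (Finset.mem_filter.2 ⟨hQX y hyQ, h2⟩))
    have h2 := hle y y hyQ
    rw [d0] at h2
    linarith
  · intro v hv
    have h1 := hlow v (Finset.mem_filter.1 hv).1
    have h2 := (Finset.mem_filter.1 hv).2
    linarith
  · intro v hv
    obtain ⟨hvX, hvA⟩ := Finset.mem_sdiff.1 hv
    obtain ⟨g, hg⟩ := exists_geod hw (hX v hvX)
    refine ⟨g, by rw [hg, hd], fun a ha => ?_⟩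
    have haX := within_support g hx0 ha
    refine Finset.mem_sdiff.2 ⟨haX, fun haA => hvA (Finset.mem_filter.2 ⟨hvX, ?_⟩)⟩
    -- the petal function does not increase along a geodesic that starts at `x0`
    have h1 := (Finset.mem_filter.1 haA).2
    have h2 := hle v (π a) (hπ a)
    have h3 := tri (π a) (hπX a) a haX v hvX
    have h4 : d x0 a + d a v = d x0 v := by
      rw [hd]
      exact geod_support hw g hg ha
    rw [hh a] at h1
    linarith
  · intro v hv
    obtain ⟨hvX, hvr⟩ := Finset.mem_filter.1 hv
    have hpX := hπX v
    have hpr := hvr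
    rw [hh v] at hpr
    have hpA : π v ∈ X.filter fun v => h v ≤ r := by
      refine Finset.mem_filter.2 ⟨hpX, ?_⟩
      have h1 := hle (π v) (π v) (hπ v)
      have h2 := tri x0 hx0 (π v) hpX v hvX
      rw [d0] at h1
      linarith
    have hp' : π v ∈ q'.support := by
      have h1 := hπ v
      rw [hQe, SimpleGraph.Walk.mem_support_append_iff, SimpleGraph.Walk.support_cons,
        List.mem_cons] at h1
      rcases h1 with h1 | h1 | h1
      · exact absurd (Finset.mem_coe.2 hpA) (hqA _ h1)
      · exact absurd (Finset.mem_coe.2 (h1 ▸ hpA)) (hqA y q.end_mem_support)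
      · exact h1
    obtain ⟨g, hg⟩ := exists_geod hw (hrc (π v) hpX v hvX)
    refine ⟨π v, hp', g, by rw [hg, hd], fun a ha => ?_, by linarith⟩
    have haX := within_support g hpX ha
    refine Finset.mem_filter.2 ⟨haX, ?_⟩
    have h1 := hle a (π v) (hπ v)
    have h2 := tri x0 hx0 a haX v hvX
    have h3 : d (π v) a + d a v = d (π v) v := by
      rw [hd]
      exact geod_support hw g hg ha
    linarith

end Petal

/-! ### Counting badly stretched pairs -/

section Count

open Finset

open Classical in
/-- The pairs in `Z × X` of distinct points whose distance `D` is at least `256 / η` times their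
distance `d`. -/
noncomputable def badPairs {V : Type} (Z X : Finset V) (d D : V → V → ℝ) (η : ℝ) :
    Finset (V × V) :=
  (Z ×ˢ X).filter fun p => p.1 ≠ p.2 ∧ 256 * d p.1 p.2 ≤ η * D p.1 p.2

/-- At most an `O(η²)` fraction of the pairs is stretched by `256 / η` or more, for all
`η ≥ 1 / N`. The estimate for pairs with first point in an arbitrary subset `Z` makes an induction
possible in which the points close to a cut are dropped from `Z`. -/
def FewBad {V : Type} (X : Finset V) (d D : V → V → ℝ) (n N : ℕ) : Prop :=
  ∀ η : ℝ, 1 ≤ η * N → ∀ Z ⊆ X,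
    ((badPairs Z X d D η).card : ℝ) ≤ 1152 * η ^ 2 * (Z.card * n + X.card ^ 2)

open Classical in
/-- The count of bad pairs passes from the two sides of a cheap cut to the whole cluster. Bad pairs
are close, so one whose geodesic crosses the cut has both points near the cut. -/
lemma fewBad_combine {V : Type} {X A : Finset V} {d D dA DA dB DB : V → V → ℝ} {R : ℝ} {n N : ℕ}
    (hAX : A ⊆ X) (hR : 0 < R) (hN : 1 ≤ N) (hn : X.card ≤ n)
    (hcheap : ∀ k : ℕ, 1 ≤ k → CheapCut X A d (k * (R / (32 * N))) (k / N))
    (hA : FewBad A dA DA n N) (hB : FewBad (X \ A) dB DB n N)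
    (hD : ∀ u ∈ X, ∀ v ∈ X, D u v ≤ 8 * R)
    (hDA : ∀ u ∈ A, ∀ v ∈ A, D u v ≤ DA u v) (hDB : ∀ u ∈ X \ A, ∀ v ∈ X \ A, D u v ≤ DB u v)
    (hloc : ∀ u ∈ X, ∀ v ∈ X, (u ∈ A ∧ v ∈ A ∧ dA u v ≤ d u v) ∨
      (u ∈ X \ A ∧ v ∈ X \ A ∧ dB u v ≤ d u v) ∨
      ((∃ x ∈ X, d u x ≤ d u v ∧ ¬ (u ∈ A ↔ x ∈ A)) ∧
        ∃ x ∈ X, d v x ≤ d u v ∧ ¬ (v ∈ A ↔ x ∈ A))) :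
    FewBad X d D n N := by
  intro η hη Z hZ
  have hN0 : (0 : ℝ) < N := by exact_mod_cast hN
  have hη0 : 0 < η := by
    by_contra hcon
    have := mul_nonpos_of_nonpos_of_nonneg (not_lt.1 hcon) hN0.le
    linarith
  obtain ⟨k, hk⟩ : ∃ k, k = ⌈η * N⌉₊ := ⟨_, rfl⟩
  have hk1 : 1 ≤ k := by
    rw [hk]
    exact Nat.one_le_iff_ne_zero.2 (Nat.ceil_pos.2 (by linarith)).ne'
  have hkle : η * N ≤ k := hk ▸ Nat.le_ceil _
  have hkge : (k : ℝ) ≤ 2 * η * N := by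
    have := Nat.ceil_lt_add_one (show 0 ≤ η * N by linarith)
    rw [← hk] at this
    linarith
  have hs : ((k : ℝ) / N) ^ 2 ≤ 4 * η ^ 2 := by
    have h1 : (k : ℝ) / N ≤ 2 * η := (div_le_iff₀ hN0).2 hkge
    calc ((k : ℝ) / N) ^ 2 ≤ (2 * η) ^ 2 := by gcongr
      _ = 4 * η ^ 2 := by ring
  obtain ⟨θ, hθ⟩ : ∃ θ : ℝ, θ = k * (R / (32 * N)) := ⟨_, rfl⟩
  have hc := hcheap k hk1
  rw [← hθ] at hc
  have hclose : ∀ u ∈ X, ∀ v ∈ X, 256 * d u v ≤ η * D u v → d u v ≤ θ := by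
    intro u hu v hv h
    have h1 : η * D u v ≤ η * (8 * R) := mul_le_mul_of_nonneg_left (hD u hu v hv) hη0.le
    have h2 : η * R / 32 ≤ θ := by
      rw [hθ]
      calc η * R / 32 = (η * N) * (R / (32 * N)) := by field_simp
        _ ≤ k * (R / (32 * N)) := by gcongr
    linarith
  obtain ⟨U, hU⟩ : ∃ U, U = nearCut X A d θ := ⟨_, rfl⟩
  have hsplit : ∀ u ∈ X, ∀ v ∈ X, 256 * d u v ≤ η * D u v →
      (u ∈ A ∧ v ∈ A ∧ 256 * dA u v ≤ η * DA u v) ∨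
      (u ∈ X \ A ∧ v ∈ X \ A ∧ 256 * dB u v ≤ η * DB u v) ∨ (u ∈ U ∧ v ∈ U) := by
    intro u hu v hv h
    have hθ' := hclose u hu v hv h
    rcases hloc u hu v hv with ⟨h1, h2, h3⟩ | ⟨h1, h2, h3⟩ | ⟨⟨x, hx, h1, h2⟩, ⟨x', hx', h1', h2'⟩⟩
    · have := mul_le_mul_of_nonneg_left (hDA u h1 v h2) hη0.le
      exact Or.inl ⟨h1, h2, by linarith⟩
    · have := mul_le_mul_of_nonneg_left (hDB u h1 v h2) hη0.le
      exact Or.inr (Or.inl ⟨h1, h2, by linarith⟩)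
    · refine Or.inr (Or.inr ⟨?_, ?_⟩)
      · rw [hU]
        exact mem_filter.2 ⟨hu, x, hx, h1.trans hθ', h2⟩
      · rw [hU]
        exact mem_filter.2 ⟨hv, x', hx', h1'.trans hθ', h2'⟩
  have hXcard : ((X \ A).card : ℝ) + A.card = X.card := by
    exact_mod_cast card_sdiff_add_card_eq_card hAX
  have hη2 : 0 ≤ 1152 * η ^ 2 := by positivity
  obtain ⟨a, ha⟩ : ∃ a : ℝ, a = A.card := ⟨_, rfl⟩
  obtain ⟨b, hb⟩ : ∃ b : ℝ, b = (X \ A).card := ⟨_, rfl⟩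
  have ha0 : 0 ≤ a := ha ▸ Nat.cast_nonneg _
  have hb0 : 0 ≤ b := hb ▸ Nat.cast_nonneg _
  have hab : 0 ≤ a * b := mul_nonneg ha0 hb0
  rcases hc with hc | hc
  · rw [← hU] at hc
    have hsub : badPairs Z X d D η ⊆
        (badPairs (Z ∩ A) A dA DA η ∪ badPairs (Z \ A) (X \ A) dB DB η) ∪ U ×ˢ U := by
      rintro ⟨u, v⟩ huv
      obtain ⟨h1, hne, h3⟩ := mem_filter.1 huv
      obtain ⟨huZ, hvX⟩ := mem_product.1 h1
      rw [mem_union, mem_union]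
      rcases hsplit u (hZ huZ) v hvX h3 with ⟨h4, h5, h6⟩ | ⟨h4, h5, h6⟩ | ⟨h4, h5⟩
      · exact Or.inl (Or.inl (mem_filter.2
          ⟨mem_product.2 ⟨mem_inter.2 ⟨huZ, h4⟩, h5⟩, hne, h6⟩))
      · exact Or.inl (Or.inr (mem_filter.2
          ⟨mem_product.2 ⟨mem_sdiff.2 ⟨huZ, (mem_sdiff.1 h4).2⟩, h5⟩, hne, h6⟩))
      · exact Or.inr (mem_product.2 ⟨h4, h5⟩)
    have hcard := ((card_le_card hsub).trans (card_union_le _ _)).trans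
      (Nat.add_le_add_right (card_union_le _ _) _)
    rw [card_product] at hcard
    have hcard' : ((badPairs Z X d D η).card : ℝ) ≤ (badPairs (Z ∩ A) A dA DA η).card +
        (badPairs (Z \ A) (X \ A) dB DB η).card + (U.card : ℝ) ^ 2 := by
      rw [pow_two]
      exact_mod_cast hcard
    have h1 := hA η hη (Z ∩ A) inter_subset_right
    have h2 := hB η hη (Z \ A) (sdiff_subset_sdiff hZ (Subset.refl _))
    have h3 : ((Z ∩ A).card : ℝ) + (Z \ A).card = Z.card := by
      exact_mod_cast card_inter_add_card_sdiff Z A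
    rw [← ha, ← hb] at hc
    rw [← ha] at h1
    rw [← hb] at h2
    have h4 : 288 * ((k : ℝ) / N) ^ 2 * (a * b) ≤ 288 * (4 * η ^ 2) * (a * b) := by gcongr
    have h5 : 0 ≤ η ^ 2 * (a * b) := by positivity
    rw [← hXcard, ← h3, ← ha, ← hb]
    calc _ ≤ _ := hcard'
      _ ≤ _ := add_le_add (add_le_add h1 h2) (hc.trans h4)
      _ ≤ _ := by linarith
  · rw [← hU] at hc
    have hsub : badPairs Z X d D η ⊆
        (badPairs ((Z \ U) ∩ A) A dA DA η ∪ badPairs ((Z \ U) \ A) (X \ A) dB DB η) ∪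
          (Z ∩ U).biUnion fun u => (X.filter fun v => d u v ≤ θ).image (Prod.mk u) := by
      rintro ⟨u, v⟩ huv
      obtain ⟨h1, hne, h3⟩ := mem_filter.1 huv
      obtain ⟨huZ, hvX⟩ := mem_product.1 h1
      rw [mem_union, mem_union]
      by_cases huU : u ∈ U
      · exact Or.inr (mem_biUnion.2 ⟨u, mem_inter.2 ⟨huZ, huU⟩, mem_image.2
          ⟨v, mem_filter.2 ⟨hvX, hclose u (hZ huZ) v hvX h3⟩, rfl⟩⟩)
      have huZU := mem_sdiff.2 ⟨huZ, huU⟩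
      rcases hsplit u (hZ huZ) v hvX h3 with ⟨h4, h5, h6⟩ | ⟨h4, h5, h6⟩ | ⟨h4, h5⟩
      · exact Or.inl (Or.inl (mem_filter.2
          ⟨mem_product.2 ⟨mem_inter.2 ⟨huZU, h4⟩, h5⟩, hne, h6⟩))
      · exact Or.inl (Or.inr (mem_filter.2
          ⟨mem_product.2 ⟨mem_sdiff.2 ⟨huZU, (mem_sdiff.1 h4).2⟩, h5⟩, hne, h6⟩))
      · exact absurd h4 huU
    have hcard := ((card_le_card hsub).trans (card_union_le _ _)).trans
      (Nat.add_le_add_right (card_union_le _ _) _)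
    have hcross : (((Z ∩ U).biUnion fun u =>
        (X.filter fun v => d u v ≤ θ).image (Prod.mk u)).card : ℝ) ≤
        (Z ∩ U).card * (1152 * η ^ 2 * n) := by
      calc _ ≤ ((∑ u ∈ Z ∩ U, ((X.filter fun v => d u v ≤ θ).image (Prod.mk u)).card : ℕ) : ℝ) := by
            exact_mod_cast card_biUnion_le
        _ = ∑ u ∈ Z ∩ U, (((X.filter fun v => d u v ≤ θ).image (Prod.mk u)).card : ℝ) := by
            push_cast; rfl
        _ ≤ ∑ _u ∈ Z ∩ U, 1152 * η ^ 2 * (n : ℝ) := by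
            refine sum_le_sum fun u hu => ?_
            have h1 := hc u (mem_inter.1 hu).2
            have h2 : ((((X.filter fun v => d u v ≤ θ).image (Prod.mk u)).card : ℕ) : ℝ) ≤
              (X.filter fun v => d u v ≤ θ).card := by exact_mod_cast card_image_le
            have h3 : (X.card : ℝ) ≤ n := by exact_mod_cast hn
            calc _ ≤ _ := h2.trans h1
              _ ≤ 288 * (4 * η ^ 2) * (n : ℝ) := by
                refine mul_le_mul ?_ h3 (Nat.cast_nonneg _) (by positivity)
                linarith
              _ = _ := by ring
        _ = _ := by rw [sum_const, nsmul_eq_mul]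
    have hcard' : ((badPairs Z X d D η).card : ℝ) ≤ (badPairs ((Z \ U) ∩ A) A dA DA η).card +
        (badPairs ((Z \ U) \ A) (X \ A) dB DB η).card + ((Z ∩ U).biUnion fun u =>
        (X.filter fun v => d u v ≤ θ).image (Prod.mk u)).card := by
      exact_mod_cast hcard
    have h1 := hA η hη ((Z \ U) ∩ A) inter_subset_right
    have h2 := hB η hη ((Z \ U) \ A) (sdiff_subset_sdiff (sdiff_subset.trans hZ) (Subset.refl _))
    have h3 : ((((Z \ U) ∩ A).card : ℝ) + ((Z \ U) \ A).card) + (Z ∩ U).card = Z.card := by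
      have h4 := card_inter_add_card_sdiff (Z \ U) A
      have h5 := card_inter_add_card_sdiff Z U
      have h6 : ((Z \ U) ∩ A).card + ((Z \ U) \ A).card + (Z ∩ U).card = Z.card := by omega
      exact_mod_cast h6
    rw [← ha] at h1
    rw [← hb] at h2
    have h5 : 0 ≤ η ^ 2 * (a * b) := by positivity
    rw [← hXcard, ← h3, ← ha, ← hb]
    calc _ ≤ _ := hcard'
      _ ≤ _ := add_le_add (add_le_add h1 h2) hcross
      _ ≤ _ := by linarith

end Count

/-! ### Gluing the trees of the two sides of a cut -/

open Classical in
/-- The weight `ω` with the edges in the list `L` halved. -/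
noncomputable def halve {V : Type} (ω : Sym2 V → ℝ) (L : List (Sym2 V)) : Sym2 V → ℝ :=
  fun e => if e ∈ L then ω e / 2 else ω e

/-- The induction hypothesis for the cluster `X` with root `x₀` and marked edges `L`. The bound on
the number of edges, together with the connectedness given by `near`, makes `T` a tree on `X`. -/
structure IsGoodTree {V : Type} (G : SimpleGraph V) (ω : Sym2 V → ℝ) (n N : ℕ) (X : Finset V)
    (x0 : V) (L : List (Sym2 V)) (T : SimpleGraph V) : Prop where
  le : T ≤ within G X
  card : T.edgeSet.ncard + 1 ≤ X.card
  /-- The marked edges are kept. -/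
  marked : ∀ e ∈ L, e ∈ T.edgeSet
  /-- Distances to the root grow by a factor of at most `4` over those of the halved weights. -/
  near : ∀ v ∈ X, ∃ q : T.Walk x0 v, wlen ω q ≤ 4 * spDist (within G X) (halve ω L) x0 v
  few : FewBad X (spDist (within G X) ω) (spDist T ω) n N

section Glue

variable {V : Type} {G : SimpleGraph V} {X : Finset V} {w ω : Sym2 V → ℝ}

lemma halve_of_mem {L : List (Sym2 V)} {e : Sym2 V} (h : e ∈ L) : halve ω L e = ω e / 2 :=
  if_pos h

lemma halve_of_notMem {L : List (Sym2 V)} {e : Sym2 V} (h : e ∉ L) : halve ω L e = ω e :=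
  if_neg h

lemma halve_pos {L : List (Sym2 V)} {e : Sym2 V} (h : 0 < ω e) : 0 < halve ω L e := by
  unfold halve
  split_ifs <;> linarith

lemma halve_le {L : List (Sym2 V)} {e : Sym2 V} (h : 0 < ω e) : halve ω L e ≤ ω e := by
  unfold halve
  split_ifs <;> linarith

lemma half_le_halve {L : List (Sym2 V)} {e : Sym2 V} (h : 0 < ω e) :
    1 / 2 * ω e ≤ halve ω L e := by
  unfold halve
  split_ifs <;> linarith

lemma pos_within (hω : ∀ e ∈ G.edgeSet, 0 < ω e) : ∀ e ∈ (within G X).edgeSet, 0 < ω e := by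
  intro e he
  apply hω
  induction e with
  | _ a b => exact he.1

/-- A geodesic that stays in a subcluster remains a geodesic there if the weights are scaled by
`c`, or by `c` along the geodesic and by at least `c` off it. -/
lemma geod_within [Finite V] {A : Finset V} {w' : Sym2 V → ℝ} (hAX : A ⊆ X)
    (hw : ∀ e ∈ (within G X).edgeSet, 0 < w e) (hw' : ∀ e ∈ (within G A).edgeSet, 0 < w' e)
    {c : ℝ} (hc : 0 < c) (hle : ∀ e ∈ (within G A).edgeSet, c * w e ≤ w' e) {u v : V}
    (p : (within G X).Walk u v) (hp : wlen w p = spDist (within G X) w u v)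
    (hpA : ∀ a ∈ p.support, a ∈ A) (heq : ∀ e ∈ p.edges, w' e = c * w e) :
    ∃ q : (within G A).Walk u v, q.edges = p.edges ∧ q.support = p.support ∧
      wlen w' q = spDist (within G A) w' u v ∧
      spDist (within G A) w' u v = c * spDist (within G X) w u v := by
  obtain ⟨q, hqe, hqs⟩ := exists_within p hpA
  have h1 : wlen w' q = c * wlen w p := by
    unfold wlen
    rw [← List.sum_map_mul_left, hqe]
    congr 1
    exact List.map_congr_left heq
  have h2 : c * spDist (within G X) w u v ≤ spDist (within G A) w' u v := by
    refine le_spDist q.reachable fun q2 => ?_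
    obtain ⟨q3, hq3, -⟩ := exists_mapLe (within_mono hAX) q2
    have h3 := spDist_le hw q3
    have h4 : wlen w q2 ≤ c⁻¹ * wlen w' q2 := by
      refine wlen_le_mul q2 fun e he => ?_
      rw [inv_mul_eq_div, le_div_iff₀ hc, mul_comm]
      exact hle e (q2.edges_subset_edgeSet he)
    rw [wlen_congr hq3] at h3
    rw [inv_mul_eq_div, le_div_iff₀ hc, mul_comm] at h4
    exact (mul_le_mul_of_nonneg_left h3 hc.le).trans h4
  have h3 := spDist_le hw' q
  rw [hp] at h1
  exact ⟨q, hqe, hqs, by linarith, by linarith⟩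

open Classical in
/-- The trees of a petal `A` and of its complement are joined by the edge `yz`. The hypotheses
`hnearA` and `hnearB` compare the recursive bounds for the distance to the root with the bound
required for `X`; in `hnearA` the tree `T` ranges over all graphs that contain what is known to be
in the glued tree. -/
lemma isGoodTree_glue [Finite V] {A : Finset V} {n N : ℕ} {x0 y z : V} {L LA LB : List (Sym2 V)}
    {TA TB : SimpleGraph V} {R : ℝ} (hω : ∀ e ∈ G.edgeSet, 0 < ω e) (hN : 1 ≤ N)
    (hn : X.card ≤ n) (hAX : A ⊆ X) (hR : 0 < R)
    (hrad : ∀ v ∈ X, spDist (within G X) (halve ω L) x0 v ≤ R)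
    (hcheap : ∀ k : ℕ, 1 ≤ k →
      CheapCut X A (spDist (within G X) ω) (k * (R / (32 * N))) (k / N))
    (hX : ∀ v ∈ X, (within G X).Reachable x0 v)
    (hy : y ∈ X \ A) (hz : z ∈ A) (e : G.Adj y z)
    (hTA : IsGoodTree G ω n N A z LA TA) (hTB : IsGoodTree G ω n N (X \ A) x0 LB TB)
    (hmark : ∀ e ∈ L, e ∈ LA ∨ e ∈ LB ∨ e = s(y, z))
    (hnearB : ∀ v ∈ X \ A, spDist (within G (X \ A)) (halve ω LB) x0 v ≤
      spDist (within G X) (halve ω L) x0 v)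
    (hnearA : ∀ T : SimpleGraph V, TB ≤ T → T.Adj y z → (∀ e ∈ L, e ∈ T.edgeSet) →
      ∃ q : T.Walk x0 z, ∀ v ∈ A, wlen ω q + 4 * spDist (within G A) (halve ω LA) z v ≤
        4 * spDist (within G X) (halve ω L) x0 v) :
    ∃ T, IsGoodTree G ω n N X x0 L T := by
  have hBX : X \ A ⊆ X := Finset.sdiff_subset
  have hyX := hBX hy
  have hzX := hAX hz
  obtain ⟨T, hT⟩ : ∃ T, T = TA ⊔ TB ⊔ SimpleGraph.edge y z := ⟨_, rfl⟩
  have hTAT : TA ≤ T := hT ▸ le_sup_left.trans le_sup_left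
  have hTBT : TB ≤ T := hT ▸ le_sup_right.trans le_sup_left
  have hyz : T.Adj y z := by
    rw [hT]
    exact Or.inr (by simp [SimpleGraph.edge_adj, e.ne])
  have hTX : T ≤ within G X := by
    rw [hT]
    refine sup_le (sup_le (hTA.le.trans (within_mono hAX)) (hTB.le.trans (within_mono hBX))) ?_
    rw [SimpleGraph.edge_le_iff]
    exact Or.inr ⟨e, hyX, hzX⟩
  have hTω : ∀ e ∈ T.edgeSet, 0 < ω e :=
    fun e he => pos_within hω e (SimpleGraph.edgeSet_mono hTX he)
  have hmarked : ∀ e ∈ L, e ∈ T.edgeSet := by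
    intro e he
    rcases hmark e he with h | h | rfl
    · exact SimpleGraph.edgeSet_mono hTAT (hTA.marked e h)
    · exact SimpleGraph.edgeSet_mono hTBT (hTB.marked e h)
    · exact hyz
  have hnear : ∀ v ∈ X, ∃ q : T.Walk x0 v,
      wlen ω q ≤ 4 * spDist (within G X) (halve ω L) x0 v := by
    intro v hv
    by_cases hvA : v ∈ A
    · obtain ⟨q, hq⟩ := hnearA T hTBT hyz hmarked
      obtain ⟨q1, hq1⟩ := hTA.near v hvA
      obtain ⟨q2, hq2, -⟩ := exists_mapLe hTAT q1
      refine ⟨q.append q2, ?_⟩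
      rw [wlen_append, wlen_congr hq2]
      linarith [hq v hvA]
    · have hvB := Finset.mem_sdiff.2 ⟨hv, hvA⟩
      obtain ⟨q1, hq1⟩ := hTB.near v hvB
      obtain ⟨q2, hq2, -⟩ := exists_mapLe hTBT q1
      refine ⟨q2, ?_⟩
      rw [wlen_congr hq2]
      linarith [hnearB v hvB]
  refine ⟨T, hTX, ?_, hmarked, hnear, ?_⟩
  · have h1 : T.edgeSet.ncard ≤ TA.edgeSet.ncard + TB.edgeSet.ncard + 1 := by
      rw [hT, SimpleGraph.edgeSet_sup, SimpleGraph.edgeSet_sup,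
        SimpleGraph.edgeSet_edge_of_ne e.ne]
      refine (Set.ncard_union_le _ _).trans ?_
      rw [Set.ncard_singleton]
      exact Nat.add_le_add_right (Set.ncard_union_le _ _) _
    have h2 := hTA.card
    have h3 := hTB.card
    have h4 := Finset.card_sdiff_add_card_eq_card hAX
    omega
  · have hωX := pos_within (X := X) hω
    refine fewBad_combine hAX hR hN hn hcheap hTA.few hTB.few ?_ ?_ ?_ ?_
    · intro u hu v hv
      obtain ⟨p, hp⟩ := hnear u hu
      obtain ⟨q, hq⟩ := hnear v hv
      have h1 := spDist_le hTω (p.reverse.append q)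
      rw [wlen_append, wlen_reverse] at h1
      linarith [hrad u hu, hrad v hv]
    · intro u hu v hv
      obtain ⟨p, -⟩ := hTA.near u hu
      obtain ⟨q, -⟩ := hTA.near v hv
      exact spDist_mono_graph hTAT hTω (p.reachable.symm.trans q.reachable)
    · intro u hu v hv
      obtain ⟨p, -⟩ := hTB.near u hu
      obtain ⟨q, -⟩ := hTB.near v hv
      exact spDist_mono_graph hTBT hTω (p.reachable.symm.trans q.reachable)
    · intro u hu v hv
      obtain ⟨g, hg⟩ := exists_geod hωX ((hX u hu).symm.trans (hX v hv))
      have hloc : ∀ Y : Finset V, (∀ a ∈ g.support, a ∈ Y) →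
          spDist (within G Y) ω u v ≤ spDist (within G X) ω u v := by
        intro Y hY
        obtain ⟨q, hq, -⟩ := exists_within g hY
        rw [← hg, ← wlen_congr hq]
        exact spDist_le (pos_within hω) q
      have hgX : ∀ a ∈ g.support, a ∈ X := fun a ha => within_support g hu ha
      by_cases hside : ∀ a ∈ g.support, (u ∈ A ↔ a ∈ A)
      · by_cases huA : u ∈ A
        · have h1 : ∀ a ∈ g.support, a ∈ A := fun a ha => (hside a ha).1 huA
          exact Or.inl ⟨huA, h1 v g.end_mem_support, hloc A h1⟩
        · have h1 : ∀ a ∈ g.support, a ∈ X \ A :=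
            fun a ha => Finset.mem_sdiff.2 ⟨hgX a ha, fun h => huA ((hside a ha).2 h)⟩
          exact Or.inr (Or.inl ⟨h1 u g.start_mem_support, h1 v g.end_mem_support, hloc _ h1⟩)
      · push Not at hside
        obtain ⟨a, ha, hne⟩ := hside
        have h1 := geod_support hωX g hg ha
        have h2 := spDist_nonneg hωX u a
        have h3 := spDist_nonneg hωX a v
        have hne' : ¬ (u ∈ A ↔ a ∈ A) := by tauto
        refine Or.inr (Or.inr ⟨⟨a, hgX a ha, by linarith, hne'⟩, ?_⟩)
        by_cases hv' : v ∈ A ↔ a ∈ A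
        · exact ⟨u, hu, (spDist_comm v u).le, by tauto⟩
        · exact ⟨a, hgX a ha, by rw [spDist_comm v a]; linarith, hv'⟩

end Glue

/-! ### The hierarchical petal decomposition -/

section Main

variable {V : Type} {G : SimpleGraph V} {X : Finset V} {w ω : Sym2 V → ℝ}

/-- Distances along a geodesic `q`, `yz`, `q'` that passes through `p` after `z`. -/
lemma geod_through [Finite V] {H : SimpleGraph V} (hw : ∀ e ∈ H.edgeSet, 0 < w e)
    {x0 y z s p : V} (q : H.Walk x0 y) (e : H.Adj y z) (q' : H.Walk z s)
    (hQ : wlen w (q.append (SimpleGraph.Walk.cons e q')) = spDist H w x0 s)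
    (hp : p ∈ q'.support) :
    wlen w q = spDist H w x0 y ∧ wlen w q' = spDist H w z s ∧
      spDist H w x0 z = spDist H w x0 y + w s(y, z) ∧
      spDist H w x0 p = spDist H w x0 z + spDist H w z p ∧
      spDist H w y s = w s(y, z) + spDist H w z p + spDist H w p s ∧
      ∃ q1 : H.Walk z p, wlen w q1 = spDist H w z p ∧ (∀ e ∈ q1.edges, e ∈ q'.edges) ∧
        ∀ a ∈ q1.support, a ∈ q'.support := by
  obtain ⟨q1, q2, hq'⟩ := SimpleGraph.Walk.mem_support_iff_exists_append.1 hp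
  have h1 := geod_split hw q _ hQ
  have h2 : wlen w ((q.append (SimpleGraph.Walk.cons e SimpleGraph.Walk.nil)).append q') =
      spDist H w x0 s := by
    rw [← hQ]
    simp only [wlen_append, wlen_cons, wlen_nil]
    ring
  have h3 := geod_split hw _ q' h2
  have h4 : wlen w q1 = spDist H w z p ∧ wlen w q2 = spDist H w p s :=
    geod_split hw q1 q2 (hq' ▸ h3.2)
  have h5 : wlen w ((q.append (SimpleGraph.Walk.cons e q1)).append q2) = spDist H w x0 s := by
    rw [← hQ, hq']
    simp only [wlen_append, wlen_cons]
    ring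
  have h6 := geod_split hw _ q2 h5
  have h7 := h1.2
  have h8 := h3.1
  have h9 := h6.1
  have h10 := h3.2
  rw [hq', wlen_append] at h10
  rw [hq', wlen_cons, wlen_append] at h7
  rw [wlen_append, wlen_cons, wlen_nil] at h8
  rw [wlen_append, wlen_cons] at h9
  refine ⟨h1.1, h3.2, by linarith, by linarith, by linarith, q1, h4.1, ?_, ?_⟩
  · intro e he
    rw [hq', SimpleGraph.Walk.edges_append]
    exact List.mem_append_left _ he
  · intro a ha
    rw [hq', SimpleGraph.Walk.mem_support_append_iff]
    exact Or.inl ha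

open Classical in
/-- Each cluster carries a marked geodesic of its own halved metric. A petal is cut off around the
end of the marked geodesic if that is far from the root, and otherwise around a farthest point; in
the second case the complement keeps the old marked path. The suffix of the path that leads into the
petal is the marked path of the petal, and the two trees are joined by the edge along which that
path enters the petal. -/
theorem exists_goodTree [Finite V] {n N : ℕ} (hω : ∀ e ∈ G.edgeSet, 0 < ω e) (hN : 1 ≤ N) :
    ∀ (m : ℕ) (X : Finset V), X.card = m → m ≤ n → ∀ x0 ∈ X,
      (∀ v ∈ X, (within G X).Reachable x0 v) → ∀ (t : V) (P : (within G X).Walk x0 t),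
      wlen (halve ω P.edges) P = spDist (within G X) (halve ω P.edges) x0 t →
      ∃ T, IsGoodTree G ω n N X x0 P.edges T := by
  intro m
  induction m using Nat.strong_induction_on with
  | _ m ih =>
  intro X hXm hmn x0 hx0 hX t P hP
  obtain ⟨w, hwdef⟩ : ∃ w, w = halve ω P.edges := ⟨_, rfl⟩
  have hωX := pos_within (X := X) hω
  have hw : ∀ e ∈ (within G X).edgeSet, 0 < w e := fun e he => hwdef ▸ halve_pos (hωX e he)
  have hwω : ∀ e ∈ (within G X).edgeSet, w e ≤ ω e := fun e he => hwdef ▸ halve_le (hωX e he)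
  rw [← hwdef] at hP
  obtain ⟨f, hfX, hf⟩ := Finset.exists_max_image X (fun v => spDist (within G X) w x0 v) ⟨x0, hx0⟩
  obtain ⟨R, hRdef⟩ : ∃ R, R = spDist (within G X) w x0 f := ⟨_, rfl⟩
  rw [← hRdef] at hf
  have htX : t ∈ X := within_support P hx0 P.end_mem_support
  by_cases hone : ∀ v ∈ X, v = x0
  · have hX1 : X = {x0} := by
      ext v
      rw [Finset.mem_singleton]
      exact ⟨hone v, fun h => h ▸ hx0⟩
    have hbot : (within G X).edgeSet = ∅ := by
      rw [Set.eq_empty_iff_forall_notMem]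
      intro e he
      induction e with
      | _ a b => exact he.1.ne ((hone a he.2.1).trans (hone b he.2.2).symm)
    refine ⟨within G X, le_rfl, ?_, fun e he => P.edges_subset_edgeSet he, ?_, ?_⟩
    · rw [hbot, hX1]
      simp
    · intro v hv
      rw [hone v hv, ← hwdef]
      exact ⟨SimpleGraph.Walk.nil, by rw [wlen_nil, spDist_self hw, mul_zero]⟩
    · intro η hη Z hZ
      have h0 : badPairs Z X (spDist (within G X) ω) (spDist (within G X) ω) η = ∅ := by
        rw [Finset.eq_empty_iff_forall_notMem]
        rintro ⟨u, v⟩ huv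
        obtain ⟨h1, h2, -⟩ := Finset.mem_filter.1 huv
        obtain ⟨h3, h4⟩ := Finset.mem_product.1 h1
        exact h2 ((hone u (hZ h3)).trans (hone v h4).symm)
      rw [h0]
      simp only [Finset.card_empty, Nat.cast_zero]
      positivity
  push Not at hone
  obtain ⟨v1, hv1X, hv1⟩ := hone
  have hR : 0 < R := lt_of_lt_of_le (spDist_pos hw (hX v1 hv1X) hv1.symm) (hf v1 hv1X)
  by_cases hcase : R / 2 ≤ spDist (within G X) w x0 t
  · obtain ⟨A, r, y, z, q, e, q', hAX, hr0, hrR, hPe, hqB, hqA, hcheap, -, hfar, hgB, hgA⟩ :=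
      exists_petal_cut (ω := ω) hx0 hX hw hwω P hP hR hcase hN
    have hBX : X \ A ⊆ X := Finset.sdiff_subset
    have hxB := hqB x0 q.start_mem_support
    have hyB := hqB y q.end_mem_support
    have hzA := hqA z q'.start_mem_support
    have htA := hqA t q'.end_mem_support
    have hmem : ∀ e', e' ∈ P.edges ↔ e' ∈ q.edges ∨ e' = s(y, z) ∨ e' ∈ q'.edges := by
      intro e'
      rw [hPe, SimpleGraph.Walk.edges_append, SimpleGraph.Walk.edges_cons, List.mem_append,
        List.mem_cons]
    have hnA : ∀ a ∈ X \ A, a ∉ A := fun a ha => (Finset.mem_sdiff.1 ha).2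
    have hwA : ∀ e' ∈ (within G A).edgeSet, halve ω q'.edges e' = w e' := by
      intro e' he'
      have h1 : e' ∈ P.edges ↔ e' ∈ q'.edges := by
        rw [hmem]
        refine ⟨?_, fun h => Or.inr (Or.inr h)⟩
        rintro (h | rfl | h)
        · induction e' with
          | _ a b => exact absurd he'.2.1 (hnA a (hqB a (q.fst_mem_support_of_mem_edges h)))
        · exact absurd he'.2.1 (hnA y hyB)
        · exact h
      rw [hwdef]
      unfold halve
      simp only [h1]
    have hwB : ∀ e' ∈ (within G (X \ A)).edgeSet, halve ω q.edges e' = w e' := by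
      intro e' he'
      have h1 : e' ∈ P.edges ↔ e' ∈ q.edges := by
        rw [hmem]
        refine ⟨?_, fun h => Or.inl h⟩
        rintro (h | rfl | h)
        · exact h
        · exact absurd hzA (hnA z he'.2.2)
        · induction e' with
          | _ a b => exact absurd (hqA a (q'.fst_mem_support_of_mem_edges h)) (hnA a he'.2.1)
      rw [hwdef]
      unfold halve
      simp only [h1]
    have hpos : ∀ (Y : Finset V) (L : List (Sym2 V)), ∀ e' ∈ (within G Y).edgeSet,
        0 < halve ω L e' := fun Y L e' he' => halve_pos (pos_within hω e' he')
    -- a walk of the cluster inside `Y` is a walk of `within G Y`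
    have hedge : ∀ (Y : Finset V) {a b : V} (g : (within G X).Walk a b),
        (∀ c ∈ g.support, c ∈ Y) → ∀ e' ∈ g.edges, e' ∈ (within G Y).edgeSet := by
      intro Y a b g hg e' he'
      obtain ⟨g2, hg2, -⟩ := exists_within g hg
      exact g2.edges_subset_edgeSet (hg2 ▸ he')
    obtain ⟨hq1, hq2, -⟩ := geod_through hw q e q' (hPe ▸ hP) q'.start_mem_support
    obtain ⟨qB, hqBe, hqBs, hqBg, -⟩ := geod_within (w' := halve ω q.edges) (c := 1) hBX hw
      (hpos _ _) one_pos (fun e' he' => by rw [hwB e' he', one_mul]) q hq1 hqB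
      (fun e' he' => by rw [hwB e' (hedge _ q hqB e' he'), one_mul])
    obtain ⟨qA, hqAe, hqAs, hqAg, -⟩ := geod_within (w' := halve ω q'.edges) (c := 1) hAX hw
      (hpos _ _) one_pos (fun e' he' => by rw [hwA e' he', one_mul]) q' hq2 hqA
      (fun e' he' => by rw [hwA e' (hedge _ q' hqA e' he'), one_mul])
    have hcardA : A.card < m := by
      rw [← hXm]
      exact Finset.card_lt_card ⟨hAX, fun h => hnA x0 hxB (h hx0)⟩
    have hcardB : (X \ A).card < m := by
      rw [← hXm]
      exact Finset.card_lt_card ⟨hBX, fun h => hnA t (h htX) htA⟩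
    have hreachB : ∀ v ∈ X \ A, (within G (X \ A)).Reachable x0 v := by
      intro v hv
      obtain ⟨g, -, hgs⟩ := hgB v hv
      obtain ⟨g2, -⟩ := exists_within g hgs
      exact g2.reachable
    -- inside the petal, `v` is reached from `z` along the marked path and then along a geodesic
    have hroute : ∀ v ∈ A, ∃ p ∈ q'.support, (within G A).Reachable z v ∧
        spDist (within G A) (halve ω q'.edges) z v ≤
          spDist (within G X) w z p + spDist (within G X) w p v ∧
        2 * (spDist (within G X) w x0 p + spDist (within G X) w p v - spDist (within G X) w x0 v)
          ≤ r - spDist (within G X) w p t := by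
      intro v hv
      obtain ⟨p, hp, g, hg, hgs, hineq⟩ := hgA v hv
      obtain ⟨-, -, -, -, -, q1, hq1l, -, hq1s⟩ := geod_through hw q e q' (hPe ▸ hP) hp
      have hsup : ∀ a ∈ (q1.append g).support, a ∈ A := by
        intro a ha
        rcases (SimpleGraph.Walk.mem_support_append_iff _ _).1 ha with h | h
        · exact hqA a (hq1s a h)
        · exact hgs a h
      obtain ⟨g2, hg2, -⟩ := exists_within _ hsup
      refine ⟨p, hp, g2.reachable, ?_, hineq⟩
      rw [← hq1l, ← hg, ← wlen_append, ← wlen_congr hg2]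
      exact (spDist_le (hpos _ _) g2).trans
        (wlen_mono g2 fun e' he' => (hwA e' (g2.edges_subset_edgeSet he')).le)
    obtain ⟨TA, hTA⟩ := ih _ hcardA A rfl (by omega) z hzA
      (fun v hv => (hroute v hv).elim fun p hp => hp.2.1) t qA (by rw [hqAe]; exact hqAg)
    obtain ⟨TB, hTB⟩ := ih _ hcardB (X \ A) rfl (by omega) x0 hxB hreachB y qB
      (by rw [hqBe]; exact hqBg)
    rw [hqAe] at hTA
    rw [hqBe] at hTB
    refine isGoodTree_glue hω hN (hXm ▸ hmn) hAX hR (fun v hv => ?_) hcheap hX hyB hzA e.1 hTA hTB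
      ?_ ?_ ?_
    · rw [← hwdef]
      exact hf v hv
    · intro e' he'
      rcases (hmem e').1 he' with h | h | h
      · exact Or.inr (Or.inl h)
      · exact Or.inr (Or.inr h)
      · exact Or.inl h
    · intro v hv
      obtain ⟨g, hg, hgs⟩ := hgB v hv
      obtain ⟨g2, hg2, -⟩ := exists_within g hgs
      rw [← hwdef, ← hg, ← wlen_congr hg2]
      exact (spDist_le (hpos _ _) g2).trans
        (wlen_mono g2 fun e' he' => (hwB e' (g2.edges_subset_edgeSet he')).le)
    · intro T _ _ hmk
      -- the marked path is kept, and its `ω`-length is twice its length in the halved metric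
      have hke : ∀ e' ∈ (q.append (SimpleGraph.Walk.cons e SimpleGraph.Walk.nil)).edges,
          e' ∈ P.edges := by
        intro e' he'
        rw [hmem]
        simp only [SimpleGraph.Walk.edges_append, SimpleGraph.Walk.edges_cons,
          SimpleGraph.Walk.edges_nil, List.mem_append, List.mem_singleton] at he'
        tauto
      refine ⟨(q.append (SimpleGraph.Walk.cons e SimpleGraph.Walk.nil)).transfer T
        (fun e' he' => hmk e' (hke e' he')), fun v hv => ?_⟩
      rw [wlen_transfer, ← hwdef]
      have h1 : wlen ω (q.append (SimpleGraph.Walk.cons e SimpleGraph.Walk.nil)) ≤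
          2 * wlen w (q.append (SimpleGraph.Walk.cons e SimpleGraph.Walk.nil)) := by
        refine wlen_le_mul _ fun e' he' => ?_
        rw [hwdef, halve_of_mem (hke e' he')]
        linarith
      obtain ⟨p, hp, -, h2, h3⟩ := hroute v hv
      obtain ⟨h4, -, h5, h6, -⟩ := geod_through hw q e q' (hPe ▸ hP) hp
      have h7 := hfar z hzA
      have h8 := spDist_nonneg hw p t
      rw [wlen_append (w := w) q, wlen_cons, wlen_nil, h4] at h1
      linarith
  · push Not at hcase
    obtain ⟨Q, hQ⟩ := exists_geod hw (hX f hfX)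
    obtain ⟨A, r, y, z, q, e, q', hAX, hr0, hrR, hQe, hqB, hqA, hcheap, hry, hfar, hgB, hgA⟩ :=
      exists_petal_cut (ω := ω) hx0 hX hw hwω Q hQ hR (by linarith) hN
    have hBX : X \ A ⊆ X := Finset.sdiff_subset
    have hxB := hqB x0 q.start_mem_support
    have hyB := hqB y q.end_mem_support
    have hzA := hqA z q'.start_mem_support
    have hfA := hqA f q'.end_mem_support
    have hnA : ∀ a ∈ X \ A, a ∉ A := fun a ha => (Finset.mem_sdiff.1 ha).2
    -- the petal is too far from the root to meet the marked path
    have hPB : ∀ a ∈ P.support, a ∈ X \ A := by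
      intro a ha
      refine Finset.mem_sdiff.2 ⟨within_support P hx0 ha, fun haA => ?_⟩
      have h1 := hfar a haA
      have h2 := geod_support hw P hP ha
      have h3 := spDist_nonneg hw a t
      linarith
    have hPn : ∀ e' ∈ P.edges, ∀ a ∈ e', a ∉ A := by
      intro e' he' a ha
      exact hnA a (hPB a (P.mem_support_of_mem_edges he' ha))
    have hwA : ∀ e' ∈ (within G A).edgeSet, w e' = ω e' := by
      intro e' he'
      rw [hwdef]
      refine halve_of_notMem fun h => ?_
      induction e' with
      | _ a b => exact hPn _ h a (Sym2.mem_mk_left a b) he'.2.1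
    have hwyz : w s(y, z) = ω s(y, z) := by
      rw [hwdef]
      exact halve_of_notMem fun h => hPn _ h z (Sym2.mem_mk_right y z) hzA
    have hpos : ∀ (Y : Finset V) (L : List (Sym2 V)), ∀ e' ∈ (within G Y).edgeSet,
        0 < halve ω L e' := fun Y L e' he' => halve_pos (pos_within hω e' he')
    have hedge : ∀ (Y : Finset V) {a b : V} (g : (within G X).Walk a b),
        (∀ c ∈ g.support, c ∈ Y) → ∀ e' ∈ g.edges, e' ∈ (within G Y).edgeSet := by
      intro Y a b g hg e' he'
      obtain ⟨g2, hg2, -⟩ := exists_within g hg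
      exact g2.edges_subset_edgeSet (hg2 ▸ he')
    obtain ⟨hq1, hq2, -⟩ := geod_through hw q e q' (hQe ▸ hQ) q'.start_mem_support
    obtain ⟨PB, hPBe, hPBs, hPBg, -⟩ := geod_within (w' := halve ω P.edges) (c := 1) hBX hw
      (hpos _ _) one_pos (fun e' he' => by rw [hwdef, one_mul]) P hP hPB
      (fun e' he' => by rw [hwdef, one_mul])
    obtain ⟨qA, hqAe, hqAs, hqAg, -⟩ := geod_within (w' := halve ω q'.edges) (c := 1 / 2) hAX hw
      (hpos _ _) one_half_pos
      (fun e' he' => by rw [hwA e' he']; exact half_le_halve (pos_within hω e' he')) q' hq2 hqA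
      (fun e' he' => by rw [hwA e' (hedge _ q' hqA e' he'), halve_of_mem he']; ring)
    have hcardA : A.card < m := by
      rw [← hXm]
      exact Finset.card_lt_card ⟨hAX, fun h => hnA x0 hxB (h hx0)⟩
    have hcardB : (X \ A).card < m := by
      rw [← hXm]
      exact Finset.card_lt_card ⟨hBX, fun h => hnA f (h hfX) hfA⟩
    have hreachB : ∀ v ∈ X \ A, (within G (X \ A)).Reachable x0 v := by
      intro v hv
      obtain ⟨g, -, hgs⟩ := hgB v hv
      obtain ⟨g2, -⟩ := exists_within g hgs
      exact g2.reachable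
    have hnearB : ∀ v ∈ X \ A, spDist (within G (X \ A)) (halve ω P.edges) x0 v ≤
        spDist (within G X) w x0 v := by
      intro v hv
      obtain ⟨g, hg, hgs⟩ := hgB v hv
      obtain ⟨g2, hg2, -⟩ := exists_within g hgs
      rw [← hg, ← wlen_congr hg2, hwdef]
      exact spDist_le (hpos _ _) g2
    -- inside the petal, the part of the route along the new marked path counts only half
    have hroute : ∀ v ∈ A, ∃ p ∈ q'.support, (within G A).Reachable z v ∧
        spDist (within G A) (halve ω q'.edges) z v ≤
          1 / 2 * spDist (within G X) w z p + spDist (within G X) w p v ∧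
        2 * (spDist (within G X) w x0 p + spDist (within G X) w p v - spDist (within G X) w x0 v)
          ≤ r - spDist (within G X) w p f := by
      intro v hv
      obtain ⟨p, hp, g, hg, hgs, hineq⟩ := hgA v hv
      obtain ⟨-, -, -, -, -, q1, hq1l, hq1e, hq1s⟩ := geod_through hw q e q' (hQe ▸ hQ) hp
      obtain ⟨g1, hg1, -⟩ := exists_within q1 fun a ha => hqA a (hq1s a ha)
      obtain ⟨g2, hg2, -⟩ := exists_within g hgs
      refine ⟨p, hp, (g1.append g2).reachable, ?_, hineq⟩
      have h1 := spDist_le (hpos A q'.edges) (g1.append g2)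
      rw [wlen_append] at h1
      have h2 : wlen (halve ω q'.edges) g1 ≤ 1 / 2 * wlen w g1 := by
        refine wlen_le_mul g1 fun e' he' => ?_
        rw [hwA e' (g1.edges_subset_edgeSet he'), halve_of_mem (hq1e e' (hg1 ▸ he'))]
        linarith
      have h3 : wlen (halve ω q'.edges) g2 ≤ wlen w g2 := by
        refine wlen_mono g2 fun e' he' => ?_
        have h4 := g2.edges_subset_edgeSet he'
        rw [hwA e' h4]
        exact halve_le (pos_within hω e' h4)
      rw [wlen_congr (w := w) hg1, hq1l] at h2
      rw [wlen_congr (w := w) hg2, hg] at h3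
      linarith
    obtain ⟨TA, hTA⟩ := ih _ hcardA A rfl (by omega) z hzA
      (fun v hv => (hroute v hv).elim fun p hp => hp.2.1) f qA (by rw [hqAe]; exact hqAg)
    obtain ⟨TB, hTB⟩ := ih _ hcardB (X \ A) rfl (by omega) x0 hxB hreachB t PB
      (by rw [hPBe]; exact hPBg)
    rw [hqAe] at hTA
    rw [hPBe] at hTB
    refine isGoodTree_glue hω hN (hXm ▸ hmn) hAX hR (fun v hv => ?_) hcheap hX hyB hzA e.1 hTA hTB
      (fun e' he' => Or.inr (Or.inl he')) (fun v hv => ?_) ?_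
    · rw [← hwdef]
      exact hf v hv
    · rw [← hwdef] at hnearB ⊢
      exact hnearB v hv
    · intro T hTBT hyz _
      obtain ⟨g1, hg1⟩ := hTB.near y hyB
      obtain ⟨g2, hg2, -⟩ := exists_mapLe hTBT g1
      refine ⟨g2.append (SimpleGraph.Walk.cons hyz SimpleGraph.Walk.nil), fun v hv => ?_⟩
      rw [wlen_append, wlen_cons, wlen_nil, wlen_congr hg2, ← hwdef, ← hwyz]
      -- the saving on the marked path pays for the detour of length less than `r`
      obtain ⟨p, hp, -, h2, h3⟩ := hroute v hv
      obtain ⟨-, -, h5, h6, h7, -⟩ := geod_through hw q e q' (hQe ▸ hQ) hp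
      have h8 := hnearB y hyB
      have h9 := spDist_nonneg hw p f
      have h10 := hw s(y, z) e
      linarith

end Main

/-! ### Summation over dyadic scales -/

section Sum

lemma within_univ {V : Type} [Fintype V] (G : SimpleGraph V) : within G Finset.univ = G := by
  ext u v
  simp [within]

/-- Dyadic upper bound for a square. -/
lemma sq_le_dyadic (J : ℕ) (x : ℝ) (hx0 : 0 ≤ x) (hx : x < 2 ^ J) :
    x ^ 2 ≤ 1 + ∑ j ∈ Finset.range J, if (2 : ℝ) ^ j ≤ x then (4 : ℝ) ^ (j + 1) else 0 := by
  induction J with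
  | zero =>
    rw [pow_zero] at hx
    simp only [Finset.range_zero, Finset.sum_empty, add_zero]
    nlinarith
  | succ J ih =>
    rw [Finset.sum_range_succ]
    by_cases h : (2 : ℝ) ^ J ≤ x
    · rw [if_pos h]
      have h1 : 0 ≤ ∑ j ∈ Finset.range J, if (2 : ℝ) ^ j ≤ x then (4 : ℝ) ^ (j + 1) else 0 :=
        Finset.sum_nonneg fun j _ => by split_ifs <;> positivity
      have h2 : x ^ 2 ≤ (2 ^ (J + 1)) ^ 2 := by gcongr
      have h3 : ((2 : ℝ) ^ (J + 1)) ^ 2 = 4 ^ (J + 1) := by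
        rw [← pow_mul, mul_comm, pow_mul]
        norm_num
      linarith
    · rw [if_neg h, add_zero]
      exact ih (not_le.1 h)

open Classical in
/-- Summing the counts over the scales `256 * 2 ^ j`, `j < J`. No stretch exceeds `256 * 2 ^ J`,
because the bound on the number of such pairs is less than `1`. -/
lemma sum_sq_le {V : Type} [Fintype V] {d D : V → V → ℝ} {J : ℕ}
    (hV : 0 < Fintype.card V) (hJ : 49 * Fintype.card V ≤ 2 ^ J)
    (hd0 : ∀ u, d u u = 0) (hd : ∀ u v, u ≠ v → 0 < d u v) (hD : ∀ u v, 0 ≤ D u v)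
    (hfew : FewBad Finset.univ d D (Fintype.card V) (2 ^ J)) :
    ∑ p : V × V, (D p.1 p.2 / d p.1 p.2) ^ 2 ≤
      256 ^ 2 * ((Fintype.card V : ℝ) ^ 2 * (1 + 9216 * J)) := by
  obtain ⟨n, hn⟩ : ∃ n : ℝ, n = Fintype.card V := ⟨_, rfl⟩
  have hn0 : 0 < n := by rw [hn]; exact_mod_cast hV
  obtain ⟨x, hx⟩ : ∃ x : V × V → ℝ, ∀ p, x p = D p.1 p.2 / d p.1 p.2 / 256 := ⟨_, fun _ => rfl⟩
  have hx0 : ∀ p, 0 ≤ x p := by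
    intro p
    rw [hx]
    by_cases h : p.1 = p.2
    · rw [h, hd0]
      simp
    · have := hd _ _ h
      have := hD p.1 p.2
      positivity
  have hcount : ∀ j ≤ J, ((Finset.univ.filter fun p : V × V => (2 : ℝ) ^ j ≤ x p).card : ℝ) ≤
      2304 * (1 / 2 ^ j) ^ 2 * n ^ 2 := by
    intro j hj
    have h1 := hfew (1 / 2 ^ j) (by
      push_cast
      rw [one_div_mul_eq_div, one_le_div (by positivity)]
      exact pow_le_pow_right₀ one_le_two hj) Finset.univ (Finset.subset_univ _)
    rw [Finset.card_univ, ← hn] at h1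
    have h2 : (Finset.univ.filter fun p : V × V => (2 : ℝ) ^ j ≤ x p) ⊆
        badPairs Finset.univ Finset.univ d D (1 / 2 ^ j) := by
      rintro ⟨u, v⟩ hp
      have h3 := (Finset.mem_filter.1 hp).2
      have h2j : (0 : ℝ) < 2 ^ j := by positivity
      rw [hx] at h3
      simp only at h3
      have hne : u ≠ v := by
        rintro rfl
        rw [hd0] at h3
        simp at h3
        linarith
      refine Finset.mem_filter.2 ⟨Finset.mem_product.2 ⟨Finset.mem_univ _, Finset.mem_univ _⟩,
        hne, ?_⟩
      rw [div_div, le_div_iff₀ (by have := hd u v hne; positivity)] at h3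
      rw [one_div_mul_eq_div, le_div_iff₀ h2j]
      simp only
      linarith
    have h3 : ((Finset.univ.filter fun p : V × V => (2 : ℝ) ^ j ≤ x p).card : ℝ) ≤
      (badPairs Finset.univ Finset.univ d D (1 / 2 ^ j)).card := by
      exact_mod_cast Finset.card_le_card h2
    linarith
  have hxJ : ∀ p, x p < 2 ^ J := by
    intro p
    by_contra hcon
    have h1 := hcount J le_rfl
    have h2 : (1 : ℝ) ≤ (Finset.univ.filter fun p : V × V => (2 : ℝ) ^ J ≤ x p).card := by
      have : 0 < (Finset.univ.filter fun p : V × V => (2 : ℝ) ^ J ≤ x p).card :=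
        Finset.card_pos.2 ⟨p, Finset.mem_filter.2 ⟨Finset.mem_univ _, not_lt.1 hcon⟩⟩
      exact_mod_cast this
    have h3 : 49 * n ≤ 2 ^ J := by rw [hn]; exact_mod_cast hJ
    -- `2304 = 48 ^ 2 < 49 ^ 2`
    have h4 : 2304 * (1 / 2 ^ J) ^ 2 * n ^ 2 = (48 * n / 2 ^ J) ^ 2 := by ring
    have h5 : 48 * n / 2 ^ J < 1 := by
      rw [div_lt_one (by positivity)]
      linarith
    have h6 : 0 ≤ 48 * n / 2 ^ J := by positivity
    rw [h4] at h1
    nlinarith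
  have hterm : ∀ p : V × V, (D p.1 p.2 / d p.1 p.2) ^ 2 ≤ 256 ^ 2 *
      (1 + ∑ j ∈ Finset.range J, if (2 : ℝ) ^ j ≤ x p then (4 : ℝ) ^ (j + 1) else 0) := by
    intro p
    have h1 := sq_le_dyadic J (x p) (hx0 p) (hxJ p)
    have h2 : (D p.1 p.2 / d p.1 p.2) ^ 2 = 256 ^ 2 * x p ^ 2 := by rw [hx]; ring
    rw [h2]
    exact mul_le_mul_of_nonneg_left h1 (by norm_num)
  refine (Finset.sum_le_sum fun p _ => hterm p).trans ?_
  rw [← Finset.mul_sum, Finset.sum_add_distrib, Finset.sum_comm, ← hn]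
  refine mul_le_mul_of_nonneg_left ?_ (by norm_num)
  have h1 : ∑ _p : V × V, (1 : ℝ) = n ^ 2 := by
    rw [Finset.sum_const, Finset.card_univ, Fintype.card_prod, nsmul_eq_mul, Nat.cast_mul, hn]
    ring
  have h2 : ∀ j ∈ Finset.range J,
      (∑ p : V × V, if (2 : ℝ) ^ j ≤ x p then (4 : ℝ) ^ (j + 1) else 0) ≤ 9216 * n ^ 2 := by
    intro j hj
    rw [← Finset.sum_filter, Finset.sum_const, nsmul_eq_mul]
    have h3 := hcount j (Finset.mem_range.1 hj).le
    have h4 : ((1 : ℝ) / 2 ^ j) ^ 2 * 4 ^ (j + 1) = 4 := by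
      rw [div_pow, one_pow, ← pow_mul, mul_comm j 2, pow_mul,
        show (2 : ℝ) ^ 2 = 4 by norm_num, pow_succ]
      field_simp
    calc _ ≤ 2304 * (1 / 2 ^ j) ^ 2 * n ^ 2 * 4 ^ (j + 1) := by gcongr
      _ = 2304 * n ^ 2 * ((1 / 2 ^ j) ^ 2 * 4 ^ (j + 1)) := by ring
      _ = 9216 * n ^ 2 := by rw [h4]; ring
  have h3 := Finset.sum_le_sum h2
  rw [Finset.sum_const, Finset.card_range, nsmul_eq_mul] at h3
  rw [h1]
  linarith

/-- `J = O(1 + log n)` dyadic scales suffice. -/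
lemma exists_scales (n : ℕ) (hn : 2 ≤ n) :
    ∃ J : ℕ, 49 * n ≤ 2 ^ J ∧ (J : ℝ) ≤ 194 * (1 + Real.log n) := by
  refine ⟨Nat.clog 2 (49 * n), Nat.le_pow_clog one_lt_two _, ?_⟩
  have h1 : 2 ^ (Nat.clog 2 (49 * n)).pred < 49 * n := Nat.pow_pred_clog_lt_self one_lt_two (by omega)
  have h2 : 0 < Nat.clog 2 (49 * n) := Nat.clog_pos one_lt_two (by omega)
  obtain ⟨J, hJ⟩ := Nat.exists_eq_succ_of_ne_zero h2.ne'
  rw [hJ] at h1 ⊢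
  rw [Nat.pred_succ] at h1
  have hn0 : (0 : ℝ) < n := by
    have : 0 < n := by omega
    exact_mod_cast this
  have h3 : (2 : ℝ) ^ (J + 1) ≤ 98 * n := by
    have : 2 ^ (J + 1) ≤ 98 * n := by rw [pow_succ]; omega
    exact_mod_cast this
  have h4 := Real.log_le_log (by positivity) h3
  rw [Real.log_pow, Real.log_mul (by norm_num) hn0.ne'] at h4
  have h5 : Real.log 98 ≤ 97 := by
    have := Real.log_le_sub_one_of_pos (show (0 : ℝ) < 98 by norm_num)
    linarith
  have h6 : (1 / 2 : ℝ) ≤ Real.log 2 := by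
    have := Real.log_two_gt_d9
    linarith
  have h7 : 0 ≤ Real.log n := Real.log_natCast_nonneg n
  have h8 := mul_le_mul_of_nonneg_left h6 (Nat.cast_nonneg (α := ℝ) (J + 1))
  rw [Nat.succ_eq_add_one]
  linarith

end Sum

/-- There is a universal constant `C` such that every finite
connected weighted graph on `n ≥ 2` vertices (positive edge weights) contains a
spanning tree `T` with `ℓ₂`-distortion at most `C·√(1 + log n)`.  The sum runs
over all ordered pairs, normalized by `n(n−1)`; diagonal terms contribute
`(0/0)² = 0`, so this equals
`((1/N)·Σ_{unordered pairs} (d_T(u,v)/d_G(u,v))²)^{1/2}` with `N = n(n−1)/2`. -/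
theorem spanning_tree_l2_distortion :
    ∃ C : ℝ, ∀ (V : Type) [Fintype V] (G : SimpleGraph V),
      G.Connected → 2 ≤ Fintype.card V →
      ∀ ω : Sym2 V → ℝ, (∀ e ∈ G.edgeSet, 0 < ω e) →
      ∃ T : SimpleGraph V, T ≤ G ∧ T.IsTree ∧
        Real.sqrt ((∑ p : V × V, (spDist T ω p.1 p.2 / spDist G ω p.1 p.2) ^ 2) /
            ((Fintype.card V : ℝ) * ((Fintype.card V : ℝ) - 1)))
          ≤ C * Real.sqrt (1 + Real.log (Fintype.card V)) := by
  obtain ⟨K, hK⟩ : ∃ K : ℝ, K = 2 * 256 ^ 2 * (1 + 9216 * 194) := ⟨_, rfl⟩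
  refine ⟨√K, fun V _ G hG hV ω hω => ?_⟩
  obtain ⟨J, hJ, hJlog⟩ := exists_scales _ hV
  obtain ⟨x0⟩ := hG.nonempty
  have hwu := within_univ G
  have hpos : ∀ e ∈ (within G Finset.univ).edgeSet, 0 < halve ω [] e :=
    fun e he => halve_pos (pos_within hω e he)
  obtain ⟨T, hT⟩ := exists_goodTree (n := Fintype.card V) (N := 2 ^ J) hω Nat.one_le_two_pow
    (Fintype.card V) Finset.univ Finset.card_univ le_rfl x0 (Finset.mem_univ _)
    (fun v _ => by rw [hwu]; exact hG x0 v) x0 SimpleGraph.Walk.nil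
    (by rw [wlen_nil]; exact (spDist_self hpos x0).symm)
  have hTG : T ≤ G := by
    have := hT.le
    rwa [hwu] at this
  have hfew := hT.few
  rw [hwu] at hfew
  have hTω : ∀ e ∈ T.edgeSet, 0 < ω e := fun e he => hω e (SimpleGraph.edgeSet_mono hTG he)
  have hconn : T.Connected := by
    refine (SimpleGraph.connected_iff_exists_forall_reachable T).2 ⟨x0, fun v => ?_⟩
    obtain ⟨q, -⟩ := hT.near v (Finset.mem_univ v)
    exact q.reachable
  refine ⟨T, hTG, ?_, ?_⟩
  · rw [SimpleGraph.isTree_iff_connected_and_card]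
    refine ⟨hconn, le_antisymm ?_ hconn.card_vert_le_card_edgeSet_add_one⟩
    have := hT.card
    rwa [Finset.card_univ, ← Nat.card_eq_fintype_card] at this
  · have hsum := sum_sq_le (d := spDist G ω) (D := spDist T ω) (by omega) hJ
      (fun u => spDist_self hω u) (fun u v huv => spDist_pos hω (hG u v) huv)
      (fun u v => spDist_nonneg hTω u v) hfew
    obtain ⟨n, hn⟩ : ∃ n : ℝ, n = Fintype.card V := ⟨_, rfl⟩
    have hn2 : 2 ≤ n := by rw [hn]; exact_mod_cast hV
    rw [← hn] at hsum hJlog ⊢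
    have hlog : 0 ≤ Real.log n := Real.log_nonneg (by linarith)
    rw [← Real.sqrt_mul (by rw [hK]; norm_num)]
    apply Real.sqrt_le_sqrt
    have hprod : 0 < n * (n - 1) := mul_pos (by linarith) (by linarith)
    rw [div_le_iff₀ hprod]
    have h1 : 1 + 9216 * (J : ℝ) ≤ (1 + 9216 * 194) * (1 + Real.log n) := by linarith
    have h2 : n ^ 2 ≤ 2 * (n * (n - 1)) := by nlinarith
    calc _ ≤ 256 ^ 2 * (n ^ 2 * (1 + 9216 * J)) := hsum
      _ ≤ 256 ^ 2 * ((2 * (n * (n - 1))) * ((1 + 9216 * 194) * (1 + Real.log n))) := by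
        gcongr
      _ = K * (1 + Real.log n) * (n * (n - 1)) := by rw [hK]; ring
end
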